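/- Let 0 < r1 ≤ r2 ≤ r3 and let n be an integer with 2 ≤ n ≤ 4. Suppose there exist real numbers v* and v** with 0 < v* ≤ v** such that: for every v ≤ v*, I_{S^1_{r1}×S^1_{r2}×R^n}(v) = I_{S^1_{r1}×R^{n+1}}(v), and for every v ≥ v**, I_{S^1_{r1}×S^1_{r2}×R^n}(v) = f_n(v). Then there exist real numbers ũ* and ũ** with 0 < ũ* ≤ ũ** such that: for every v ≤ ũ*, I_{T^3×R^n}(v) = I_{S^1_{r1}×R^{n+2}}(v), and for every v ≥ ũ**, I_{T^3×R^n}(v) = g_n(v). -/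

import Mathlib

open MeasureTheory Real ENNReal NNReal

noncomputable section

/-- The flat circle of radius `r` (circumference `2πr`), i.e. `ℝ / (2πr)ℤ`
with the quotient (arc-length) metric. -/
abbrev Circ (r : ℝ) : Type := AddCircle (2 * Real.pi * r)

/-- `d`-dimensional Hausdorff (Riemannian) measure of a subset of a metric space. -/
noncomputable def haus (X : Type*) [EMetricSpace X] (d : ℕ) (s : Set X) : ℝ≥0∞ :=
  letI : MeasurableSpace X := borel X
  haveI : BorelSpace X := ⟨rfl⟩
  (MeasureTheory.Measure.hausdorffMeasure (d : ℝ) : Measure X) s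

/-- A closed region is the closure of an open set. -/
def IsClosedRegion {X : Type*} [TopologicalSpace X] (U : Set X) : Prop :=
  ∃ V : Set X, IsOpen V ∧ U = closure V

/-- The isoperimetric profile of an `m`-dimensional space `X`:
the infimum of the `(m-1)`-dimensional boundary measures of closed regions
of `m`-dimensional measure `v`. -/
noncomputable def isoProfile (X : Type*) [EMetricSpace X] (m : ℕ) (v : ℝ≥0∞) : ℝ≥0∞ :=
  ⨅ (U : Set X) (_ : IsClosedRegion U ∧ haus X m U = v), haus X (m - 1) (frontier U)

/-- An isoperimetric region in the `m`-dimensional space `X`. -/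
def IsIsoRegion (X : Type*) [EMetricSpace X] (m : ℕ) (Ω : Set X) : Prop :=
  IsClosedRegion Ω ∧ haus X (m - 1) (frontier Ω) = isoProfile X m (haus X m Ω)

/-- Euclidean `n`-space. -/
abbrev EucSp (n : ℕ) : Type := EuclideanSpace ℝ (Fin n)

/-- The Riemannian product `S¹_r × ℝ^m` (with the `ℓ²` product metric). -/
abbrev S1R (r : ℝ) (m : ℕ) : Type := WithLp 2 (Circ r × EucSp m)

/-- The Riemannian product `S¹_{r1} × S¹_{r2} × ℝ^n = T² × ℝ^n`. -/
abbrev T2R (r1 r2 : ℝ) (n : ℕ) : Type := WithLp 2 (Circ r1 × S1R r2 n)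

/-- first circle coordinate of a point of `T² × ℝ^n` -/
def t2fst {r1 r2 : ℝ} {n : ℕ} (p : T2R r1 r2 n) : Circ r1 :=
  (WithLp.equiv 2 (Circ r1 × S1R r2 n) p).1

/-- second circle coordinate of a point of `T² × ℝ^n` -/
def t2snd {r1 r2 : ℝ} {n : ℕ} (p : T2R r1 r2 n) : Circ r2 :=
  (WithLp.equiv 2 (Circ r2 × EucSp n) ((WithLp.equiv 2 (Circ r1 × S1R r2 n) p).2)).1

/-- Euclidean coordinate of a point of `T² × ℝ^n` -/
def t2euc {r1 r2 : ℝ} {n : ℕ} (p : T2R r1 r2 n) : EucSp n :=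
  (WithLp.equiv 2 (Circ r2 × EucSp n) ((WithLp.equiv 2 (Circ r1 × S1R r2 n) p).2)).2

/-- `ω_n`, the `n`-dimensional volume of the unit round sphere `Sⁿ ⊂ ℝ^{n+1}`. -/
noncomputable def omegaS (n : ℕ) : ℝ :=
  (haus (EucSp (n+1)) n (Metric.sphere (0 : EucSp (n+1)) 1)).toReal

/-- `β_n(r) = n^{(n-1)(n+1)} (2πr ω_{n-1})^{n+1} (1+n)^{-n²} ω_n^{-n}`. -/
noncomputable def betaC (n : ℕ) (r : ℝ) : ℝ :=
  (n : ℝ) ^ ((n-1)*(n+1)) * (2 * Real.pi * r * omegaS (n-1)) ^ (n+1) *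
    ((1 + (n : ℝ)) ^ (n^2))⁻¹ * ((omegaS n) ^ n)⁻¹

/-- The isoperimetric profile of `ℝ^m`: `I_{ℝ^m}(v) = m^{(m-1)/m} ω_{m-1}^{1/m} v^{(m-1)/m}`. -/
noncomputable def eucProfile (m : ℕ) (v : ℝ) : ℝ :=
  (m : ℝ) ^ (((m : ℝ) - 1)/m) * omegaS (m-1) ^ ((1 : ℝ)/m) * v ^ (((m : ℝ) - 1)/m)

/-- The region `S¹_{r1} × S¹_{r2} × B^n_R` in `T² × ℝ^n`. -/
def tball (r1 r2 : ℝ) (n : ℕ) (R : ℝ) : Set (T2R r1 r2 n) :=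
  {p | ‖t2euc p‖ ≤ R}

/-- `f_n(v) = V^{n+1}(∂(S¹_{r1} × S¹_{r2} × B^n_R))`, where `R > 0` is such that
`V^{n+2}(S¹_{r1} × S¹_{r2} × B^n_R) = v`. -/
noncomputable def fA (r1 r2 : ℝ) (n : ℕ) (v : ℝ≥0∞) : ℝ≥0∞ :=
  ⨅ (R : ℝ) (_ : 0 < R ∧ haus (T2R r1 r2 n) (n+2) (tball r1 r2 n R) = v),
    haus (T2R r1 r2 n) (n+1) (frontier (tball r1 r2 n R))

/-- The slice function `F₁(t) = V^{n+1}(Ω ∩ ({t} × S¹_{r2} × ℝ^n))`. -/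
noncomputable def sliceF1 {r1 r2 : ℝ} {n : ℕ} (Ω : Set (T2R r1 r2 n)) (t : Circ r1) : ℝ≥0∞ :=
  haus (T2R r1 r2 n) (n+1) (Ω ∩ {p | t2fst p = t})

/-- The slice function `F₂(s) = V^{n+1}(Ω ∩ (S¹_{r1} × {s} × ℝ^n))`. -/
noncomputable def sliceF2 {r1 r2 : ℝ} {n : ℕ} (Ω : Set (T2R r1 r2 n)) (s : Circ r2) : ℝ≥0∞ :=
  haus (T2R r1 r2 n) (n+1) (Ω ∩ {p | t2snd p = s})

/-- `θ_m`, the minimum (infimum) of the slice function `F₁`. -/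
noncomputable def thetaMin {r1 r2 : ℝ} {n : ℕ} (Ω : Set (T2R r1 r2 n)) : ℝ≥0∞ :=
  ⨅ t : Circ r1, sliceF1 Ω t

/-- `θ_M`, the maximum (supremum) of the slice function `F₁`. -/
noncomputable def thetaMax {r1 r2 : ℝ} {n : ℕ} (Ω : Set (T2R r1 r2 n)) : ℝ≥0∞ :=
  ⨆ t : Circ r1, sliceF1 Ω t

/-- `σ_m`, the minimum (infimum) of the slice function `F₂`. -/
noncomputable def sigmaMin {r1 r2 : ℝ} {n : ℕ} (Ω : Set (T2R r1 r2 n)) : ℝ≥0∞ :=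
  ⨅ s : Circ r2, sliceF2 Ω s

/-- `σ_M`, the maximum (supremum) of the slice function `F₂`. -/
noncomputable def sigmaMax {r1 r2 : ℝ} {n : ℕ} (Ω : Set (T2R r1 r2 n)) : ℝ≥0∞ :=
  ⨆ s : Circ r2, sliceF2 Ω s

/-- The region `S¹_r × B^m_R` in `S¹_r × ℝ^m`. -/
def s1ball (r : ℝ) (m : ℕ) (R : ℝ) : Set (S1R r m) :=
  {p | ‖(WithLp.equiv 2 (Circ r × EucSp m) p).2‖ ≤ R}
/-- The Riemannian product `S¹_{r1} × S¹_{r2} × S¹_{r3} × ℝ^n = T³ × ℝ^n`. -/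
abbrev T3R (r1 r2 r3 : ℝ) (n : ℕ) : Type :=
  WithLp 2 (Circ r1 × WithLp 2 (Circ r2 × S1R r3 n))

/-- third circle coordinate of a point of `T³ × ℝ^n` -/
def t3trd {r1 r2 r3 : ℝ} {n : ℕ} (p : T3R r1 r2 r3 n) : Circ r3 :=
  (WithLp.equiv 2 (Circ r3 × EucSp n)
    ((WithLp.equiv 2 (Circ r2 × S1R r3 n)
      ((WithLp.equiv 2 (Circ r1 × WithLp 2 (Circ r2 × S1R r3 n)) p).2)).2)).1

/-- Euclidean coordinate of a point of `T³ × ℝ^n` -/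
def t3euc {r1 r2 r3 : ℝ} {n : ℕ} (p : T3R r1 r2 r3 n) : EucSp n :=
  (WithLp.equiv 2 (Circ r3 × EucSp n)
    ((WithLp.equiv 2 (Circ r2 × S1R r3 n)
      ((WithLp.equiv 2 (Circ r1 × WithLp 2 (Circ r2 × S1R r3 n)) p).2)).2)).2

/-- The region `T³ × B^n_R` in `T³ × ℝ^n`. -/
def t3ball (r1 r2 r3 : ℝ) (n : ℕ) (R : ℝ) : Set (T3R r1 r2 r3 n) :=
  {p | ‖t3euc p‖ ≤ R}

/-- `g_n(v) = V^{n+2}(∂(T³ × B^n_R))`, where `R > 0` is such that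
`V^{n+3}(T³ × B^n_R) = v`. -/
noncomputable def gA (r1 r2 r3 : ℝ) (n : ℕ) (v : ℝ≥0∞) : ℝ≥0∞ :=
  ⨅ (R : ℝ) (_ : 0 < R ∧ haus (T3R r1 r2 r3 n) (n+3) (t3ball r1 r2 r3 n R) = v),
    haus (T3R r1 r2 r3 n) (n+2) (frontier (t3ball r1 r2 r3 n R))

/-- The slice function `F(t) = V^{n+2}(Ω ∩ (S¹_{r1} × S¹_{r2} × {t} × ℝ^n))`. -/
noncomputable def sliceF3 {r1 r2 r3 : ℝ} {n : ℕ} (Ω : Set (T3R r1 r2 r3 n))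
    (t : Circ r3) : ℝ≥0∞ :=
  haus (T3R r1 r2 r3 n) (n+2) (Ω ∩ {p | t3trd p = t})

/-- `η_m`, the minimum (infimum) of the slice function `F`. -/
noncomputable def etaMin {r1 r2 r3 : ℝ} {n : ℕ} (Ω : Set (T3R r1 r2 r3 n)) : ℝ≥0∞ :=
  ⨅ t : Circ r3, sliceF3 Ω t

/-- `η_M`, the maximum (supremum) of the slice function `F`. -/
noncomputable def etaMax {r1 r2 r3 : ℝ} {n : ℕ} (Ω : Set (T3R r1 r2 r3 n)) : ℝ≥0∞ :=
  ⨆ t : Circ r3, sliceF3 Ω t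

/-!
The lift of a closed region to the universal cover is a periodic set. Mollifying its indicator at a
small scale and cutting off in the line directions produces smooth test functions whose total
variation is at most, in the limit, the measure of the boundary. It therefore suffices to bound
from below the total variation of functions approximating the indicator of a periodic set.

This is done one factor at a time. Slice along the first coordinate: each slice satisfies the
isoperimetric inequality of the remaining factors, and the variation of the slice volume is paired
with a calibration, a function of the slice volume alone. A one-dimensional problem for the slice
volume remains. On a line, the vertical component of the normal to a round ball is a calibration,
which gives the Euclidean inequality. On a circle, damping this calibration near the minimal slice
volume shows that round balls are still optimal when the volume is small; when the volume is large,
changing the slice volume costs more than it gains, hence tubes `torus × ball` are optimal.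

Conversely, the images of round balls and the tubes attain these bounds. A small ball embeds in
`T³ × ℝ^n` and in `S¹ × ℝ^(n+2)` alike, hence the profiles agree at small volumes.
-/

open Matrix (vecCons)

/-- Lebesgue measure on the real line if `ℓ = 0`, on one period `(0, ℓ]` of the circle of length `ℓ`
otherwise. -/
def coordMeasure (ℓ : ℝ) : Measure ℝ :=
  if ℓ = 0 then volume else volume.restrict (Set.Ioc 0 ℓ)

/-- Lebesgue measure on a fundamental cell of the product of circles and lines with periods `L i`.
Throughout, `L i = 0` encodes a line factor. -/
def cellMeasure {d : ℕ} (L : Fin d → ℝ) : Measure (Fin d → ℝ) :=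
  Measure.pi fun i => coordMeasure (L i)

instance (ℓ : ℝ) : SigmaFinite (coordMeasure ℓ) := by
  unfold coordMeasure; split_ifs <;> infer_instance

instance {d : ℕ} (L : Fin d → ℝ) : SigmaFinite (cellMeasure L) := by
  unfold cellMeasure; infer_instance

/-- Euclidean length of the gradient; it is spelled out because `Fin d → ℝ` carries the sup norm. -/
def gradNorm {d : ℕ} (f : (Fin d → ℝ) → ℝ) (x : Fin d → ℝ) : ℝ :=
  √(∑ i, (fderiv ℝ f x (Pi.single i 1)) ^ 2)

/-- The points whose line coordinates are bounded by `ρ`. -/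
def lineBox {d : ℕ} (L : Fin d → ℝ) (ρ : ℝ) : Set (Fin d → ℝ) :=
  {y | ∀ i, L i = 0 → |y i| ≤ ρ}

/-- Test functions on the product with periods `L`: `C¹`, `[0,1]`-valued, periodic in the circle
coordinates and compactly supported in the line coordinates. -/
structure IsTestFunction {d : ℕ} (L : Fin d → ℝ) (f : (Fin d → ℝ) → ℝ) : Prop where
  contDiff : ContDiff ℝ 1 f
  periodic : ∀ i x, f (x + Pi.single i (L i)) = f x
  exists_support_subset : ∃ ρ : ℝ, Function.support f ⊆ lineBox L ρ
  nonneg : ∀ x, 0 ≤ f x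
  le_one : ∀ x, f x ≤ 1

/-- Test functions converging to the indicator of `E` fast enough in `L¹` that almost every slice
of them converges as well. -/
structure IsSmoothApprox {d : ℕ} (L : Fin d → ℝ) (E : Set (Fin d → ℝ))
    (f : ℕ → (Fin d → ℝ) → ℝ) : Prop where
  isTestFunction : ∀ k, IsTestFunction L (f k)
  tsum_ne_top : ∑' k, ∫⁻ x, ‖f k x - E.indicator 1 x‖ₑ ∂cellMeasure L ≠ ∞

/-- The total variation of `f` over a fundamental cell. -/
def totalVariation {d : ℕ} (L : Fin d → ℝ) (f : (Fin d → ℝ) → ℝ) : ℝ≥0∞ :=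
  ∫⁻ x, ENNReal.ofReal (gradNorm f x) ∂cellMeasure L

/-- The perimeter of `E` in a fundamental cell, relaxed from the total variation of smooth functions
in the manner of De Giorgi. -/
def relaxedPerimeter {d : ℕ} (L : Fin d → ℝ) (E : Set (Fin d → ℝ)) : ℝ≥0∞ :=
  ⨅ (f : ℕ → (Fin d → ℝ) → ℝ) (_ : IsSmoothApprox L E f),
    Filter.liminf (fun k => totalVariation L (f k)) Filter.atTop

/-- `p` bounds from below the relaxed perimeter of every set of volume `v` in a fundamental cell. -/
def PerimeterAtLeast {d : ℕ} (L : Fin d → ℝ) (v p : ℝ) : Prop :=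
  ∀ E : Set (Fin d → ℝ), MeasurableSet E → cellMeasure L E = ENNReal.ofReal v →
    ENNReal.ofReal p ≤ relaxedPerimeter L E

/-! ### Slicing along the first coordinate -/

lemma measurePreserving_vecCons {d : ℕ} (ℓ : ℝ) (L : Fin d → ℝ) :
    MeasurePreserving (fun p : ℝ × (Fin d → ℝ) => (vecCons p.1 p.2 : Fin (d + 1) → ℝ))
      ((coordMeasure ℓ).prod (cellMeasure L)) (cellMeasure (vecCons ℓ L)) := by
  have h_equiv : (fun p : ℝ × (Fin d → ℝ) => (vecCons p.1 p.2 : Fin (d + 1) → ℝ)) =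
      (MeasurableEquiv.piFinSuccAbove (fun _ : Fin (d + 1) => ℝ) 0).symm := by
    funext p
    simp [MeasurableEquiv.piFinSuccAbove, Matrix.vecCons, Fin.insertNthEquiv]
  rw [h_equiv]
  exact (measurePreserving_piFinSuccAbove
    (fun i : Fin (d + 1) => coordMeasure ((vecCons ℓ L : Fin (d + 1) → ℝ) i)) 0).symm

lemma measurable_vecCons {d : ℕ} :
    Measurable (fun p : ℝ × (Fin d → ℝ) => (vecCons p.1 p.2 : Fin (d + 1) → ℝ)) :=
  (measurePreserving_vecCons 0 (0 : Fin d → ℝ)).measurable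

lemma lintegral_cellMeasure_vecCons {d : ℕ} (ℓ : ℝ) (L : Fin d → ℝ) {F : (Fin (d + 1) → ℝ) → ℝ≥0∞}
    (hF : Measurable F) :
    ∫⁻ x, F x ∂cellMeasure (vecCons ℓ L) =
      ∫⁻ t, ∫⁻ y, F (vecCons t y) ∂cellMeasure L ∂coordMeasure ℓ := by
  rw [← (measurePreserving_vecCons ℓ L).lintegral_comp hF,
    lintegral_prod (fun p : ℝ × (Fin d → ℝ) => F (vecCons p.1 p.2))
      (hF.comp measurable_vecCons).aemeasurable]

lemma contDiff_vecCons {d : ℕ} {n : WithTop ℕ∞} :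
    ContDiff ℝ n (fun p : ℝ × (Fin d → ℝ) => (vecCons p.1 p.2 : Fin (d + 1) → ℝ)) := by
  refine contDiff_pi.2 (Fin.cases ?_ fun j => ?_)
  · simpa using contDiff_fst
  · simp only [Matrix.cons_val_succ]
    fun_prop

lemma hasDerivAt_vecCons {d : ℕ} (y : Fin d → ℝ) (t : ℝ) :
    HasDerivAt (fun t => (vecCons t y : Fin (d + 1) → ℝ)) (Pi.single 0 1) t := by
  refine hasDerivAt_pi.2 (Fin.cases ?_ fun j => ?_)
  · simpa using hasDerivAt_id' t
  · simpa using hasDerivAt_const t (y j)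

lemma hasFDerivAt_vecCons {d : ℕ} (y : Fin d → ℝ) (t : ℝ) :
    HasFDerivAt (fun y => (vecCons t y : Fin (d + 1) → ℝ))
      (ContinuousLinearMap.pi (vecCons (0 : (Fin d → ℝ) →L[ℝ] ℝ)
        fun j => ContinuousLinearMap.proj (R := ℝ) (φ := fun _ => ℝ) j)) y := by
  refine hasFDerivAt_pi.2 (Fin.cases ?_ fun j => ?_)
  · simpa using hasFDerivAt_const t y
  · simpa using hasFDerivAt_apply (𝕜 := ℝ) j y

lemma vecCons_zero_single {d : ℕ} (i : Fin d) (a : ℝ) :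
    (vecCons 0 (Pi.single i a : Fin d → ℝ) : Fin (d + 1) → ℝ) = Pi.single i.succ a := by
  ext j
  cases j using Fin.cases <;> simp [Pi.single_apply]

section Slice
variable {d : ℕ} {f : (Fin (d + 1) → ℝ) → ℝ}

lemma fderiv_slice (hf : ContDiff ℝ 1 f) (t : ℝ) (y : Fin d → ℝ) (i : Fin d) :
    fderiv ℝ (fun y => f (vecCons t y)) y (Pi.single i 1)
      = fderiv ℝ f (vecCons t y) (Pi.single i.succ 1) := by
  have h := (hf.differentiable one_ne_zero (vecCons t y)).hasFDerivAt.comp y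
    (hasFDerivAt_vecCons y t)
  rw [Function.comp_def] at h
  rw [h.fderiv, ContinuousLinearMap.comp_apply, ← vecCons_zero_single]
  congr 1
  ext j
  cases j using Fin.cases <;> simp

lemma hasDerivAt_slice (hf : ContDiff ℝ 1 f) (t : ℝ) (y : Fin d → ℝ) :
    HasDerivAt (fun t => f (vecCons t y)) (fderiv ℝ f (vecCons t y) (Pi.single 0 1)) t :=
  (hf.differentiable one_ne_zero (vecCons t y)).hasFDerivAt.comp_hasDerivAt t
    (hasDerivAt_vecCons y t)

lemma gradNorm_nonneg (f : (Fin d → ℝ) → ℝ) (x : Fin d → ℝ) : 0 ≤ gradNorm f x :=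
  Real.sqrt_nonneg _

lemma gradNorm_vecCons (hf : ContDiff ℝ 1 f) (t : ℝ) (y : Fin d → ℝ) :
    gradNorm f (vecCons t y) = √((fderiv ℝ f (vecCons t y) (Pi.single 0 1)) ^ 2
      + gradNorm (fun y => f (vecCons t y)) y ^ 2) := by
  unfold gradNorm
  rw [Fin.sum_univ_succ, Real.sq_sqrt (Finset.sum_nonneg fun i _ => sq_nonneg _)]
  simp only [fderiv_slice hf]

lemma continuous_gradNorm {f : (Fin d → ℝ) → ℝ} (hf : ContDiff ℝ 1 f) :
    Continuous (gradNorm f) := by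
  have := hf.continuous_fderiv one_ne_zero
  unfold gradNorm
  fun_prop

lemma IsTestFunction.slice {ℓ : ℝ} {L : Fin d → ℝ} (hf : IsTestFunction (vecCons ℓ L) f) (t : ℝ) :
    IsTestFunction L (fun y => f (vecCons t y)) where
  contDiff := hf.contDiff.comp (contDiff_vecCons.comp (contDiff_const.prodMk contDiff_id))
  periodic i x := by
    rw [← hf.periodic i.succ (vecCons t x), Matrix.cons_val_succ, ← vecCons_zero_single]
    simp
  exists_support_subset := by
    obtain ⟨ρ, hρ⟩ := hf.exists_support_subset
    exact ⟨ρ, fun x hx i hi => by simpa using hρ hx i.succ (by simpa using hi)⟩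
  nonneg x := hf.nonneg _
  le_one x := hf.le_one _

end Slice

lemma ae_cellMeasure_mem_Ioc {d : ℕ} (L : Fin d → ℝ) :
    ∀ᵐ y ∂cellMeasure L, ∀ i, L i ≠ 0 → y i ∈ Set.Ioc 0 (L i) := by
  refine ae_all_iff.2 fun i => ?_
  by_cases h : L i = 0
  · simp [h]
  · have h_mem : ∀ᵐ t ∂coordMeasure (L i), t ∈ Set.Ioc 0 (L i) := by
      simp only [coordMeasure, h, if_false]
      exact ae_restrict_mem measurableSet_Ioc
    have h_eval := Measure.tendsto_eval_ae_ae (μ := fun i => coordMeasure (L i)) (i := i)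
    filter_upwards [h_eval.eventually h_mem] with y hy _ using hy

lemma cellMeasure_lineBox_lt_top {d : ℕ} (L : Fin d → ℝ) (ρ : ℝ) :
    cellMeasure L (lineBox L ρ) < ∞ := by
  have h_pi : lineBox L ρ =
      Set.univ.pi fun i => if L i = 0 then Set.Icc (-ρ) ρ else Set.univ := by
    ext y
    refine (forall_congr' fun i => ?_).trans Set.mem_univ_pi.symm
    split_ifs with h <;> simp [h, abs_le]
  rw [h_pi, cellMeasure, Measure.pi_pi]
  refine ENNReal.prod_lt_top fun i _ => ?_
  by_cases h : L i = 0 <;> simp [h, coordMeasure]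

lemma measurableSet_lineBox {d : ℕ} (L : Fin d → ℝ) (ρ : ℝ) : MeasurableSet (lineBox L ρ) := by
  simp only [lineBox, Set.ofPred_forall]
  exact .iInter fun i => .iInter fun _ => measurableSet_le (by fun_prop) (by fun_prop)

lemma norm_le_of_mem_lineBox {d : ℕ} {L : Fin d → ℝ} {ρ : ℝ} {y : Fin d → ℝ}
    (hy : y ∈ lineBox L ρ) (hcell : ∀ i, L i ≠ 0 → y i ∈ Set.Ioc 0 (L i)) :
    ‖y‖ ≤ ∑ i, |L i| + |ρ| := by
  refine (pi_norm_le_iff_of_nonneg (by positivity)).2 fun i => ?_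
  rw [Real.norm_eq_abs]
  by_cases hi : L i = 0
  · exact ((hy i hi).trans (le_abs_self ρ)).trans (le_add_of_nonneg_left (by positivity))
  · have h_single : |L i| ≤ ∑ i, |L i| :=
      Finset.single_le_sum (f := fun i => |L i|) (fun i _ => abs_nonneg _) (Finset.mem_univ i)
    rw [abs_of_pos (hcell i hi).1]
    linarith [(hcell i hi).2, le_abs_self (L i), abs_nonneg ρ]

/-- The volume of the slice of `f` at height `t`. -/
def sliceVolume {d : ℕ} (L : Fin d → ℝ) (f : (Fin (d + 1) → ℝ) → ℝ) (t : ℝ) : ℝ :=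
  ∫ y, f (vecCons t y) ∂cellMeasure L

namespace IsTestFunction
variable {d : ℕ} {ℓ : ℝ} {L : Fin d → ℝ} {f : (Fin (d + 1) → ℝ) → ℝ}

lemma continuous_fderiv_vecCons (hf : IsTestFunction (vecCons ℓ L) f) :
    Continuous fun p : ℝ × (Fin d → ℝ) => fderiv ℝ f (vecCons p.1 p.2) (Pi.single 0 1) := by
  have := hf.contDiff.continuous_fderiv one_ne_zero
  have := (contDiff_vecCons (d := d) (n := 1)).continuous
  fun_prop

lemma exists_lineBox (hf : IsTestFunction (vecCons ℓ L) f) :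
    ∃ ρ, ∀ y ∉ lineBox L ρ, ∀ t, f (vecCons t y) = 0 := by
  obtain ⟨ρ, hρ⟩ := hf.exists_support_subset
  refine ⟨ρ, fun y hy t => by_contra fun h => hy fun i hi => ?_⟩
  simpa using hρ h i.succ (by simpa using hi)

lemma exists_integrable_bound (hf : IsTestFunction (vecCons ℓ L) f) (T : ℝ) :
    ∃ B : (Fin d → ℝ) → ℝ, Integrable B (cellMeasure L) ∧ ∀ᵐ y ∂cellMeasure L, ∀ t, |t| ≤ T →
      |f (vecCons t y)| ≤ B y ∧ |fderiv ℝ f (vecCons t y) (Pi.single 0 1)| ≤ B y := by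
  obtain ⟨ρ, hρ⟩ := hf.exists_lineBox
  obtain ⟨D, hD⟩ := (isCompact_Icc (a := -T) (b := T)).prod
    (isCompact_closedBall (0 : Fin d → ℝ) (∑ i, |L i| + |ρ|))
    |>.exists_bound_of_continuousOn hf.continuous_fderiv_vecCons.continuousOn
  refine ⟨(lineBox L ρ).indicator fun _ => max D 1, ?_, ?_⟩
  · rw [integrable_indicator_iff (measurableSet_lineBox L ρ)]
    exact integrableOn_const (cellMeasure_lineBox_lt_top L ρ).ne
  filter_upwards [ae_cellMeasure_mem_Ioc L] with y hcell t ht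
  by_cases hy : y ∈ lineBox L ρ
  · simp only [Set.indicator_of_mem hy]
    refine ⟨?_, (hD (t, y) ⟨abs_le.1 ht, ?_⟩).trans (le_max_left _ _)⟩
    · rw [abs_of_nonneg (hf.nonneg _)]
      exact (hf.le_one _).trans (le_max_right _ _)
    · simpa using norm_le_of_mem_lineBox hy hcell
  · have h_zero := hρ y hy
    have h_deriv := (hasDerivAt_slice hf.contDiff t y).deriv
    simp only [h_zero, deriv_const] at h_deriv
    simp [h_zero, ← h_deriv, Set.indicator_of_notMem hy]

lemma integrable_slice (hf : IsTestFunction (vecCons ℓ L) f) (t : ℝ) :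
    Integrable (fun y => f (vecCons t y)) (cellMeasure L) := by
  obtain ⟨B, hB, h_bound⟩ := hf.exists_integrable_bound |t|
  refine hB.mono' (hf.slice t).contDiff.continuous.aestronglyMeasurable ?_
  filter_upwards [h_bound] with y hy using (hy t le_rfl).1

lemma hasDerivAt_sliceVolume (hf : IsTestFunction (vecCons ℓ L) f) (t : ℝ) :
    HasDerivAt (sliceVolume L f)
      (∫ y, fderiv ℝ f (vecCons t y) (Pi.single 0 1) ∂cellMeasure L) t := by
  obtain ⟨B, hB, h_bound⟩ := hf.exists_integrable_bound (|t| + 1)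
  refine (hasDerivAt_integral_of_dominated_loc_of_deriv_le (Metric.ball_mem_nhds t one_pos)
    (.of_forall fun s => (hf.slice s).contDiff.continuous.aestronglyMeasurable)
    (hf.integrable_slice t) ?_ ?_ hB
    (.of_forall fun y s _ => hasDerivAt_slice hf.contDiff s y)).2
  · exact (hf.continuous_fderiv_vecCons.comp (.prodMk_right t)).aestronglyMeasurable
  · filter_upwards [h_bound] with y hy s hs
    refine (hy s ?_).2
    rw [Metric.mem_ball, Real.dist_eq] at hs
    linarith [abs_sub_abs_le_abs_sub s t]

lemma deriv_sliceVolume (hf : IsTestFunction (vecCons ℓ L) f) (t : ℝ) :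
    deriv (sliceVolume L f) t = ∫ y, fderiv ℝ f (vecCons t y) (Pi.single 0 1) ∂cellMeasure L :=
  (hf.hasDerivAt_sliceVolume t).deriv

lemma contDiff_sliceVolume (hf : IsTestFunction (vecCons ℓ L) f) :
    ContDiff ℝ 1 (sliceVolume L f) := by
  refine contDiff_one_iff_deriv.2 ⟨fun t => (hf.hasDerivAt_sliceVolume t).differentiableAt, ?_⟩
  rw [funext hf.deriv_sliceVolume]
  refine continuous_iff_continuousAt.2 fun t => ?_
  obtain ⟨B, hB, h_bound⟩ := hf.exists_integrable_bound (|t| + 1)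
  refine continuousAt_of_dominated (bound := B) (.of_forall fun s => ?_) ?_ hB
    (.of_forall fun y => (hf.continuous_fderiv_vecCons.comp (.prodMk_left y)).continuousAt)
  · exact (hf.continuous_fderiv_vecCons.comp (.prodMk_right s)).aestronglyMeasurable
  · filter_upwards [Metric.ball_mem_nhds t one_pos] with s hs
    rw [Metric.mem_ball, Real.dist_eq] at hs
    filter_upwards [h_bound] with y hy
    exact (hy s (by linarith [abs_sub_abs_le_abs_sub s t])).2

lemma sliceVolume_periodic (hf : IsTestFunction (vecCons ℓ L) f) :
    sliceVolume L f 0 = sliceVolume L f ℓ := by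
  unfold sliceVolume
  congr 1 with y
  rw [← hf.periodic 0 (vecCons 0 y)]
  congr 1 with i
  cases i using Fin.cases <;> simp

lemma sliceVolume_eq_zero (hf : IsTestFunction (vecCons 0 L) f) :
    ∃ ρ : ℝ, ∀ t, ρ < |t| → sliceVolume L f t = 0 := by
  obtain ⟨ρ, hρ⟩ := hf.exists_support_subset
  refine ⟨ρ, fun t ht => ?_⟩
  have h_zero (y : Fin d → ℝ) : f (vecCons t y) = 0 := by
    by_contra h
    have := hρ h 0 (by simp)
    simp only [Matrix.cons_val_zero] at this
    linarith
  simp [sliceVolume, h_zero]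

end IsTestFunction

lemma continuous_intervalIntegral_prod {σ : ℝ → ℝ} (hσ : Continuous σ) :
    Continuous fun p : ℝ × ℝ => ∫ x in p.1..p.2, σ x := by
  have h_int (a b : ℝ) : IntervalIntegrable σ volume a b := hσ.intervalIntegrable a b
  have h_prim := intervalIntegral.continuous_primitive h_int 0
  have h_sub (p : ℝ × ℝ) : ∫ x in p.1..p.2, σ x = (∫ x in 0..p.2, σ x) - ∫ x in 0..p.1, σ x :=
    (intervalIntegral.integral_interval_sub_left (h_int 0 _) (h_int 0 _)).symm
  rw [funext h_sub]
  exact (h_prim.comp continuous_snd).sub (h_prim.comp continuous_fst)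

lemma abs_intervalIntegral_comp_le {u σ : ℝ → ℝ} (hu : ContDiff ℝ 1 u) (hσ : Continuous σ)
    (hσ0 : ∀ x, 0 ≤ σ x) {r s : ℝ} (hrs : r ≤ s) :
    |∫ x in (u r)..(u s), σ x| ≤ ∫ t in r..s, σ (u t) * |deriv u t| := by
  have h_subst : ∫ t in r..s, σ (u t) * deriv u t = ∫ x in (u r)..(u s), σ x :=
    intervalIntegral.integral_comp_mul_deriv
      (fun t _ => (hu.differentiable one_ne_zero t).hasDerivAt)
      (hu.continuous_deriv le_rfl).continuousOn hσ
  rw [← h_subst]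
  refine (intervalIntegral.abs_integral_le_integral_abs hrs).trans_eq ?_
  simp only [abs_mul, abs_of_nonneg (hσ0 _)]

-- A `C¹` function returning to its initial value crosses every intermediate level twice.
lemma two_mul_integral_le_of_eq {u σ : ℝ → ℝ} (hu : ContDiff ℝ 1 u) (hσ : Continuous σ)
    (hσ0 : ∀ x, 0 ≤ σ x) {a b t₀ t₁ : ℝ} (hab : u a = u b) (h₀ : t₀ ∈ Set.Icc a b)
    (h₁ : t₁ ∈ Set.Icc a b) :
    2 * ∫ x in (u t₀)..(u t₁), σ x ≤ ∫ t in a..b, σ (u t) * |deriv u t| := by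
  have h_cont : Continuous fun t => σ (u t) * |deriv u t| := by
    have := hu.continuous_deriv le_rfl
    have := hu.continuous
    fun_prop
  have h_split {r s : ℝ} (h_ar : a ≤ r) (h_rs : r ≤ s) (h_sb : s ≤ b) :
      |∫ x in (u a)..(u r), σ x| + |∫ x in (u r)..(u s), σ x| + |∫ x in (u s)..(u b), σ x| ≤
        ∫ t in a..b, σ (u t) * |deriv u t| := by
    rw [← intervalIntegral.integral_add_adjacent_intervals (h_cont.intervalIntegrable a s)
        (h_cont.intervalIntegrable s b),
      ← intervalIntegral.integral_add_adjacent_intervals (h_cont.intervalIntegrable a r)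
        (h_cont.intervalIntegrable r s)]
    exact add_le_add_three (abs_intervalIntegral_comp_le hu hσ hσ0 h_ar)
      (abs_intervalIntegral_comp_le hu hσ hσ0 h_rs) (abs_intervalIntegral_comp_le hu hσ hσ0 h_sb)
  have h_int (x y : ℝ) : IntervalIntegrable σ volume x y := hσ.intervalIntegrable x y
  have h_loop (x y : ℝ) :
      (∫ s in (u a)..x, σ s) + (∫ s in x..y, σ s) + ∫ s in y..(u b), σ s = 0 := by
    rw [intervalIntegral.integral_add_adjacent_intervals (h_int _ _) (h_int _ _),
      intervalIntegral.integral_add_adjacent_intervals (h_int _ _) (h_int _ _), hab,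
      intervalIntegral.integral_same]
  rcases le_total t₀ t₁ with h | h
  · linarith [h_split h₀.1 h h₁.2, h_loop (u t₀) (u t₁), le_abs_self (∫ x in (u t₀)..(u t₁), σ x),
      neg_abs_le (∫ x in (u a)..(u t₀), σ x), neg_abs_le (∫ x in (u t₁)..(u b), σ x)]
  · rw [intervalIntegral.integral_symm]
    linarith [h_split h₁.1 h h₀.2, h_loop (u t₁) (u t₀), neg_abs_le (∫ x in (u t₁)..(u t₀), σ x),
      le_abs_self (∫ x in (u a)..(u t₁), σ x), le_abs_self (∫ x in (u t₀)..(u b), σ x)]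

/-- A calibration: the last component, as a function of the slice volume, of a vector field of
length at most `1`. It selects how much of the gradient is charged to the change of the slice
volume. -/
structure IsCalibration (σ : ℝ → ℝ) : Prop where
  continuous : Continuous σ
  nonneg : ∀ x, 0 ≤ σ x
  le_one : ∀ x, σ x ≤ 1

lemma isCalibration_one : IsCalibration fun _ => 1 :=
  ⟨continuous_const, fun _ => zero_le_one, fun _ => le_rfl⟩

/-- The total variation of the slice of `f` at height `t`. -/
def slicePerimeter {d : ℕ} (L : Fin d → ℝ) (f : (Fin (d + 1) → ℝ) → ℝ) (t : ℝ) : ℝ≥0∞ :=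
  totalVariation L fun y => f (vecCons t y)

lemma mul_add_mul_le_sqrt {s a g D : ℝ} (h : a ^ 2 + s ^ 2 ≤ 1) :
    a * g + s * D ≤ √(D ^ 2 + g ^ 2) := by
  refine Real.le_sqrt_of_sq_le ?_
  nlinarith [sq_nonneg (a * D - s * g), sq_nonneg D, sq_nonneg g]

lemma restrict_Ioc_le_coordMeasure_zero (a b : ℝ) :
    volume.restrict (Set.Ioc a b) ≤ coordMeasure 0 := by
  simp only [coordMeasure, if_true]
  exact Measure.restrict_le_self

lemma restrict_Ioc_le_coordMeasure {ℓ : ℝ} (hℓ : ℓ ≠ 0) :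
    volume.restrict (Set.Ioc 0 ℓ) ≤ coordMeasure ℓ := by
  simp [coordMeasure, hℓ]

namespace IsTestFunction
variable {d : ℕ} {ℓ : ℝ} {L : Fin d → ℝ} {f : (Fin (d + 1) → ℝ) → ℝ}

lemma measurable_slicePerimeter (hf : IsTestFunction (vecCons ℓ L) f) :
    Measurable (slicePerimeter L f) := by
  have h_meas : Measurable fun p : ℝ × (Fin d → ℝ) =>
      ENNReal.ofReal (gradNorm (fun y => f (vecCons p.1 y)) p.2) := by
    have := hf.contDiff.continuous_fderiv one_ne_zero
    have := (contDiff_vecCons (d := d) (n := 1)).continuous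
    simp only [gradNorm, fderiv_slice hf.contDiff]
    exact (Continuous.measurable (by fun_prop)).ennreal_ofReal
  exact h_meas.lintegral_prod_right'

lemma sqrt_mul_slicePerimeter_add_le (hf : IsTestFunction (vecCons ℓ L) f) (t : ℝ) {s : ℝ}
    (hs0 : 0 ≤ s) (hs1 : s ≤ 1) :
    ENNReal.ofReal √(1 - s ^ 2) * slicePerimeter L f t +
      ENNReal.ofReal (s * |deriv (sliceVolume L f) t|) ≤
    ∫⁻ y, ENNReal.ofReal (gradNorm f (vecCons t y)) ∂cellMeasure L := by
  set D : (Fin d → ℝ) → ℝ := fun y => fderiv ℝ f (vecCons t y) (Pi.single 0 1)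
  have h_meas_deriv : Measurable fun y => ENNReal.ofReal |D y| :=
    (hf.continuous_fderiv_vecCons.comp (.prodMk_right t)).abs.measurable.ennreal_ofReal
  have h_meas_grad : Measurable fun y : Fin d → ℝ =>
      ENNReal.ofReal (gradNorm (fun y => f (vecCons t y)) y) :=
    (continuous_gradNorm (hf.slice t).contDiff).measurable.ennreal_ofReal
  have h_deriv : ENNReal.ofReal (s * |deriv (sliceVolume L f) t|) ≤
      ∫⁻ y, ENNReal.ofReal s * ENNReal.ofReal |D y| ∂cellMeasure L := by
    rw [lintegral_const_mul _ h_meas_deriv, ENNReal.ofReal_mul hs0, hf.deriv_sliceVolume]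
    gcongr
    simpa only [Real.enorm_eq_ofReal_abs] using enorm_integral_le_lintegral_enorm D
  refine (add_le_add le_rfl h_deriv).trans ?_
  rw [slicePerimeter, totalVariation, ← lintegral_const_mul _ h_meas_grad,
    ← lintegral_add_left (h_meas_grad.const_mul _)]
  refine lintegral_mono fun y => ?_
  rw [← ENNReal.ofReal_mul (Real.sqrt_nonneg _), ← ENNReal.ofReal_mul hs0,
    ← ENNReal.ofReal_add (mul_nonneg (Real.sqrt_nonneg _) (gradNorm_nonneg _ _)) (by positivity),
    gradNorm_vecCons hf.contDiff, ← sq_abs (fderiv ℝ f (vecCons t y) (Pi.single 0 1))]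
  refine ENNReal.ofReal_le_ofReal (mul_add_mul_le_sqrt ?_)
  rw [Real.sq_sqrt] <;> nlinarith

lemma exists_interval_sliceVolume_eq (hf : IsTestFunction (vecCons ℓ L) f) {t₀ t₁ : ℝ}
    (h₀ : ℓ ≠ 0 → t₀ ∈ Set.Icc 0 ℓ) (h₁ : ℓ ≠ 0 → t₁ ∈ Set.Icc 0 ℓ) :
    ∃ a b, volume.restrict (Set.Ioc a b) ≤ coordMeasure ℓ ∧
      sliceVolume L f a = sliceVolume L f b ∧ t₀ ∈ Set.Icc a b ∧ t₁ ∈ Set.Icc a b := by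
  rcases ne_or_eq ℓ 0 with hℓ | rfl
  · exact ⟨0, ℓ, restrict_Ioc_le_coordMeasure hℓ, hf.sliceVolume_periodic, h₀ hℓ, h₁ hℓ⟩
  obtain ⟨ρ, hρ⟩ := hf.sliceVolume_eq_zero
  set T := |ρ| + |t₀| + |t₁| + 1
  have hT : ρ < |T| := by
    linarith [le_abs_self T, le_abs_self ρ, abs_nonneg t₀, abs_nonneg t₁]
  refine ⟨-T, T, restrict_Ioc_le_coordMeasure_zero _ _, ?_, abs_le.1 ?_, abs_le.1 ?_⟩
  · rw [hρ _ hT, hρ _ ((abs_neg T).symm ▸ hT)]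
  all_goals linarith [abs_nonneg ρ, abs_nonneg t₀, abs_nonneg t₁]

lemma lintegral_slicePerimeter_add_le (hf : IsTestFunction (vecCons ℓ L) f) {σ : ℝ → ℝ}
    (hσ : IsCalibration σ) {t₀ t₁ : ℝ} (h₀ : ℓ ≠ 0 → t₀ ∈ Set.Icc 0 ℓ)
    (h₁ : ℓ ≠ 0 → t₁ ∈ Set.Icc 0 ℓ) :
    (∫⁻ t, ENNReal.ofReal √(1 - σ (sliceVolume L f t) ^ 2) * slicePerimeter L f t ∂coordMeasure ℓ) +
      ENNReal.ofReal (2 * ∫ x in (sliceVolume L f t₀)..(sliceVolume L f t₁), σ x) ≤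
    totalVariation (vecCons ℓ L) f := by
  obtain ⟨a, b, h_restrict, hab, h₀, h₁⟩ := hf.exists_interval_sliceVolume_eq h₀ h₁
  have h_cont : Continuous fun t => σ (sliceVolume L f t) * |deriv (sliceVolume L f) t| :=
    (hσ.continuous.comp hf.contDiff_sliceVolume.continuous).mul
      (hf.contDiff_sliceVolume.continuous_deriv le_rfl).abs
  have h_osc : ENNReal.ofReal (2 * ∫ x in (sliceVolume L f t₀)..(sliceVolume L f t₁), σ x) ≤
      ∫⁻ t, ENNReal.ofReal (σ (sliceVolume L f t) * |deriv (sliceVolume L f) t|)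
        ∂coordMeasure ℓ := by
    refine (ENNReal.ofReal_le_ofReal (two_mul_integral_le_of_eq hf.contDiff_sliceVolume
      hσ.continuous hσ.nonneg hab h₀ h₁)).trans ?_
    rw [intervalIntegral.integral_of_le (h₀.1.trans h₀.2), ofReal_integral_eq_lintegral_ofReal
      (h_cont.intervalIntegrable a b).1
      (.of_forall fun t => mul_nonneg (hσ.nonneg _) (abs_nonneg _))]
    exact lintegral_mono' h_restrict le_rfl
  refine (add_le_add le_rfl h_osc).trans ?_
  rw [totalVariation,
    lintegral_cellMeasure_vecCons _ _ (continuous_gradNorm hf.contDiff).measurable.ennreal_ofReal,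
    ← lintegral_add_right _ h_cont.measurable.ennreal_ofReal]
  exact lintegral_mono fun t =>
    hf.sqrt_mul_slicePerimeter_add_le t (hσ.nonneg _) (hσ.le_one _)

end IsTestFunction

/-! ### Passing to the limit in the slices -/

lemma PerimeterAtLeast.le_liminf {d : ℕ} {L : Fin d → ℝ} {v p : ℝ} (hp : PerimeterAtLeast L v p)
    {E : Set (Fin d → ℝ)} (hE : MeasurableSet E) (hv : cellMeasure L E = ENNReal.ofReal v)
    {f : ℕ → (Fin d → ℝ) → ℝ} (hf : IsSmoothApprox L E f) :
    ENNReal.ofReal p ≤ Filter.liminf (fun k => totalVariation L (f k)) Filter.atTop :=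
  (hp E hE hv).trans (iInf₂_le f hf)

lemma perimeterAtLeast_of_nonpos {d : ℕ} (L : Fin d → ℝ) (v : ℝ) {p : ℝ} (hp : p ≤ 0) :
    PerimeterAtLeast L v p := fun E _ _ => by
  rw [ENNReal.ofReal_of_nonpos hp]
  exact zero_le

lemma liminf_add_le_liminf_add {u w : ℕ → ℝ≥0∞} {b : ℝ≥0∞} (hb : b ≠ ∞)
    (hw : Filter.Tendsto w Filter.atTop (nhds b)) :
    Filter.liminf u Filter.atTop + b ≤ Filter.liminf (fun k => u k + w k) Filter.atTop := by
  have h_sub : Filter.Tendsto (fun k => b - w k) Filter.atTop (nhds 0) := by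
    simpa using ENNReal.Tendsto.sub tendsto_const_nhds hw (Or.inl hb)
  calc Filter.liminf u Filter.atTop + b
      = Filter.liminf (fun k => u k + b) Filter.atTop :=
        (liminf_add_const _ _ _ (by isBoundedDefault) (by isBoundedDefault)).symm
    _ ≤ Filter.liminf ((fun k => u k + w k) + fun k => b - w k) Filter.atTop := by
        refine Filter.liminf_le_liminf (.of_forall fun k => ?_)
        rw [Pi.add_apply, add_assoc]
        gcongr
        exact le_add_tsub
    _ = Filter.liminf (fun k => u k + w k) Filter.atTop :=
        ENNReal.liminf_add_of_right_tendsto_zero h_sub _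

/-- The heights at which the slices of `f k` approximate the slice of `E`. -/
structure IsGoodHeight {d : ℕ} (ℓ : ℝ) (L : Fin d → ℝ) (E : Set (Fin (d + 1) → ℝ))
    (f : ℕ → (Fin (d + 1) → ℝ) → ℝ) (t : ℝ) : Prop where
  isSmoothApprox : IsSmoothApprox L (vecCons t ⁻¹' E) fun k y => f k (vecCons t y)
  measure_ne_top : cellMeasure L (vecCons t ⁻¹' E) ≠ ∞
  mem_Icc : ℓ ≠ 0 → t ∈ Set.Icc 0 ℓ

/-- The numbers approached by volumes of slices of `f k` as `k → ∞`, at heights that may depend on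
`k`. -/
def limitVolumes {d : ℕ} (ℓ : ℝ) (L : Fin d → ℝ) (f : ℕ → (Fin (d + 1) → ℝ) → ℝ) : Set ℝ :=
  {a | ∃ t : ℕ → ℝ, (∀ k, ℓ ≠ 0 → t k ∈ Set.Icc 0 ℓ) ∧
    Filter.Tendsto (fun k => sliceVolume L (f k) (t k)) Filter.atTop (nhds a)}

section LimitSlices
variable {d : ℕ} {ℓ : ℝ} {L : Fin d → ℝ} {E : Set (Fin (d + 1) → ℝ)}
  {f : ℕ → (Fin (d + 1) → ℝ) → ℝ}

lemma measurableSet_vecCons_preimage (hE : MeasurableSet E) (t : ℝ) :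
    MeasurableSet (vecCons t ⁻¹' E : Set (Fin d → ℝ)) :=
  (measurable_vecCons hE).preimage measurable_prodMk_left

lemma measurable_cellMeasure_vecCons_preimage (L : Fin d → ℝ) (hE : MeasurableSet E) :
    Measurable fun t => cellMeasure L (vecCons t ⁻¹' E) :=
  measurable_measure_prodMk_left (measurable_vecCons hE)

lemma lintegral_cellMeasure_vecCons_preimage (ℓ : ℝ) (L : Fin d → ℝ) (hE : MeasurableSet E) :
    ∫⁻ t, cellMeasure L (vecCons t ⁻¹' E) ∂coordMeasure ℓ = cellMeasure (vecCons ℓ L) E := by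
  rw [← (measurePreserving_vecCons ℓ L).measure_preimage hE.nullMeasurableSet,
    Measure.prod_apply (measurable_vecCons hE)]
  rfl

lemma ae_coordMeasure_mem_Icc (ℓ : ℝ) : ∀ᵐ t ∂coordMeasure ℓ, ℓ ≠ 0 → t ∈ Set.Icc 0 ℓ := by
  by_cases hℓ : ℓ = 0
  · simp [hℓ]
  · simp only [coordMeasure, hℓ, if_false]
    filter_upwards [ae_restrict_mem measurableSet_Ioc] with t ht _ using Set.Ioc_subset_Icc_self ht

lemma IsSmoothApprox.ae_isGoodHeight (hf : IsSmoothApprox (vecCons ℓ L) E f)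
    (hE : MeasurableSet E) (hE_top : cellMeasure (vecCons ℓ L) E ≠ ∞) :
    ∀ᵐ t ∂coordMeasure ℓ, IsGoodHeight ℓ L E f t := by
  have h_dist (k : ℕ) : Measurable fun x => ‖f k x - E.indicator 1 x‖ₑ :=
    ((hf.isTestFunction k).contDiff.continuous.measurable.sub (measurable_one.indicator hE)).enorm
  have h_slice (k : ℕ) : Measurable fun t =>
      ∫⁻ y, ‖f k (vecCons t y) - (vecCons t ⁻¹' E).indicator 1 y‖ₑ ∂cellMeasure L :=
    ((h_dist k).comp measurable_vecCons).lintegral_prod_right'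
  have h_sum : ∫⁻ t, ∑' k, ∫⁻ y, ‖f k (vecCons t y) - (vecCons t ⁻¹' E).indicator 1 y‖ₑ
      ∂cellMeasure L ∂coordMeasure ℓ ≠ ∞ := by
    rw [lintegral_tsum fun k => (h_slice k).aemeasurable]
    convert hf.tsum_ne_top using 3 with k
    rw [lintegral_cellMeasure_vecCons _ _ (h_dist k)]
    rfl
  filter_upwards [ae_lt_top (Measurable.tsum h_slice) h_sum,
    ae_lt_top (measurable_cellMeasure_vecCons_preimage L hE)
      (by rwa [lintegral_cellMeasure_vecCons_preimage ℓ L hE]), ae_coordMeasure_mem_Icc ℓ]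
    with t h_sum_t h_top h_mem
  exact ⟨⟨fun k => (hf.isTestFunction k).slice t, h_sum_t.ne⟩, h_top.ne, h_mem⟩

lemma IsSmoothApprox.tendsto_sliceVolume (hf : IsSmoothApprox (vecCons ℓ L) E f)
    (hE : MeasurableSet E) {t : ℝ} (ht : IsGoodHeight ℓ L E f t) :
    Filter.Tendsto (fun k => sliceVolume L (f k) t) Filter.atTop
      (nhds ((cellMeasure L).real (vecCons t ⁻¹' E))) := by
  have hE_t := measurableSet_vecCons_preimage hE t
  have h_int : Integrable ((vecCons t ⁻¹' E).indicator (1 : (Fin d → ℝ) → ℝ)) (cellMeasure L) := by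
    rw [integrable_indicator_iff hE_t]
    exact integrableOn_const ht.measure_ne_top
  rw [tendsto_iff_edist_tendsto_0]
  refine tendsto_of_tendsto_of_tendsto_of_le_of_le tendsto_const_nhds
    (ENNReal.tendsto_atTop_zero_of_tsum_ne_top ht.isSmoothApprox.tsum_ne_top)
    (fun _ => zero_le) fun k => ?_
  rw [edist_eq_enorm_sub, sliceVolume, ← integral_indicator_one hE_t,
    ← integral_sub ((hf.isTestFunction k).integrable_slice t) h_int]
  exact enorm_integral_le_lintegral_enorm _

lemma IsSmoothApprox.real_mem_limitVolumes (hf : IsSmoothApprox (vecCons ℓ L) E f)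
    (hE : MeasurableSet E) {t : ℝ} (ht : IsGoodHeight ℓ L E f t) :
    (cellMeasure L).real (vecCons t ⁻¹' E) ∈ limitVolumes ℓ L f :=
  ⟨fun _ => t, fun _ => ht.mem_Icc, hf.tendsto_sliceVolume hE ht⟩

lemma nonneg_of_mem_limitVolumes (hf : ∀ k, IsTestFunction (vecCons ℓ L) (f k)) {a : ℝ}
    (ha : a ∈ limitVolumes ℓ L f) : 0 ≤ a := by
  obtain ⟨t, -, ht⟩ := ha
  exact ge_of_tendsto' ht fun k => integral_nonneg fun y => (hf k).nonneg _

lemma zero_mem_limitVolumes (hf : ∀ k, IsTestFunction (vecCons 0 L) (f k)) :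
    0 ∈ limitVolumes 0 L f := by
  choose ρ hρ using fun k => (hf k).sliceVolume_eq_zero
  refine ⟨fun k => |ρ k| + 1, fun _ h => absurd rfl h, ?_⟩
  have h_zero (k : ℕ) : sliceVolume L (f k) (|ρ k| + 1) = 0 :=
    hρ k _ (by linarith [le_abs_self (ρ k), le_abs_self (|ρ k| + 1)])
  simp only [h_zero, tendsto_const_nhds]

variable {h : ℝ → ℝ} {σ : ℝ → ℝ}

lemma IsSmoothApprox.lintegral_le_liminf_slicePerimeter (hf : IsSmoothApprox (vecCons ℓ L) E f)
    (hE : MeasurableSet E) (hE_top : cellMeasure (vecCons ℓ L) E ≠ ∞)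
    (hh : ∀ v, 0 ≤ v → PerimeterAtLeast L v (h v)) (hσ : Continuous σ) :
    ∫⁻ t, ENNReal.ofReal (√(1 - σ ((cellMeasure L).real (vecCons t ⁻¹' E)) ^ 2)
        * h ((cellMeasure L).real (vecCons t ⁻¹' E))) ∂coordMeasure ℓ ≤
      Filter.liminf (fun k => ∫⁻ t, ENNReal.ofReal √(1 - σ (sliceVolume L (f k) t) ^ 2) *
        slicePerimeter L (f k) t ∂coordMeasure ℓ) Filter.atTop := by
  have h_weight : Continuous fun x => ENNReal.ofReal √(1 - σ x ^ 2) :=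
    ENNReal.continuous_ofReal.comp (by fun_prop)
  refine le_trans (lintegral_mono_ae ?_) (lintegral_liminf_le fun k =>
    (h_weight.comp (hf.isTestFunction k).contDiff_sliceVolume.continuous).measurable.mul
      (hf.isTestFunction k).measurable_slicePerimeter)
  filter_upwards [hf.ae_isGoodHeight hE hE_top] with t ht
  rw [ENNReal.ofReal_mul (Real.sqrt_nonneg _)]
  refine le_trans (mul_le_mul' (le_of_eq ?_) ?_) ENNReal.le_liminf_mul
  · exact ((h_weight.tendsto _).comp (hf.tendsto_sliceVolume hE ht)).liminf_eq.symm
  · exact (hh _ measureReal_nonneg).le_liminf (measurableSet_vecCons_preimage hE t)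
      (ENNReal.ofReal_toReal ht.measure_ne_top).symm ht.isSmoothApprox

lemma IsSmoothApprox.lintegral_add_le_liminf (hf : IsSmoothApprox (vecCons ℓ L) E f)
    (hE : MeasurableSet E) (hE_top : cellMeasure (vecCons ℓ L) E ≠ ∞)
    (hh : ∀ v, 0 ≤ v → PerimeterAtLeast L v (h v)) (hσ : IsCalibration σ) {a b : ℝ}
    (ha : a ∈ limitVolumes ℓ L f) (hb : b ∈ limitVolumes ℓ L f) :
    (∫⁻ t, ENNReal.ofReal (√(1 - σ ((cellMeasure L).real (vecCons t ⁻¹' E)) ^ 2)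
        * h ((cellMeasure L).real (vecCons t ⁻¹' E))) ∂coordMeasure ℓ) +
        ENNReal.ofReal (2 * ∫ x in a..b, σ x) ≤
      Filter.liminf (fun k => totalVariation (vecCons ℓ L) (f k)) Filter.atTop := by
  obtain ⟨t, ht, hta⟩ := ha
  obtain ⟨s, hs, hsb⟩ := hb
  have h_osc : Filter.Tendsto (fun k => ENNReal.ofReal
      (2 * ∫ x in (sliceVolume L (f k) (t k))..(sliceVolume L (f k) (s k)), σ x)) Filter.atTop
      (nhds (ENNReal.ofReal (2 * ∫ x in a..b, σ x))) :=
    ENNReal.tendsto_ofReal ((((continuous_intervalIntegral_prod hσ.continuous).tendsto (a, b)).comp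
      (hta.prodMk_nhds hsb)).const_mul 2)
  refine (add_le_add (hf.lintegral_le_liminf_slicePerimeter hE hE_top hh hσ.continuous)
    le_rfl).trans ((liminf_add_le_liminf_add ENNReal.ofReal_ne_top h_osc).trans
      (Filter.liminf_le_liminf (.of_forall fun k => ?_)))
  exact (hf.isTestFunction k).lintegral_slicePerimeter_add_le hσ (ht k) (hs k)

end LimitSlices

lemma add_ofReal_integral_sInf_sSup_le {A : Set ℝ} (hA : A.Nonempty) (h_below : BddBelow A)
    (h_above : BddAbove A) {σ : ℝ → ℝ} (hσ : Continuous σ) {x C : ℝ≥0∞}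
    (h : ∀ a ∈ A, ∀ b ∈ A, x + ENNReal.ofReal (2 * ∫ s in a..b, σ s) ≤ C) :
    x + ENNReal.ofReal (2 * ∫ s in sInf A..sSup A, σ s) ≤ C := by
  obtain ⟨u, -, hu, huA⟩ := exists_seq_tendsto_sInf hA h_below
  obtain ⟨w, -, hw, hwA⟩ := exists_seq_tendsto_sSup hA h_above
  have h_lim : Filter.Tendsto (fun k => ENNReal.ofReal (2 * ∫ s in (u k)..(w k), σ s)) Filter.atTop
      (nhds (ENNReal.ofReal (2 * ∫ s in sInf A..sSup A, σ s))) :=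
    ENNReal.tendsto_ofReal ((((continuous_intervalIntegral_prod hσ).tendsto (_, _)).comp
      (hu.prodMk_nhds hw)).const_mul 2)
  exact le_of_tendsto' (h_lim.const_add x) fun k => h _ (huA k) _ (hwA k)

/-! ### The one-dimensional problem -/

/-- The one-dimensional problem to which slicing reduces an isoperimetric inequality: `m` is the
function of slice volumes of a region of volume `V` and perimeter `c`, it ranges in `[μ, X]`, and
`h` bounds the perimeters of the slices from below. -/
structure IsSliceProfile (ℓ : ℝ) (h m : ℝ → ℝ) (μ X V c : ℝ) : Prop where
  measurable : Measurable m
  nonneg : ∀ t, 0 ≤ m t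
  lintegral_eq : ∫⁻ t, ENNReal.ofReal (m t) ∂coordMeasure ℓ = ENNReal.ofReal V
  min_nonneg : 0 ≤ μ
  min_le_max : μ ≤ X
  min_eq_zero : ℓ = 0 → μ = 0
  cost_nonneg : 0 ≤ c
  ae_mem_Icc : ∀ᵐ t ∂coordMeasure ℓ, m t ∈ Set.Icc μ X
  lintegral_add_le : ∀ σ : ℝ → ℝ, IsCalibration σ →
    (∫⁻ t, ENNReal.ofReal (√(1 - σ (m t) ^ 2) * h (m t)) ∂coordMeasure ℓ) +
      ENNReal.ofReal (2 * ∫ x in μ..X, σ x) ≤ ENNReal.ofReal c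

lemma coordMeasure_ne_zero {ℓ : ℝ} (hℓ : 0 ≤ ℓ) : coordMeasure ℓ ≠ 0 := by
  rcases hℓ.eq_or_lt with rfl | h
  · simp only [coordMeasure, if_true]
    exact NeZero.ne _
  · simpa [coordMeasure, h.ne', Measure.restrict_eq_zero] using h

lemma IsSmoothApprox.exists_isSliceProfile {d : ℕ} {ℓ : ℝ} (hℓ : 0 ≤ ℓ) {L : Fin d → ℝ}
    {h : ℝ → ℝ} (hh : ∀ v, 0 ≤ v → PerimeterAtLeast L v (h v)) {E : Set (Fin (d + 1) → ℝ)}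
    {f : ℕ → (Fin (d + 1) → ℝ) → ℝ} {V : ℝ} (hf : IsSmoothApprox (vecCons ℓ L) E f)
    (hE : MeasurableSet E) (hV : cellMeasure (vecCons ℓ L) E = ENNReal.ofReal V)
    (hC : Filter.liminf (fun k => totalVariation (vecCons ℓ L) (f k)) Filter.atTop ≠ ∞) :
    ∃ m μ X, IsSliceProfile ℓ h m μ X V
      (Filter.liminf (fun k => totalVariation (vecCons ℓ L) (f k)) Filter.atTop).toReal := by
  set C := Filter.liminf (fun k => totalVariation (vecCons ℓ L) (f k)) Filter.atTop
  have hE_top : cellMeasure (vecCons ℓ L) E ≠ ∞ := hV ▸ ENNReal.ofReal_ne_top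
  set A := limitVolumes ℓ L f
  have h_good := hf.ae_isGoodHeight hE hE_top
  have h_mem : ∀ᵐ t ∂coordMeasure ℓ, (cellMeasure L).real (vecCons t ⁻¹' E) ∈ A :=
    h_good.mono fun t ht => hf.real_mem_limitVolumes hE ht
  have h_nonneg : ∀ a ∈ A, 0 ≤ a := fun a => nonneg_of_mem_limitVolumes hf.isTestFunction
  have h_below : BddBelow A := ⟨0, h_nonneg⟩
  have h_cost {σ : ℝ → ℝ} (hσ : IsCalibration σ) (a : ℝ) (ha : a ∈ A) (b : ℝ) (hb : b ∈ A) :=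
    hf.lintegral_add_le_liminf hE hE_top hh hσ ha hb
  obtain ⟨a, ha⟩ : A.Nonempty := by
    have := ae_neBot.2 (coordMeasure_ne_zero hℓ)
    exact ⟨_, h_mem.exists.choose_spec⟩
  have h_above : BddAbove A := by
    refine ⟨a + C.toReal, fun b hb => ?_⟩
    have h_osc := le_trans le_add_self (h_cost isCalibration_one a ha b hb)
    rw [ENNReal.ofReal_le_iff_le_toReal hC] at h_osc
    simp only [intervalIntegral.integral_const, smul_eq_mul, mul_one] at h_osc
    linarith [ENNReal.toReal_nonneg (a := C)]
  refine ⟨_, sInf A, sSup A, (measurable_cellMeasure_vecCons_preimage L hE).ennreal_toReal,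
    fun t => measureReal_nonneg, ?_, le_csInf ⟨a, ha⟩ h_nonneg,
    csInf_le_csSup ⟨a, ha⟩ h_below h_above, ?_, ENNReal.toReal_nonneg,
    h_mem.mono fun t ht => ⟨csInf_le h_below ht, le_csSup h_above ht⟩, fun σ hσ => ?_⟩
  · rw [← hV, ← lintegral_cellMeasure_vecCons_preimage ℓ L hE]
    exact lintegral_congr_ae
      (h_good.mono fun t ht => ENNReal.ofReal_toReal ht.measure_ne_top)
  · rintro rfl
    exact le_antisymm (csInf_le h_below (zero_mem_limitVolumes hf.isTestFunction))
      (le_csInf ⟨a, ha⟩ h_nonneg)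
  · rw [ENNReal.ofReal_toReal hC]
    exact add_ofReal_integral_sInf_sSup_le ⟨a, ha⟩ h_below h_above hσ.continuous (h_cost hσ)

lemma perimeterAtLeast_vecCons {d : ℕ} {ℓ : ℝ} (hℓ : 0 ≤ ℓ) {L : Fin d → ℝ} {h : ℝ → ℝ}
    (hh : ∀ v, 0 ≤ v → PerimeterAtLeast L v (h v)) {v p : ℝ}
    (h_reduced : ∀ m μ X c, IsSliceProfile ℓ h m μ X v c → p ≤ c) :
    PerimeterAtLeast (vecCons ℓ L) v p := by
  refine fun E hE hV => le_iInf₂ fun f hf => ?_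
  by_cases hC : Filter.liminf (fun k => totalVariation (vecCons ℓ L) (f k)) Filter.atTop = ∞
  · exact hC ▸ le_top
  obtain ⟨m, μ, X, h_profile⟩ := hf.exists_isSliceProfile hℓ hh hE hV hC
  exact ENNReal.ofReal_le_of_le_toReal (h_reduced m μ X _ h_profile)

lemma isFiniteMeasure_coordMeasure {ℓ : ℝ} (hℓ : 0 < ℓ) : IsFiniteMeasure (coordMeasure ℓ) := by
  simp only [coordMeasure, hℓ.ne', if_false]
  infer_instance

lemma coordMeasure_real_univ {ℓ : ℝ} (hℓ : 0 < ℓ) : (coordMeasure ℓ).real Set.univ = ℓ := by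
  simp [coordMeasure, hℓ.ne', Measure.real, ENNReal.toReal_ofReal hℓ.le]

lemma ofReal_integral_le {α : Type*} [MeasurableSpace α] {ν : Measure α} {q : α → ℝ}
    (hq : Integrable q ν) : ENNReal.ofReal (∫ t, q t ∂ν) ≤ ∫⁻ t, ENNReal.ofReal (q t) ∂ν := by
  rw [integral_eq_lintegral_pos_part_sub_lintegral_neg_part hq]
  refine ENNReal.ofReal_le_of_le_toReal ?_
  linarith [ENNReal.toReal_nonneg (a := ∫⁻ t, ENNReal.ofReal (-q t) ∂ν)]

namespace IsSliceProfile
variable {ℓ : ℝ} {h m : ℝ → ℝ} {μ X V c : ℝ}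

lemma max_nonneg (hm : IsSliceProfile ℓ h m μ X V c) : 0 ≤ X :=
  hm.min_nonneg.trans hm.min_le_max

lemma integrable (hm : IsSliceProfile ℓ h m μ X V c) : Integrable m (coordMeasure ℓ) := by
  refine ⟨hm.measurable.aestronglyMeasurable, ?_⟩
  rw [hasFiniteIntegral_iff_ofReal (.of_forall hm.nonneg), hm.lintegral_eq]
  exact ENNReal.ofReal_lt_top

lemma integral_eq (hm : IsSliceProfile ℓ h m μ X V c) (hV : 0 ≤ V) :
    ∫ t, m t ∂coordMeasure ℓ = V := by
  rw [integral_eq_lintegral_of_nonneg_ae (.of_forall hm.nonneg)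
    hm.measurable.aestronglyMeasurable, hm.lintegral_eq, ENNReal.toReal_ofReal hV]

lemma volume_le (hm : IsSliceProfile ℓ h m μ X V c) (hℓ : 0 < ℓ) (hV : 0 ≤ V) : V ≤ ℓ * X := by
  have := isFiniteMeasure_coordMeasure hℓ
  have h_le := integral_mono_ae hm.integrable (integrable_const X)
    (hm.ae_mem_Icc.mono fun _ ht => ht.2)
  rwa [hm.integral_eq hV, integral_const, coordMeasure_real_univ hℓ, smul_eq_mul] at h_le

lemma le_volume (hm : IsSliceProfile ℓ h m μ X V c) (hℓ : 0 < ℓ) (hV : 0 ≤ V) : ℓ * μ ≤ V := by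
  have := isFiniteMeasure_coordMeasure hℓ
  have h_le := integral_mono_ae (integrable_const μ) hm.integrable
    (hm.ae_mem_Icc.mono fun _ ht => ht.1)
  rwa [hm.integral_eq hV, integral_const, coordMeasure_real_univ hℓ, smul_eq_mul] at h_le

lemma two_mul_sub_le (hm : IsSliceProfile ℓ h m μ X V c) : 2 * (X - μ) ≤ c := by
  have h_osc := le_trans le_add_self (hm.lintegral_add_le _ isCalibration_one)
  simp only [intervalIntegral.integral_const, smul_eq_mul, mul_one] at h_osc
  exact (ENNReal.ofReal_le_ofReal_iff hm.cost_nonneg).1 h_osc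

lemma integral_add_le (hm : IsSliceProfile ℓ h m μ X V c) {σ q : ℝ → ℝ} (hσ : IsCalibration σ)
    (hq : Integrable q (coordMeasure ℓ)) (hq0 : 0 ≤ ∫ t, q t ∂coordMeasure ℓ)
    (h_le : ∀ᵐ t ∂coordMeasure ℓ, q t ≤ √(1 - σ (m t) ^ 2) * h (m t)) :
    ∫ t, q t ∂coordMeasure ℓ + 2 * ∫ x in μ..X, σ x ≤ c := by
  have h_osc : 0 ≤ ∫ x in μ..X, σ x :=
    intervalIntegral.integral_nonneg hm.min_le_max fun x _ => hσ.nonneg x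
  rw [← ENNReal.ofReal_le_ofReal_iff hm.cost_nonneg, ENNReal.ofReal_add hq0 (by positivity)]
  refine le_trans (add_le_add ((ofReal_integral_le hq).trans (lintegral_mono_ae ?_)) le_rfl)
    (hm.lintegral_add_le σ hσ)
  filter_upwards [h_le] with t ht using ENNReal.ofReal_le_ofReal ht

end IsSliceProfile

/-! ### Large volumes: a circle factor does not help -/

lemma one_add_mul_sub_sq_le_rpow {p y : ℝ} (hp0 : 0 ≤ p) (hp1 : p < 1) (hy : -1 < y) :
    1 + p * y - y ^ 2 ≤ (1 + y) ^ p := by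
  have h_pos : 0 < 1 + y := by linarith
  have h_rpow : 0 < (1 + y) ^ p := rpow_pos_of_pos h_pos _
  have h_bernoulli : (1 + y) ^ (1 - p) ≤ 1 + (1 - p) * y :=
    rpow_one_add_le_one_add_mul_self hy.le (by linarith) (by linarith)
  have h_factor : 0 < 1 + (1 - p) * y := (rpow_pos_of_pos h_pos _).trans_le h_bernoulli
  refine le_of_mul_le_mul_right ?_ h_factor
  calc (1 + p * y - y ^ 2) * (1 + (1 - p) * y)
      = 1 + y - y ^ 2 * (p ^ 2 + (1 - p) * (1 + y)) := by ring
    _ ≤ 1 + y := by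
        have : 0 ≤ (1 - p) * (1 + y) := mul_nonneg (by linarith) h_pos.le
        exact sub_le_self _ (by positivity)
    _ = (1 + y) ^ p * (1 + y) ^ (1 - p) := by rw [← rpow_add h_pos]; simp
    _ ≤ (1 + y) ^ p * (1 + (1 - p) * y) := mul_le_mul_of_nonneg_left h_bernoulli h_rpow.le

lemma tangent_le_sqrt_mul_rpow {p u x₀ x : ℝ} (hp0 : 0 ≤ p) (hp1 : p < 1) (hx₀ : 0 < x₀)
    (hu : u ≤ 1 / 2) (hx : |x - x₀| ≤ u * x₀) :
    (1 - u ^ 2) * (x₀ ^ p * (1 + p * (x / x₀ - 1) - u ^ 2)) ≤ √(1 - u ^ 2) * x ^ p := by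
  have hu0 : 0 ≤ u := nonneg_of_mul_nonneg_left ((abs_nonneg _).trans hx) hx₀
  have h_rpow : 0 < x₀ ^ p := rpow_pos_of_pos hx₀ p
  have hy : |x / x₀ - 1| ≤ u := by
    rwa [div_sub_one hx₀.ne', abs_div, abs_of_pos hx₀, div_le_iff₀ hx₀]
  have hy_ge : -(1 / 2) ≤ x / x₀ - 1 := by linarith [neg_abs_le (x / x₀ - 1)]
  have hx_pos : 0 < x := by
    have : 0 < x / x₀ := by linarith
    rwa [div_pos_iff_of_pos_right hx₀] at this
  have h_sq : (x / x₀ - 1) ^ 2 ≤ u ^ 2 := sq_le_sq.2 (by rwa [abs_of_nonneg hu0])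
  have h_tangent := one_add_mul_sub_sq_le_rpow hp0 hp1 (y := x / x₀ - 1) (by linarith)
  rw [add_sub_cancel, div_rpow hx_pos.le hx₀.le, le_div_iff₀ h_rpow] at h_tangent
  have hu2 : 0 ≤ 1 - u ^ 2 := by nlinarith
  have h_sqrt : 1 - u ^ 2 ≤ √(1 - u ^ 2) :=
    Real.le_sqrt_of_sq_le (by nlinarith [mul_nonneg (sq_nonneg u) hu2])
  refine mul_le_mul h_sqrt ?_ ?_ (Real.sqrt_nonneg _)
  · nlinarith
  · exact mul_nonneg h_rpow.le (by nlinarith)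

-- The constant calibration `u = (X - μ) / (ℓ K x₀ ^ p)` gains `2 u (X - μ)` from the oscillation of
-- the slices and loses less than that, by concavity, on the slices themselves.
lemma IsSliceProfile.mul_mul_rpow_le {ℓ : ℝ} {h m : ℝ → ℝ} {μ X c x₀ K p : ℝ}
    (hm : IsSliceProfile ℓ h m μ X (ℓ * x₀) c) (hℓ : 0 < ℓ) (hx₀ : 0 < x₀) (hK : 0 < K)
    (hp0 : 0 ≤ p) (hp1 : p < 1) (h_large : ℓ * (K * x₀ ^ p) ≤ x₀)
    (hh : ∀ x, x₀ / 2 ≤ x → K * x ^ p ≤ h x) : ℓ * (K * x₀ ^ p) ≤ c := by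
  have hV : 0 ≤ ℓ * x₀ := by positivity
  have hX : x₀ ≤ X := le_of_mul_le_mul_left (hm.volume_le hℓ hV) hℓ
  have hμ : μ ≤ x₀ := le_of_mul_le_mul_left (hm.le_volume hℓ hV) hℓ
  obtain ⟨H, hH⟩ : ∃ H, H = ℓ * (K * x₀ ^ p) := ⟨_, rfl⟩
  rw [← hH] at h_large ⊢
  have hH_pos : 0 < H := hH ▸ mul_pos hℓ (mul_pos hK (rpow_pos_of_pos hx₀ p))
  rcases le_or_gt H (2 * (X - μ)) with h_osc | h_osc
  · exact h_osc.trans hm.two_mul_sub_le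
  set u := (X - μ) / H with hu
  have huH : u * H = X - μ := div_mul_cancel₀ _ hH_pos.ne'
  have hu0 : 0 ≤ u := div_nonneg (by linarith) hH_pos.le
  have hu1 : u ≤ 1 / 2 := by rw [hu, div_le_iff₀ hH_pos]; linarith
  set q : ℝ → ℝ := fun t => K * ((1 - u ^ 2) * (x₀ ^ p * (1 + p * (m t / x₀ - 1) - u ^ 2))) with hq
  have hq_affine : q = fun t => K * (1 - u ^ 2) * x₀ ^ p * (1 - p - u ^ 2) +
      K * (1 - u ^ 2) * x₀ ^ p * p / x₀ * m t := by
    funext t; simp only [hq]; field_simp; ring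
  have h_finite := isFiniteMeasure_coordMeasure hℓ
  have hq_int : Integrable q (coordMeasure ℓ) :=
    hq_affine ▸ (integrable_const _).add (hm.integrable.const_mul _)
  have hq_integral : ∫ t, q t ∂coordMeasure ℓ = (1 - u ^ 2) ^ 2 * H := by
    rw [hq_affine, integral_add (integrable_const _) (hm.integrable.const_mul _), integral_const,
      integral_const_mul, coordMeasure_real_univ hℓ, hm.integral_eq hV, hH, smul_eq_mul]
    field_simp
    ring
  have h_cost := hm.integral_add_le (σ := fun _ => u) (q := q)
    ⟨continuous_const, fun _ => hu0, fun _ => by linarith⟩ hq_int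
    (hq_integral ▸ mul_nonneg (sq_nonneg _) hH_pos.le) ?_
  · rw [hq_integral, intervalIntegral.integral_const, smul_eq_mul, ← huH] at h_cost
    nlinarith [mul_nonneg (sq_nonneg (u ^ 2)) hH_pos.le]
  · filter_upwards [hm.ae_mem_Icc] with t ⟨ht1, ht2⟩
    have h_near : |m t - x₀| ≤ u * x₀ := by
      refine le_trans ?_ (mul_le_mul_of_nonneg_left h_large hu0)
      rw [huH, abs_le]
      constructor <;> linarith
    have h_tangent := tangent_le_sqrt_mul_rpow hp0 hp1 hx₀ hu1 h_near
    refine (mul_le_mul_of_nonneg_left h_tangent hK.le).trans ?_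
    rw [mul_left_comm]
    exact mul_le_mul_of_nonneg_left (hh _ (by linarith)) (Real.sqrt_nonneg _)

lemma perimeterAtLeast_large_vecCons {d : ℕ} {ℓ A : ℝ} (hℓ : 0 < ℓ) (hA : 0 < A) {L : Fin d → ℝ}
    {K p : ℝ} (hK : 0 < K) (hp0 : 0 ≤ p) (hp1 : p < 1)
    (h : ∃ x₀, ∀ x, x₀ ≤ x → PerimeterAtLeast L (A * x) (A * (K * x ^ p))) :
    ∃ x₀, ∀ x, x₀ ≤ x → PerimeterAtLeast (vecCons ℓ L) (ℓ * A * x) (ℓ * A * (K * x ^ p)) := by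
  obtain ⟨x₀, h⟩ := h
  have h_tendsto : Filter.Tendsto (fun x : ℝ => x ^ (1 - p)) Filter.atTop Filter.atTop :=
    tendsto_rpow_atTop (by linarith)
  obtain ⟨B, hB⟩ := Filter.eventually_atTop.1 (h_tendsto.eventually_ge_atTop (ℓ * K))
  refine ⟨max B (max 1 (2 * x₀)), fun x hx => ?_⟩
  obtain ⟨hBx, h1x, hx₀x⟩ : B ≤ x ∧ 1 ≤ x ∧ 2 * x₀ ≤ x := by simpa using hx
  have hx_pos : 0 < x := by linarith
  have h_rpow : x ^ (1 - p) * x ^ p = x := by rw [← rpow_add hx_pos]; simp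
  set K' := A * K / A ^ p
  have hK' {y : ℝ} (hy : 0 < y) : A * (K * y ^ p) = K' * (A * y) ^ p := by
    have h_pos := rpow_pos_of_pos hA p
    rw [mul_rpow hA.le hy.le, ← mul_assoc, ← mul_assoc, div_mul_cancel₀ _ h_pos.ne']
  have h_large : ℓ * (K' * (A * x) ^ p) ≤ A * x := by
    rw [← hK' hx_pos]
    calc ℓ * (A * (K * x ^ p)) = A * (ℓ * K * x ^ p) := by ring
      _ ≤ A * (x ^ (1 - p) * x ^ p) := by gcongr; exact hB x hBx
      _ = A * x := by rw [h_rpow]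
  classical
  rw [mul_assoc, mul_assoc, hK' hx_pos]
  refine perimeterAtLeast_vecCons hℓ.le (h := fun y => if A * x / 2 ≤ y then K' * y ^ p else 0)
    (fun y _ => ?_) fun m μ X c hm => hm.mul_mul_rpow_le hℓ (by positivity) (by positivity) hp0 hp1
      h_large fun y hy => by rw [if_pos hy]
  split_ifs with hy
  · obtain ⟨z, rfl⟩ : ∃ z, y = A * z := ⟨y / A, by field_simp⟩
    have hz : x / 2 ≤ z := by rw [mul_div_assoc] at hy; exact le_of_mul_le_mul_left hy hA
    rw [← hK' (by linarith)]
    exact h z (by linarith)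
  · exact perimeterAtLeast_of_nonpos L y le_rfl

/-! ### The isoperimetric inequality in Euclidean space -/

/-- The volume of the unit ball of `ℝ^d`. -/
def ballVolume (d : ℕ) : ℝ := volume.real (Metric.ball (0 : EuclideanSpace ℝ (Fin d)) 1)

lemma ballVolume_pos (d : ℕ) : 0 < ballVolume d :=
  ENNReal.toReal_pos (Metric.measure_ball_pos _ _ one_pos).ne' measure_ball_lt_top.ne

lemma cellMeasure_zero (d : ℕ) : cellMeasure (0 : Fin d → ℝ) = volume := by
  simp [cellMeasure, coordMeasure, volume_pi]

lemma volume_sum_sq_lt {d : ℕ} (hd : 1 ≤ d) {s : ℝ} (hs : 0 ≤ s) :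
    volume {y : Fin d → ℝ | ∑ i, y i ^ 2 < s ^ 2} =
      ENNReal.ofReal (s ^ d) * ENNReal.ofReal (ballVolume d) := by
  have h_meas : MeasurableSet {y : Fin d → ℝ | ∑ i, y i ^ 2 < s ^ 2} :=
    measurableSet_lt (by fun_prop) (by fun_prop)
  have h_ball : (WithLp.ofLp ⁻¹' {y : Fin d → ℝ | ∑ i, y i ^ 2 < s ^ 2} :
      Set (EuclideanSpace ℝ (Fin d))) = Metric.ball 0 s := by
    rw [EuclideanSpace.ball_zero_eq s hs]; rfl
  have : Nonempty (Fin d) := ⟨⟨0, hd⟩⟩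
  rw [← (PiLp.volume_preserving_ofLp (Fin d)).measure_preimage h_meas.nullMeasurableSet, h_ball,
    Measure.addHaar_ball _ _ hs, finrank_euclideanSpace_fin, ballVolume,
    ofReal_measureReal measure_ball_lt_top.ne]

/-- Slicing the unit ball of `ℝ^(d+1)`, the height of the slice of volume `u`, relative to the
volume of the equatorial slice. -/
def capHeight (d : ℕ) (u : ℝ) : ℝ := √(1 - u ^ ((2 : ℝ) / d))

lemma capHeight_nonneg (d : ℕ) (u : ℝ) : 0 ≤ capHeight d u := Real.sqrt_nonneg _

lemma continuous_capHeight (d : ℕ) : Continuous (capHeight d) := by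
  have : Continuous fun u : ℝ => u ^ ((2 : ℝ) / d) :=
    continuous_id.rpow_const fun _ => Or.inr (by positivity)
  unfold capHeight
  fun_prop

lemma lt_capHeight_iff {d : ℕ} (hd : 1 ≤ d) {t u : ℝ} (ht : 0 ≤ t) (hu : 0 < u) :
    t < capHeight d u ↔ u < √(1 - t ^ 2) ^ d := by
  have hd0 : (d : ℝ) ≠ 0 := by positivity
  obtain ⟨r, hr, rfl⟩ : ∃ r, 0 < r ∧ u = r ^ d := by
    refine ⟨u ^ ((1 : ℝ) / d), rpow_pos_of_pos hu _, ?_⟩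
    rw [← Real.rpow_natCast, ← rpow_mul hu.le, one_div_mul_cancel hd0, Real.rpow_one]
  have h_sq : (r ^ d) ^ ((2 : ℝ) / d) = r ^ 2 := by
    rw [← Real.rpow_natCast, ← rpow_mul hr.le, mul_div_cancel₀ _ hd0]
    exact_mod_cast Real.rpow_natCast r 2
  rw [capHeight, h_sq, pow_lt_pow_iff_left₀ hr.le (Real.sqrt_nonneg _) (by lia),
    Real.lt_sqrt ht, Real.lt_sqrt hr.le]
  constructor <;> intro h <;> linarith

lemma lintegral_capHeight {d : ℕ} (hd : 1 ≤ d) :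
    ∫⁻ u in Set.Ioc (0 : ℝ) 1, ENNReal.ofReal (capHeight d u) =
      ∫⁻ t in Set.Ioi (0 : ℝ), ENNReal.ofReal (√(1 - t ^ 2) ^ d) := by
  rw [lintegral_eq_lintegral_meas_lt _ (.of_forall (capHeight_nonneg d))
    (continuous_capHeight d).aemeasurable]
  refine setLIntegral_congr_fun measurableSet_Ioi fun t (ht : 0 < t) => ?_
  have h_le_one : √(1 - t ^ 2) ^ d ≤ 1 :=
    pow_le_one₀ (Real.sqrt_nonneg _) (Real.sqrt_le_one.2 (by nlinarith))
  have h_superlevel :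
      {u : ℝ | t < capHeight d u} ∩ Set.Ioc 0 1 = Set.Ioo 0 (√(1 - t ^ 2) ^ d) := by
    ext u
    constructor
    · rintro ⟨h_lt, hu, -⟩
      exact ⟨hu, (lt_capHeight_iff hd ht.le hu).1 h_lt⟩
    · rintro ⟨hu, h_lt⟩
      exact ⟨(lt_capHeight_iff hd ht.le hu).2 h_lt, hu, h_lt.le.trans h_le_one⟩
  rw [Measure.restrict_apply' measurableSet_Ioc, h_superlevel, Real.volume_Ioo, sub_zero]

lemma lintegral_eq_two_mul_of_even {F : ℝ → ℝ≥0∞} (hF : ∀ t, F (-t) = F t) :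
    ∫⁻ t, F t = 2 * ∫⁻ t in Set.Ioi 0, F t := by
  rw [← lintegral_add_compl F measurableSet_Ioi, two_mul]
  congr 1
  rw [Set.compl_Ioi, ← setLIntegral_congr Iio_ae_eq_Iic,
    ← lintegral_indicator measurableSet_Iio, ← lintegral_indicator measurableSet_Ioi,
    ← lintegral_neg_eq_self]
  refine lintegral_congr fun t => ?_
  by_cases h : 0 < t <;> simp [h, hF]

lemma vecCons_preimage_sum_sq_lt_one {d : ℕ} (t : ℝ) :
    vecCons t ⁻¹' {y : Fin (d + 1) → ℝ | ∑ i, y i ^ 2 < 1 ^ 2} =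
      {y : Fin d → ℝ | ∑ i, y i ^ 2 < √(1 - t ^ 2) ^ 2} := by
  ext y
  simp only [Set.mem_preimage, Set.mem_ofPred_eq, Fin.sum_univ_succ, Matrix.cons_val_zero,
    Matrix.cons_val_succ]
  have hy : 0 ≤ ∑ i, y i ^ 2 := Finset.sum_nonneg fun i _ => sq_nonneg _
  rcases le_total (t ^ 2) 1 with h | h
  · rw [Real.sq_sqrt (by linarith)]
    constructor <;> intro h <;> linarith
  · rw [Real.sqrt_eq_zero_of_nonpos (by linarith)]
    constructor <;> intro h <;> nlinarith

lemma ofReal_ballVolume_succ {d : ℕ} (hd : 1 ≤ d) :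
    ENNReal.ofReal (ballVolume (d + 1)) = ENNReal.ofReal (ballVolume d) *
      (2 * ∫⁻ t in Set.Ioi (0 : ℝ), ENNReal.ofReal (√(1 - t ^ 2) ^ d)) := by
  have h_meas : MeasurableSet {y : Fin (d + 1) → ℝ | ∑ i, y i ^ 2 < 1 ^ 2} :=
    measurableSet_lt (by fun_prop) (by fun_prop)
  have h_slices := lintegral_cellMeasure_vecCons_preimage 0 (0 : Fin d → ℝ) h_meas
  rw [Matrix.cons_zero_zero, cellMeasure_zero, cellMeasure_zero,
    volume_sum_sq_lt (by lia) zero_le_one] at h_slices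
  simp only [vecCons_preimage_sum_sq_lt_one, volume_sum_sq_lt hd (Real.sqrt_nonneg _)]
    at h_slices
  simp only [one_pow, ENNReal.ofReal_one, one_mul, coordMeasure, if_true] at h_slices
  rw [← h_slices, lintegral_mul_const' _ _ ENNReal.ofReal_ne_top, mul_comm,
    lintegral_eq_two_mul_of_even (by simp)]

lemma ballVolume_succ {d : ℕ} (hd : 1 ≤ d) :
    ballVolume d * (2 * ∫ u in (0 : ℝ)..1, capHeight d u) = ballVolume (d + 1) := by
  have h_integral : ∫ u in (0 : ℝ)..1, capHeight d u =
      (∫⁻ u in Set.Ioc (0 : ℝ) 1, ENNReal.ofReal (capHeight d u)).toReal := by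
    rw [intervalIntegral.integral_of_le zero_le_one, integral_eq_lintegral_of_nonneg_ae
      (.of_forall (capHeight_nonneg d)) (continuous_capHeight d).aestronglyMeasurable]
  rw [h_integral, lintegral_capHeight hd, ← ENNReal.toReal_ofReal (ballVolume_pos (d + 1)).le,
    ofReal_ballVolume_succ hd, ENNReal.toReal_mul, ENNReal.toReal_mul,
    ENNReal.toReal_ofReal (ballVolume_pos d).le, ENNReal.toReal_ofNat]

/-- The radius of the ball of volume `x` in `ℝ^d`. -/
def ballRadius (d : ℕ) (x : ℝ) : ℝ := (x / ballVolume d) ^ ((1 : ℝ) / d)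

/-- The perimeter of the ball of volume `x` in `ℝ^d`. -/
def ballPerimeter (d : ℕ) (x : ℝ) : ℝ := d * x / ballRadius d x

lemma ballRadius_pos {d : ℕ} {x : ℝ} (hx : 0 < x) : 0 < ballRadius d x :=
  rpow_pos_of_pos (div_pos hx (ballVolume_pos d)) _

lemma ballRadius_nonneg {d : ℕ} {x : ℝ} (hx : 0 ≤ x) : 0 ≤ ballRadius d x :=
  rpow_nonneg (div_nonneg hx (ballVolume_pos d).le) _

lemma ballVolume_mul_ballRadius_pow {d : ℕ} (hd : 1 ≤ d) {x : ℝ} (hx : 0 ≤ x) :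
    ballVolume d * ballRadius d x ^ d = x := by
  have hd0 : (d : ℝ) ≠ 0 := by positivity
  rw [ballRadius, ← Real.rpow_natCast, ← rpow_mul (div_nonneg hx (ballVolume_pos d).le), one_div,
    inv_mul_cancel₀ hd0, Real.rpow_one, mul_div_cancel₀ _ (ballVolume_pos d).ne']

lemma ballRadius_eq (d : ℕ) {x : ℝ} (hx : 0 ≤ x) :
    ballRadius d x = x ^ ((1 : ℝ) / d) / ballVolume d ^ ((1 : ℝ) / d) :=
  div_rpow hx (ballVolume_pos d).le _

lemma ballRadius_div_ballRadius {d : ℕ} {x X : ℝ} (hx : 0 ≤ x) (hX : 0 ≤ X) :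
    ballRadius d x / ballRadius d X = (x / X) ^ ((1 : ℝ) / d) := by
  rw [ballRadius_eq d hx, ballRadius_eq d hX, div_rpow hx hX,
    div_div_div_cancel_right₀ (rpow_pos_of_pos (ballVolume_pos d) _).ne']

lemma ballPerimeter_nonneg (d : ℕ) {x : ℝ} (hx : 0 ≤ x) : 0 ≤ ballPerimeter d x :=
  div_nonneg (by positivity) (ballRadius_nonneg hx)

lemma ballPerimeter_zero (d : ℕ) : ballPerimeter d 0 = 0 := by simp [ballPerimeter]

lemma ballPerimeter_eq (d : ℕ) {x : ℝ} (hx : 0 < x) :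
    ballPerimeter d x = d * ballVolume d ^ ((1 : ℝ) / d) * x ^ (1 - (1 : ℝ) / d) := by
  have h_rpow : x ^ ((1 : ℝ) / d) ≠ 0 := (rpow_pos_of_pos hx _).ne'
  rw [ballPerimeter, ballRadius_eq d hx.le, rpow_sub hx, Real.rpow_one]
  field_simp [h_rpow]

lemma ballPerimeter_eq_mul_ballRadius_pow {d : ℕ} {x : ℝ} (hx : 0 < x) :
    ballPerimeter (d + 1) x = (d + 1) * ballVolume (d + 1) * ballRadius (d + 1) x ^ d := by
  have h_vol := ballVolume_mul_ballRadius_pow (d := d + 1) (by lia) hx.le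
  rw [ballPerimeter, div_eq_iff (ballRadius_pos hx).ne']
  nth_rw 1 [← h_vol]
  push_cast; ring

/-- The vertical component of the unit normal to the ball of `ℝ^(d+1)` whose equatorial slice has
volume `X`, as a function of the volume `x` of the slice. -/
def capCalibration (d : ℕ) (X x : ℝ) : ℝ := capHeight d (max x 0 / X)

lemma isCalibration_capCalibration (d : ℕ) {X : ℝ} (hX : 0 ≤ X) :
    IsCalibration (capCalibration d X) where
  continuous := (continuous_capHeight d).comp (by fun_prop)
  nonneg _ := capHeight_nonneg _ _
  le_one x := by
    rw [capCalibration, capHeight, Real.sqrt_le_one]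
    linarith [rpow_nonneg (div_nonneg (le_max_right x 0) hX) ((2 : ℝ) / d)]

lemma sqrt_one_sub_capCalibration_sq {d : ℕ} {X x : ℝ} (hX : 0 < X) (hx0 : 0 ≤ x) (hx : x ≤ X) :
    √(1 - capCalibration d X x ^ 2) = ballRadius d x / ballRadius d X := by
  have h_quot : 0 ≤ x / X := div_nonneg hx0 hX.le
  have h_le : (x / X) ^ ((2 : ℝ) / d) ≤ 1 :=
    rpow_le_one h_quot ((div_le_one hX).2 hx) (by positivity)
  have h_sq : (x / X) ^ ((2 : ℝ) / d) = ((x / X) ^ ((1 : ℝ) / d)) ^ 2 := by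
    rw [← Real.rpow_natCast, ← rpow_mul h_quot]
    congr 1; push_cast; ring
  rw [capCalibration, capHeight, max_eq_left hx0, Real.sq_sqrt (by linarith), sub_sub_self, h_sq,
    Real.sqrt_sq (rpow_nonneg h_quot _), ballRadius_div_ballRadius hx0 hX.le]

lemma two_mul_integral_capCalibration {d : ℕ} (hd : 1 ≤ d) {X : ℝ} (hX : 0 < X) :
    2 * ∫ x in 0..X, capCalibration d X x = ballVolume (d + 1) * ballRadius d X ^ d := by
  have h_congr : ∫ x in 0..X, capCalibration d X x = ∫ x in 0..X, capHeight d (x / X) := by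
    refine intervalIntegral.integral_congr fun x hx => ?_
    rw [Set.uIcc_of_le hX.le] at hx
    simp only [capCalibration, max_eq_left hx.1]
  rw [h_congr, intervalIntegral.integral_comp_div (capHeight d) hX.ne', zero_div, div_self hX.ne',
    ← ballVolume_succ hd, smul_eq_mul]
  nth_rw 1 [← ballVolume_mul_ballRadius_pow hd hX.le]
  ring

-- Equality holds when `R` is the radius of the ball of volume `v`; this is why balls are optimal.
lemma ballPerimeter_succ_le (d : ℕ) {v R : ℝ} (hv : 0 < v) (hR : 0 < R) :
    ballPerimeter (d + 1) v ≤ d * v / R + ballVolume (d + 1) * R ^ d := by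
  set r := ballRadius (d + 1) v
  have hr : 0 < r := ballRadius_pos hv
  have h_vol : ballVolume (d + 1) * r ^ (d + 1) = v :=
    ballVolume_mul_ballRadius_pow (by lia) hv.le
  have h_bernoulli : 1 + (d : ℝ) * (R / r - 1) ≤ (R / r) ^ d := by
    simpa using one_add_mul_le_pow (a := R / r - 1) (by linarith [div_pos hR hr]) d
  have h_amgm : (2 : ℝ) ≤ R / r + r / R := by
    rw [div_add_div _ _ hr.ne' hR.ne', le_div_iff₀ (by positivity)]
    nlinarith [sq_nonneg (R - r)]
  calc ballPerimeter (d + 1) v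
      = ballVolume (d + 1) * r ^ d * (d + 1) := by
        rw [ballPerimeter_eq_mul_ballRadius_pow hv]; ring
    _ ≤ ballVolume (d + 1) * r ^ d * (d * (r / R) + (R / r) ^ d) := by
        refine mul_le_mul_of_nonneg_left ?_ (mul_nonneg (ballVolume_pos _).le (by positivity))
        nlinarith [(by positivity : (0 : ℝ) ≤ d)]
    _ = d * v / R + ballVolume (d + 1) * R ^ d := by
        rw [← h_vol, div_pow]; field_simp; ring

lemma ballRadius_div_mul_ballPerimeter {d : ℕ} (X : ℝ) {x : ℝ} (hx : 0 ≤ x) :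
    ballRadius d x / ballRadius d X * ballPerimeter d x = d / ballRadius d X * x := by
  rcases hx.eq_or_lt with rfl | hx
  · simp [ballPerimeter_zero]
  · have := (ballRadius_pos (d := d) hx).ne'
    unfold ballPerimeter
    field_simp

lemma ballVolume_one : ballVolume 1 = 2 := by
  have h_interval : {y : Fin 1 → ℝ | ∑ i, y i ^ 2 < 1 ^ 2} =
      Set.pi Set.univ fun _ => Set.Ioo (-1) 1 := by
    ext y
    simp [abs_lt]
  have h_vol := volume_sum_sq_lt (d := 1) le_rfl (s := 1) zero_le_one
  rw [h_interval, volume_pi_pi, pow_one, ENNReal.ofReal_one, one_mul] at h_vol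
  have h_two : ENNReal.ofReal (ballVolume 1) = ENNReal.ofReal 2 := by
    rw [← h_vol]; norm_num
  exact (ENNReal.ofReal_eq_ofReal_iff (ballVolume_pos 1).le zero_le_two).1 h_two

lemma ballPerimeter_one {v : ℝ} (hv : 0 < v) : ballPerimeter 1 v = 2 := by
  simp [ballPerimeter_eq 1 hv, ballVolume_one]

lemma perimeterAtLeast_point {x : ℝ} (hx : 0 ≤ x) (hx0 : x ≠ 0) (hx1 : x ≠ 1) (p : ℝ) :
    PerimeterAtLeast (0 : Fin 0 → ℝ) x p := by
  intro E _ hE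
  rw [cellMeasure_zero] at hE
  rcases Set.eq_empty_or_nonempty E with rfl | h_ne
  · rw [measure_empty] at hE
    exact absurd (le_antisymm (ENNReal.ofReal_eq_zero.1 hE.symm) hx) hx0
  · rw [Subsingleton.eq_univ_of_nonempty h_ne, ← Set.pi_univ Set.univ, volume_pi_pi] at hE
    exact absurd (ENNReal.ofReal_eq_one.1 (by simpa using hE.symm)) hx1

-- If `2 (X - μ) ≤ c < 2`, no slice has volume one, and then the slices of positive volume may be
-- charged as much as desired.
lemma perimeterAtLeast_line {v : ℝ} (hv : 0 < v) : PerimeterAtLeast (0 : Fin 1 → ℝ) v 2 := by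
  classical
  rw [← Matrix.cons_zero_zero]
  let h : ℝ → ℝ := fun x => if x = 0 ∨ x = 1 then 0 else 2 / v
  refine perimeterAtLeast_vecCons (h := h) le_rfl (fun x hx => ?_) (fun m μ X c hm => ?_)
  · by_cases hx01 : x = 0 ∨ x = 1
    · simp only [h, if_pos hx01]
      exact perimeterAtLeast_of_nonpos _ _ le_rfl
    · rw [not_or] at hx01
      exact perimeterAtLeast_point hx hx01.1 hx01.2 _
  · by_contra! hc
    have hX : X < 1 := by linarith [hm.two_mul_sub_le, hm.min_eq_zero rfl]
    have h_integral : ∫ t, 2 / v * m t ∂coordMeasure 0 = 2 := by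
      rw [integral_const_mul, hm.integral_eq hv.le, div_mul_cancel₀ _ hv.ne']
    have h_cost := hm.integral_add_le (σ := fun _ => 0) (q := fun t => 2 / v * m t)
      ⟨continuous_const, fun _ => le_rfl, fun _ => zero_le_one⟩ (hm.integrable.const_mul _)
      (by rw [h_integral]; exact zero_le_two) ?_
    · rw [h_integral, intervalIntegral.integral_zero] at h_cost
      linarith
    · filter_upwards [hm.ae_mem_Icc] with t ht
      have h_lt : m t < 1 := ht.2.trans_lt hX
      have h_div : 0 ≤ 2 / v := by positivity
      rcases eq_or_ne (m t) 0 with h0 | h0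
      · simp [h0, h]
      · simpa [h, h0, h_lt.ne] using mul_le_of_le_one_right h_div h_lt.le

lemma IsSliceProfile.max_pos {ℓ : ℝ} {h m : ℝ → ℝ} {μ X V c : ℝ} (hm : IsSliceProfile ℓ h m μ X V c)
    (hV : 0 < V) : 0 < X := by
  refine hm.max_nonneg.lt_of_ne fun hX => hV.ne ?_
  rw [← hm.integral_eq hV.le]
  refine (integral_eq_zero_of_ae (hm.ae_mem_Icc.mono fun t ht => ?_)).symm
  exact le_antisymm (ht.2.trans_eq hX.symm) (hm.nonneg t)

lemma IsSliceProfile.ballPerimeter_succ_le_of_min_eq_zero {d : ℕ} (hd : 1 ≤ d) {ℓ : ℝ}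
    {h m : ℝ → ℝ} {X v c : ℝ} (hm : IsSliceProfile ℓ h m 0 X v c) (hv : 0 < v)
    (hh : ∀ x, 0 ≤ x → x ≤ X → ballPerimeter d x ≤ h x) : ballPerimeter (d + 1) v ≤ c := by
  have hX := hm.max_pos hv
  have h_integral : ∫ t, d / ballRadius d X * m t ∂coordMeasure ℓ = d * v / ballRadius d X := by
    rw [integral_const_mul, hm.integral_eq hv.le, div_mul_eq_mul_div]
  calc ballPerimeter (d + 1) v
      ≤ d * v / ballRadius d X + ballVolume (d + 1) * ballRadius d X ^ d :=
        ballPerimeter_succ_le d hv (ballRadius_pos hX)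
    _ = (∫ t, d / ballRadius d X * m t ∂coordMeasure ℓ) +
          2 * ∫ x in 0..X, capCalibration d X x := by
        rw [h_integral, two_mul_integral_capCalibration hd hX]
    _ ≤ c := by
        refine hm.integral_add_le (isCalibration_capCalibration d hX.le) (hm.integrable.const_mul _)
          ?_ (hm.ae_mem_Icc.mono fun t ht => ?_)
        · rw [h_integral]
          exact div_nonneg (by positivity) (ballRadius_pos hX).le
        · rw [sqrt_one_sub_capCalibration_sq hX ht.1 ht.2,
            ← ballRadius_div_mul_ballPerimeter X ht.1]
          exact mul_le_mul_of_nonneg_left (hh _ ht.1 ht.2)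
            (div_nonneg (ballRadius_nonneg ht.1) (ballRadius_nonneg hX.le))

lemma perimeterAtLeast_euclidean {d : ℕ} (hd : 1 ≤ d) {v : ℝ} (hv : 0 ≤ v) :
    PerimeterAtLeast (0 : Fin d → ℝ) v (ballPerimeter d v) := by
  rcases hv.eq_or_lt with rfl | hv
  · exact perimeterAtLeast_of_nonpos _ _ (ballPerimeter_zero d).le
  induction d, hd using Nat.le_induction generalizing v with
  | base => exact ballPerimeter_one hv ▸ perimeterAtLeast_line hv
  | succ d hd ih =>
    rw [← Matrix.cons_zero_zero]
    refine perimeterAtLeast_vecCons le_rfl (h := ballPerimeter d) (fun x hx => ?_)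
      fun m μ X c hm => ?_
    · rcases hx.eq_or_lt with rfl | hx
      · exact perimeterAtLeast_of_nonpos _ _ (ballPerimeter_zero d).le
      · exact ih hx.le hx
    · obtain rfl := hm.min_eq_zero rfl
      exact hm.ballPerimeter_succ_le_of_min_eq_zero hd hv fun _ _ _ => le_rfl

/-! ### Small volumes: balls win -/

lemma ballPerimeter_pos {d : ℕ} (hd : 1 ≤ d) {x : ℝ} (hx : 0 < x) : 0 < ballPerimeter d x :=
  div_pos (by positivity) (ballRadius_pos hx)

lemma ballPerimeter_mul_ballRadius {d : ℕ} {x : ℝ} (hx : 0 < x) :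
    ballPerimeter d x * ballRadius d x = d * x :=
  div_mul_cancel₀ _ (ballRadius_pos hx).ne'

lemma ballPerimeter_le_ballPerimeter {d : ℕ} (hd : 1 ≤ d) {x y : ℝ} (hx : 0 < x) (hxy : x ≤ y) :
    ballPerimeter d x ≤ ballPerimeter d y := by
  have h_exponent : 0 ≤ 1 - (1 : ℝ) / d := sub_nonneg.2 (div_le_one_of_le₀ (by exact_mod_cast hd)
    (by positivity))
  rw [ballPerimeter_eq d hx, ballPerimeter_eq d (hx.trans_le hxy)]
  exact mul_le_mul_of_nonneg_left (rpow_le_rpow hx.le hxy h_exponent)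
    (mul_nonneg (by positivity) (rpow_nonneg (ballVolume_pos d).le _))

lemma ballRadius_le_ballRadius (d : ℕ) {x y : ℝ} (hx : 0 ≤ x) (hxy : x ≤ y) :
    ballRadius d x ≤ ballRadius d y :=
  rpow_le_rpow (div_nonneg hx (ballVolume_pos d).le)
    (div_le_div_of_nonneg_right hxy (ballVolume_pos d).le) (by positivity)

lemma hasDerivAt_ballRadius {d : ℕ} {x : ℝ} (hx : 0 < x) :
    HasDerivAt (ballRadius d) (ballPerimeter d x)⁻¹ x := by
  have h_quot : 0 < x / ballVolume d := div_pos hx (ballVolume_pos d)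
  have h_deriv := ((hasDerivAt_id x).div_const (ballVolume d)).rpow_const (p := (1 : ℝ) / d)
    (Or.inl h_quot.ne')
  refine h_deriv.congr_deriv ?_
  have := ballVolume_pos d
  rw [id, rpow_sub_one h_quot.ne', ← ballRadius, ballPerimeter]
  field_simp

lemma continuousOn_inv_ballPerimeter {d : ℕ} (hd : 1 ≤ d) :
    ContinuousOn (fun x => (ballPerimeter d x)⁻¹) (Set.Ioi 0) := by
  refine ContinuousOn.inv₀ (fun x (hx : 0 < x) => ContinuousAt.continuousWithinAt ?_)
    fun x hx => (ballPerimeter_pos hd hx).ne'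
  exact (continuousAt_id.const_mul _).div (hasDerivAt_ballRadius hx).continuousAt
    (ballRadius_pos hx).ne'

/-- The factor by which `capCalibration` is damped near the minimal slice volume `μ`, so that the
slices of a circle product, whose volumes do not descend to zero, stay cheap to calibrate. -/
def damping (d : ℕ) (μ x : ℝ) : ℝ := ballPerimeter d μ / ballPerimeter d (max x μ)

section Damping
variable {d : ℕ} {μ : ℝ}

lemma damping_nonneg (d : ℕ) (hμ : 0 < μ) (x : ℝ) : 0 ≤ damping d μ x :=
  div_nonneg (ballPerimeter_nonneg d hμ.le)
    (ballPerimeter_nonneg d (hμ.le.trans (le_max_right _ _)))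

lemma damping_le_one (hd : 1 ≤ d) (hμ : 0 < μ) (x : ℝ) : damping d μ x ≤ 1 :=
  (div_le_one (ballPerimeter_pos hd (hμ.trans_le (le_max_right _ _)))).2
    (ballPerimeter_le_ballPerimeter hd hμ (le_max_right _ _))

lemma continuous_damping (hd : 1 ≤ d) (hμ : 0 < μ) : Continuous (damping d μ) :=
  ((continuousOn_inv_ballPerimeter hd).comp_continuous (by fun_prop)
    fun _ => hμ.trans_le (le_max_right _ _)).const_mul _

lemma damping_mul_ballPerimeter (hd : 1 ≤ d) (hμ : 0 < μ) {x : ℝ} (hx : μ ≤ x) :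
    damping d μ x * ballPerimeter d x = ballPerimeter d μ := by
  rw [damping, max_eq_left hx, div_mul_cancel₀ _ (ballPerimeter_pos hd (hμ.trans_le hx)).ne']

lemma integral_damping (hd : 1 ≤ d) (hμ : 0 < μ) {X : ℝ} (hX : μ ≤ X) :
    ∫ x in μ..X, damping d μ x = ballPerimeter d μ * ballRadius d X - d * μ := by
  have h_pos : ∀ x ∈ Set.uIcc μ X, 0 < x := fun x hx =>
    hμ.trans_le (Set.uIcc_of_le hX ▸ hx : x ∈ Set.Icc μ X).1
  have h_congr : ∫ x in μ..X, damping d μ x =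
      ∫ x in μ..X, ballPerimeter d μ * (ballPerimeter d x)⁻¹ := by
    refine intervalIntegral.integral_congr fun x hx => ?_
    rw [Set.uIcc_of_le hX] at hx
    simp only [damping, max_eq_left hx.1, div_eq_mul_inv]
  rw [h_congr, intervalIntegral.integral_const_mul, intervalIntegral.integral_eq_sub_of_hasDerivAt
    (fun x hx => hasDerivAt_ballRadius (h_pos x hx))
    ((continuousOn_inv_ballPerimeter hd).mono h_pos).intervalIntegrable, mul_sub,
    ballPerimeter_mul_ballRadius hμ]

/-- The calibration used in a product with a circle, for slice volumes between `μ` and `X`. -/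
def dampedCalibration (d : ℕ) (μ X x : ℝ) : ℝ := capCalibration d X x * (1 - damping d μ x)

lemma isCalibration_dampedCalibration (hd : 1 ≤ d) (hμ : 0 < μ) {X : ℝ} (hX : 0 ≤ X) :
    IsCalibration (dampedCalibration d μ X) where
  continuous := (isCalibration_capCalibration d hX).continuous.mul
    (continuous_const.sub (continuous_damping hd hμ))
  nonneg x := mul_nonneg ((isCalibration_capCalibration d hX).nonneg x)
    (sub_nonneg.2 (damping_le_one hd hμ x))
  le_one x := mul_le_one₀ ((isCalibration_capCalibration d hX).le_one x)
    (sub_nonneg.2 (damping_le_one hd hμ x)) (sub_le_self _ (damping_nonneg d hμ x))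

lemma integral_capCalibration_sub_le (hd : 1 ≤ d) (hμ : 0 < μ) {X : ℝ} (hX : μ ≤ X) :
    (∫ x in 0..X, capCalibration d X x) - ballPerimeter d μ * ballRadius d X ≤
      ∫ x in μ..X, dampedCalibration d μ X x := by
  have h_cap := isCalibration_capCalibration d (hμ.le.trans hX)
  have h_int (a b : ℝ) : IntervalIntegrable (capCalibration d X) volume a b :=
    h_cap.continuous.intervalIntegrable _ _
  have h_int_damping := (continuous_damping hd hμ).intervalIntegrable (μ := volume) μ X
  have h_low : ∫ x in 0..μ, capCalibration d X x ≤ d * μ := by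
    have h_one := intervalIntegral.integral_mono_on hμ.le (h_int 0 μ)
      (intervalIntegrable_const (c := (1 : ℝ))) fun x _ => h_cap.le_one x
    rw [intervalIntegral.integral_const, smul_eq_mul, mul_one, sub_zero] at h_one
    exact h_one.trans (le_mul_of_one_le_left hμ.le (by exact_mod_cast hd))
  have h_high : ∫ x in μ..X, (capCalibration d X x - damping d μ x) ≤
      ∫ x in μ..X, dampedCalibration d μ X x := by
    refine intervalIntegral.integral_mono_on hX ((h_int μ X).sub h_int_damping)
      ((isCalibration_dampedCalibration hd hμ (hμ.le.trans hX)).continuous.intervalIntegrable _ _)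
      fun x _ => ?_
    unfold dampedCalibration
    nlinarith [damping_nonneg d hμ x, h_cap.le_one x]
  rw [intervalIntegral.integral_sub (h_int μ X) h_int_damping, integral_damping hd hμ hX] at h_high
  linarith [intervalIntegral.integral_add_adjacent_intervals (h_int 0 μ) (h_int μ X)]

end Damping

lemma add_mul_le_sqrt_of_le_half {α w : ℝ} (hα0 : 0 ≤ α) (hα : α ≤ 1 / 2) (hw0 : 0 ≤ w)
    (hw1 : w ≤ 1) : α + 3 / 8 * w ≤ √(1 - (1 - α ^ 2) * (1 - w) ^ 2) := by
  have h_linear : α * w ≤ 1 / 2 * w := mul_le_mul_of_nonneg_right hα hw0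
  have h_sq : w ^ 2 ≤ w := by nlinarith
  have h_gain : 3 / 4 * w ≤ (1 - α ^ 2) * (2 * w - w ^ 2) :=
    mul_le_mul (by nlinarith) (by linarith) hw0 (by nlinarith)
  exact Real.le_sqrt_of_sq_le (by nlinarith)

lemma add_mul_one_sub_pow_le_sqrt (d : ℕ) {α w : ℝ} (hα0 : 0 ≤ α) (hα1 : α ≤ 1) (hw0 : 0 ≤ w)
    (hw1 : w ≤ 1) :
    α + 3 / 8 * w * (1 - (2 * α) ^ d) ≤ √(1 - (1 - α ^ 2) * (1 - w) ^ 2) := by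
  rcases le_total α (1 / 2) with hα | hα
  · refine le_trans ?_ (add_mul_le_sqrt_of_le_half hα0 hα hw0 hw1)
    have : 0 ≤ (2 * α) ^ d := by positivity
    exact add_le_add_right (mul_le_of_le_one_right (by positivity) (by linarith)) _
  · have h_one_le : 1 ≤ (2 * α) ^ d := one_le_pow₀ (by linarith)
    have h_nonpos : 3 / 8 * w * (1 - (2 * α) ^ d) ≤ 0 :=
      mul_nonpos_of_nonneg_of_nonpos (by positivity) (by linarith)
    have h_sq : (1 - α ^ 2) * (1 - w) ^ 2 ≤ 1 - α ^ 2 :=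
      mul_le_of_le_one_right (by nlinarith) (pow_le_one₀ (by linarith) (by linarith))
    exact (by linarith : _ ≤ α).trans (Real.le_sqrt_of_sq_le (by linarith))

lemma ballRadius_div_ballRadius_pow {d : ℕ} (hd : 1 ≤ d) {x X : ℝ} (hx : 0 ≤ x) (hX : 0 ≤ X) :
    (ballRadius d x / ballRadius d X) ^ d = x / X := by
  have hd0 : (d : ℝ) ≠ 0 := by positivity
  rw [ballRadius_div_ballRadius hx hX, ← Real.rpow_natCast, ← rpow_mul (div_nonneg hx hX),
    one_div_mul_cancel hd0, Real.rpow_one]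

lemma le_sqrt_dampedCalibration_mul_ballPerimeter {d : ℕ} (hd : 1 ≤ d) {μ x X : ℝ} (hμ : 0 < μ)
    (hx : x ∈ Set.Icc μ X) :
    d / ballRadius d X * x + 3 / 8 * ballPerimeter d μ * (1 - 2 ^ d / X * x) ≤
      √(1 - dampedCalibration d μ X x ^ 2) * ballPerimeter d x := by
  have hx0 : 0 < x := hμ.trans_le hx.1
  have hX : 0 < X := hx0.trans_le hx.2
  set α := ballRadius d x / ballRadius d X with hα
  have hα0 : 0 ≤ α := div_nonneg (ballRadius_nonneg hx0.le) (ballRadius_nonneg hX.le)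
  have hα1 : α ≤ 1 := div_le_one_of_le₀ (ballRadius_le_ballRadius d hx0.le hx.2)
    (ballRadius_nonneg hX.le)
  have h_pow : (2 * α) ^ d = 2 ^ d / X * x := by
    rw [mul_pow, ballRadius_div_ballRadius_pow hd hx0.le hX.le]; ring
  have h_sq : capCalibration d X x ^ 2 = 1 - α ^ 2 := by
    have h_nonneg : 0 ≤ 1 - capCalibration d X x ^ 2 := by
      have h_cap := isCalibration_capCalibration d hX.le
      linarith [pow_le_one₀ (n := 2) (h_cap.nonneg x) (h_cap.le_one x)]
    rw [hα, ← sqrt_one_sub_capCalibration_sq hX hx0.le hx.2, Real.sq_sqrt h_nonneg, sub_sub_self]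
  have h_le := mul_le_mul_of_nonneg_right (add_mul_one_sub_pow_le_sqrt d hα0 hα1
    (damping_nonneg d hμ x) (damping_le_one hd hμ x)) (ballPerimeter_nonneg d hx0.le)
  rw [h_pow, ← h_sq, ← mul_pow] at h_le
  refine le_trans (le_of_eq ?_) h_le
  rw [← ballRadius_div_mul_ballPerimeter X hx0.le, ← damping_mul_ballPerimeter hd hμ hx.1]
  ring

namespace IsSliceProfile
variable {d : ℕ} {ℓ : ℝ} {h m : ℝ → ℝ} {μ X v c : ℝ}

lemma ballPerimeter_succ_le (hd : 1 ≤ d) (hm : IsSliceProfile ℓ h m μ X v c) (hℓ : 0 < ℓ)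
    (hv : 0 < v) (hh : ∀ x, 0 ≤ x → x ≤ X → ballPerimeter d x ≤ h x)
    (h_radius : ballRadius d X ≤ 3 * ℓ / 32) (h_max : 2 ^ d * v ≤ ℓ / 2 * X) :
    ballPerimeter (d + 1) v ≤ c := by
  rcases hm.min_nonneg.eq_or_lt with rfl | hμ
  · exact hm.ballPerimeter_succ_le_of_min_eq_zero hd hv hh
  have hX : 0 < X := hm.max_pos hv
  have hR : 0 < ballRadius d X := ballRadius_pos hX
  have hP : 0 < ballPerimeter d μ := ballPerimeter_pos hd hμ
  have h_finite := isFiniteMeasure_coordMeasure hℓ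
  set q : ℝ → ℝ := fun t =>
    d / ballRadius d X * m t + 3 / 8 * ballPerimeter d μ * (1 - 2 ^ d / X * m t)
  have hq_int₁ := hm.integrable.const_mul (d / ballRadius d X)
  have hq_int₂ : Integrable (fun t => 1 - 2 ^ d / X * m t) (coordMeasure ℓ) :=
    (integrable_const _).sub (hm.integrable.const_mul _)
  have hq_integral : ∫ t, q t ∂coordMeasure ℓ =
      d * v / ballRadius d X + 3 / 8 * ballPerimeter d μ * (ℓ - 2 ^ d * v / X) := by
    rw [integral_add hq_int₁ (hq_int₂.const_mul _), integral_const_mul,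
      integral_const_mul, integral_sub (integrable_const _) (hm.integrable.const_mul _),
      integral_const_mul, hm.integral_eq hv.le, integral_const, coordMeasure_real_univ hℓ,
      smul_eq_mul]
    ring
  have h_half : ℓ / 2 ≤ ℓ - 2 ^ d * v / X := by linarith [(div_le_iff₀ hX).2 h_max]
  have hq_ge : d * v / ballRadius d X + 3 / 8 * ballPerimeter d μ * (ℓ / 2) ≤
      ∫ t, q t ∂coordMeasure ℓ := by
    rw [hq_integral]
    gcongr
  have h_cost := hm.integral_add_le (isCalibration_dampedCalibration hd hμ hX.le) (q := q)
    (hq_int₁.add (hq_int₂.const_mul _)) (le_trans (by positivity) hq_ge)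
    (hm.ae_mem_Icc.mono fun t ht => (le_sqrt_dampedCalibration_mul_ballPerimeter hd hμ ht).trans
      (mul_le_mul_of_nonneg_left (hh _ (hm.nonneg t) ht.2) (Real.sqrt_nonneg _)))
  have h_loss : 2 * (ballPerimeter d μ * ballRadius d X) ≤ 3 / 8 * ballPerimeter d μ * (ℓ / 2) := by
    nlinarith
  have h_ball := _root_.ballPerimeter_succ_le d hv hR
  rw [← two_mul_integral_capCalibration hd hX] at h_ball
  linarith [integral_capCalibration_sub_le hd hμ hm.min_le_max]

lemma max_le (hm : IsSliceProfile ℓ h m μ X v c) (hℓ : 0 < ℓ) (hv : 0 ≤ v) : X ≤ v / ℓ + c / 2 := by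
  have hμ : μ ≤ v / ℓ := (le_div_iff₀' hℓ).2 (hm.le_volume hℓ hv)
  linarith [hm.two_mul_sub_le]

lemma mul_div_ballRadius_le (hm : IsSliceProfile ℓ h m μ X v c) (hv : 0 < v)
    (hh : ∀ x, 0 ≤ x → x ≤ X → ballPerimeter d x ≤ h x) : d * v / ballRadius d X ≤ c := by
  have hX : 0 < X := hm.max_pos hv
  have h_integral : ∫ t, d / ballRadius d X * m t ∂coordMeasure ℓ = d * v / ballRadius d X := by
    rw [integral_const_mul, hm.integral_eq hv.le, div_mul_eq_mul_div]
  have h_cost := hm.integral_add_le (σ := fun _ => 0) (q := fun t => d / ballRadius d X * m t)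
    ⟨continuous_const, fun _ => le_rfl, fun _ => zero_le_one⟩ (hm.integrable.const_mul _)
    (by rw [h_integral]; exact div_nonneg (by positivity) (ballRadius_pos hX).le)
    (hm.ae_mem_Icc.mono fun t ht => ?_)
  · rwa [h_integral, intervalIntegral.integral_zero, mul_zero, add_zero] at h_cost
  · have h_nonneg := hm.nonneg t
    rw [zero_pow two_ne_zero, sub_zero, Real.sqrt_one, one_mul, ← ballRadius_div_mul_ballPerimeter X
      h_nonneg]
    refine (mul_le_of_le_one_left (ballPerimeter_nonneg d h_nonneg) ?_).trans (hh _ h_nonneg ht.2)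
    exact div_le_one_of_le₀ (ballRadius_le_ballRadius d h_nonneg ht.2) (ballRadius_nonneg hX.le)

lemma ballPerimeter_succ_le_of_small (hd : 1 ≤ d) (hm : IsSliceProfile ℓ h m μ X v c) (hℓ : 0 < ℓ)
    (hv : 0 < v) {b : ℝ} (hh : ∀ x, 0 ≤ x → x ≤ b → ballPerimeter d x ≤ h x)
    (h_radius : ballRadius d b ≤ 3 * ℓ / 32) (hb : v / ℓ + ballPerimeter (d + 1) v / 2 ≤ b)
    (h_small : 2 ^ d * v ≤ ℓ / 2 * (ballVolume d * (ballRadius (d + 1) v / 2) ^ d)) :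
    ballPerimeter (d + 1) v ≤ c := by
  by_contra! hc
  have hX : 0 < X := hm.max_pos hv
  have hXb : X ≤ b := by linarith [hm.max_le hℓ hv.le]
  have hhX : ∀ x, 0 ≤ x → x ≤ X → ballPerimeter d x ≤ h x := fun x hx hxX => hh x hx (hxX.trans hXb)
  have h_half : ballRadius (d + 1) v / 2 ≤ ballRadius d X := by
    have h_lt := (hm.mul_div_ballRadius_le hv hhX).trans_lt hc
    rw [ballPerimeter, div_lt_div_iff₀ (ballRadius_pos hX) (ballRadius_pos hv)] at h_lt
    have hd1 : (1 : ℝ) ≤ d := by exact_mod_cast hd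
    have h_lt' : d * ballRadius (d + 1) v < (d + 1) * ballRadius d X := by
      refine lt_of_mul_lt_mul_left (a := v) ?_ hv.le
      push_cast at h_lt
      linarith
    nlinarith [ballRadius_pos (d := d) hX]
  have h_vol : ballVolume d * (ballRadius (d + 1) v / 2) ^ d ≤ X := by
    rw [← ballVolume_mul_ballRadius_pow hd hX.le]
    exact mul_le_mul_of_nonneg_left (pow_le_pow_left₀ (half_pos (ballRadius_pos hv)).le h_half d)
      (ballVolume_pos d).le
  exact hc.not_ge (hm.ballPerimeter_succ_le hd hℓ hv hhX
    ((ballRadius_le_ballRadius d hX.le hXb).trans h_radius)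
    (h_small.trans (mul_le_mul_of_nonneg_left h_vol (by positivity))))

end IsSliceProfile

open Filter Topology in
lemma tendsto_ballRadius_nhdsGT_zero {d : ℕ} (hd : 1 ≤ d) :
    Tendsto (ballRadius d) (𝓝[>] 0) (𝓝 0) := by
  have h_cont : ContinuousAt (ballRadius d) 0 :=
    (continuousAt_id.div_const _).rpow_const (Or.inr (by positivity))
  have h_zero : ballRadius d 0 = 0 := by
    rw [ballRadius, zero_div, Real.zero_rpow (by positivity)]
  exact (h_zero ▸ h_cont.tendsto).mono_left nhdsWithin_le_nhds

open Filter Topology in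
lemma tendsto_ballPerimeter_nhdsGT_zero {d : ℕ} (hd : 1 ≤ d) :
    Tendsto (ballPerimeter (d + 1)) (𝓝[>] 0) (𝓝 0) := by
  have h_pow := ((tendsto_ballRadius_nhdsGT_zero d.succ_pos).pow d).const_mul
    ((d + 1) * ballVolume (d + 1))
  rw [zero_pow (by lia), mul_zero] at h_pow
  exact h_pow.congr' (eventually_mem_nhdsWithin.mono fun v hv =>
    (ballPerimeter_eq_mul_ballRadius_pow hv).symm)

open Filter Topology in
lemma eventually_two_pow_mul_le {d : ℕ} {ℓ : ℝ} (hℓ : 0 < ℓ) : ∀ᶠ v in 𝓝[>] (0 : ℝ),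
    2 ^ d * v ≤ ℓ / 2 * (ballVolume d * (ballRadius (d + 1) v / 2) ^ d) := by
  have h_tendsto := (tendsto_ballRadius_nhdsGT_zero d.succ_pos).const_mul
    (4 ^ d * ballVolume (d + 1))
  rw [mul_zero] at h_tendsto
  filter_upwards [h_tendsto.eventually_le_const (u := ℓ / 2 * ballVolume d)
    (mul_pos (half_pos hℓ) (ballVolume_pos d)), self_mem_nhdsWithin] with v h_le (hv : 0 < v)
  set r := ballRadius (d + 1) v
  have hr : 0 < r := ballRadius_pos hv
  have h_four : (4 : ℝ) ^ d = 2 ^ d * 2 ^ d := by rw [← mul_pow]; norm_num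
  calc 2 ^ d * v = 4 ^ d * ballVolume (d + 1) * r * (r / 2) ^ d := by
        conv_lhs => rw [← ballVolume_mul_ballRadius_pow (d := d + 1) (by lia) hv.le]
        rw [h_four, div_pow, pow_succ]
        field_simp
        ring
    _ ≤ ℓ / 2 * ballVolume d * (r / 2) ^ d := by gcongr
    _ = ℓ / 2 * (ballVolume d * (r / 2) ^ d) := mul_assoc _ _ _

open Filter Topology in
lemma perimeterAtLeast_small_vecCons {d : ℕ} (hd : 1 ≤ d) {ℓ : ℝ} (hℓ : 0 < ℓ) {L : Fin d → ℝ}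
    (h : ∃ a > 0, ∀ v, 0 ≤ v → v ≤ a → PerimeterAtLeast L v (ballPerimeter d v)) :
    ∃ a > 0, ∀ v, 0 ≤ v → v ≤ a →
      PerimeterAtLeast (vecCons ℓ L) v (ballPerimeter (d + 1) v) := by
  obtain ⟨a, ha, h⟩ := h
  obtain ⟨b, h_radius, hba, hb⟩ : ∃ b, ballRadius d b ≤ 3 * ℓ / 32 ∧ b ≤ a ∧ 0 < b :=
    (((tendsto_ballRadius_nhdsGT_zero hd).eventually_le_const (by positivity)).and
      ((eventually_nhdsWithin_of_eventually_nhds (eventually_le_nhds ha)).and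
        self_mem_nhdsWithin)).exists
  have h_sum : Tendsto (fun v : ℝ => v / ℓ + ballPerimeter (d + 1) v / 2) (𝓝[>] 0) (𝓝 0) := by
    simpa using ((tendsto_id.mono_left nhdsWithin_le_nhds).div_const ℓ).add
      ((tendsto_ballPerimeter_nhdsGT_zero hd).div_const 2)
  obtain ⟨a', ha', h_small⟩ := mem_nhdsGT_iff_exists_Ioc_subset.1
    ((h_sum.eventually_le_const hb).and (eventually_two_pow_mul_le (d := d) hℓ))
  refine ⟨a', ha', fun v hv0 hva => ?_⟩
  rcases hv0.eq_or_lt with rfl | hv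
  · exact perimeterAtLeast_of_nonpos _ _ (ballPerimeter_zero _).le
  classical
  refine perimeterAtLeast_vecCons hℓ.le (h := fun x => if x ≤ a then ballPerimeter d x else 0)
    (fun x hx => ?_) fun m μ X c hm => hm.ballPerimeter_succ_le_of_small hd hℓ hv (b := b)
      (fun x _ hxb => by rw [if_pos (hxb.trans hba)]) h_radius (h_small ⟨hv, hva⟩).1
      (h_small ⟨hv, hva⟩).2
  split_ifs with hxa
  · exact h x hx hxa
  · exact perimeterAtLeast_of_nonpos _ _ le_rfl

section CircleProducts
variable {n : ℕ} {ℓ₁ ℓ₂ ℓ₃ : ℝ}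

lemma perimeterAtLeast_small_one (hn : 1 ≤ n) (h₁ : 0 < ℓ₁) :
    ∃ a > 0, ∀ v, 0 ≤ v → v ≤ a →
      PerimeterAtLeast (vecCons ℓ₁ (0 : Fin n → ℝ)) v (ballPerimeter (n + 1) v) :=
  perimeterAtLeast_small_vecCons hn h₁
    ⟨1, one_pos, fun _ hv _ => perimeterAtLeast_euclidean hn hv⟩

lemma perimeterAtLeast_small_three (hn : 1 ≤ n) (h₁ : 0 < ℓ₁) (h₂ : 0 < ℓ₂) (h₃ : 0 < ℓ₃) :
    ∃ a > 0, ∀ v, 0 ≤ v → v ≤ a →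
      PerimeterAtLeast (vecCons ℓ₁ (vecCons ℓ₂ (vecCons ℓ₃ (0 : Fin n → ℝ)))) v
        (ballPerimeter (n + 3) v) :=
  perimeterAtLeast_small_vecCons (by lia) h₁
    (perimeterAtLeast_small_vecCons (by lia) h₂ (perimeterAtLeast_small_one hn h₃))

lemma perimeterAtLeast_large_three (hn : 1 ≤ n) (h₁ : 0 < ℓ₁) (h₂ : 0 < ℓ₂) (h₃ : 0 < ℓ₃) :
    ∃ x₀, ∀ x, x₀ ≤ x →
      PerimeterAtLeast (vecCons ℓ₁ (vecCons ℓ₂ (vecCons ℓ₃ (0 : Fin n → ℝ))))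
        (ℓ₁ * ℓ₂ * ℓ₃ * x) (ℓ₁ * ℓ₂ * ℓ₃ * ballPerimeter n x) := by
  have hn1 : (1 : ℝ) ≤ n := by exact_mod_cast hn
  have hK : 0 < n * ballVolume n ^ ((1 : ℝ) / n) :=
    mul_pos (by positivity) (rpow_pos_of_pos (ballVolume_pos n) _)
  have hp0 : 0 ≤ 1 - (1 : ℝ) / n := sub_nonneg.2 (div_le_one_of_le₀ hn1 (by positivity))
  have hp1 : 1 - (1 : ℝ) / n < 1 := sub_lt_self _ (by positivity)
  have h_euclidean : ∃ x₀, ∀ x, x₀ ≤ x → PerimeterAtLeast (0 : Fin n → ℝ) (1 * x)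
      (1 * (n * ballVolume n ^ ((1 : ℝ) / n) * x ^ (1 - (1 : ℝ) / n))) := by
    refine ⟨1, fun x hx => ?_⟩
    rw [one_mul, one_mul, ← ballPerimeter_eq n (by linarith)]
    exact perimeterAtLeast_euclidean hn (by linarith)
  obtain ⟨x₀, h⟩ := perimeterAtLeast_large_vecCons h₁ (by positivity) hK hp0 hp1
    (perimeterAtLeast_large_vecCons h₂ (by positivity) hK hp0 hp1
      (perimeterAtLeast_large_vecCons h₃ one_pos hK hp0 hp1 h_euclidean))
  refine ⟨max x₀ 1, fun x hx => ?_⟩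
  rw [ballPerimeter_eq n (by linarith [le_max_right x₀ 1])]
  simpa only [mul_one, mul_assoc] using h x ((le_max_left _ _).trans hx)

end CircleProducts

/-! ### Hausdorff measure and tubes -/

section Hausdorff
variable {X Y : Type*} [EMetricSpace X] [MeasurableSpace X] [BorelSpace X]
  [EMetricSpace Y] [MeasurableSpace Y] [BorelSpace Y] {f : X → Y} {s : Set X}

lemma euclideanHausdorffMeasure_image_le_of_lipschitzOnWith {K : ℝ≥0} (hf : LipschitzOnWith K f s)
    (d : ℕ) : μHE[d] (f '' s) ≤ (K : ℝ≥0∞) ^ d * μHE[d] s := by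
  have h_image := hf.hausdorffMeasure_image_le (d := d) (Nat.cast_nonneg d)
  rw [ENNReal.rpow_natCast] at h_image
  simp only [Measure.euclideanHausdorffMeasure_def, Measure.smul_apply, ENNReal.smul_def,
    smul_eq_mul]
  rw [mul_left_comm]
  gcongr

lemma euclideanHausdorffMeasure_image_of_edist_eq (d : ℕ)
    (hf : ∀ x ∈ s, ∀ y ∈ s, edist (f x) (f y) = edist x y) : μHE[d] (f '' s) = μHE[d] s := by
  have h_isometry : Isometry (s.domRestrict f) := fun x y => hf x x.2 y y.2
  have h_image := h_isometry.euclideanHausdorffMeasure_image (d := d) Set.univ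
  have h_coe := (isometry_subtype_coe (s := s)).euclideanHausdorffMeasure_image (d := d) Set.univ
  rw [Set.image_univ] at h_image h_coe
  rw [Set.range_domRestrict] at h_image
  rw [Subtype.range_coe] at h_coe
  rw [h_image, h_coe]

end Hausdorff

/-- The set swept out by `K` when it is translated by at most `τ` in the direction `-ν`. -/
def tube {V : Type*} [AddCommGroup V] [Module ℝ V] (ν : V) (τ : ℝ) (K : Set V) : Set V :=
  {y | ∃ s ∈ Set.Icc 0 τ, y + s • ν ∈ K}

lemma mem_tube_frontier {V : Type*} [NormedAddCommGroup V] [NormedSpace ℝ V] {S : Set V}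
    {y ν : V} {τ : ℝ} (hτ : 0 ≤ τ) (h_notMem : y ∉ S) (h_mem : y + τ • ν ∈ S) :
    y ∈ tube ν τ (frontier S) := by
  by_contra h_tube
  have h_segment : IsPreconnected ((fun s : ℝ => y + s • ν) '' Set.Icc 0 τ) :=
    isPreconnected_Icc.image _ (by fun_prop)
  have h_cover : (fun s : ℝ => y + s • ν) '' Set.Icc 0 τ ⊆ interior S ∪ interior Sᶜ := by
    rintro _ ⟨s, hs, rfl⟩
    rw [interior_compl]
    by_contra h
    rw [Set.mem_union, Set.mem_compl_iff, not_or, not_not] at h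
    exact h_tube ⟨s, hs, h.2, h.1⟩
  have h_disjoint : Disjoint (interior S) (interior Sᶜ) :=
    disjoint_compl_right.mono interior_subset interior_subset
  rcases h_segment.subset_or_subset isOpen_interior isOpen_interior h_disjoint h_cover with h | h
  · exact h_notMem (interior_subset (h ⟨0, ⟨le_rfl, hτ⟩, by simp⟩))
  · exact interior_subset (h ⟨τ, ⟨hτ, le_rfl⟩, rfl⟩) h_mem

section Tube
variable {V : Type*} [NormedAddCommGroup V] [InnerProductSpace ℝ V] {ν : V}

lemma abs_inner_sub_inner_le_dist (hν : ‖ν‖ = 1) (x y : V) :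
    |inner ℝ ν x - inner ℝ ν y| ≤ dist x y := by
  simpa [inner_sub_right, hν, dist_eq_norm] using abs_real_inner_le_norm ν (x - y)

lemma exists_forall_inner_mem_Icc (hν : ‖ν‖ = 1) {A : Set V} {η : ℝ}
    (hA : ∀ x ∈ A, ∀ y ∈ A, dist x y ≤ η) : ∃ c, ∀ x ∈ A, inner ℝ ν x ∈ Set.Icc c (c + η) := by
  rcases A.eq_empty_or_nonempty with rfl | ⟨p, hp⟩
  · simp
  have h_dist : ∀ x ∈ A, ∀ y ∈ A, inner ℝ ν x - η ≤ inner ℝ ν y := fun x hx y hy => by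
    linarith [le_of_abs_le (abs_inner_sub_inner_le_dist hν x y), hA x hx y hy]
  have h_bdd : BddBelow ((fun x => inner ℝ ν x) '' A) :=
    ⟨inner ℝ ν p - η, Set.forall_mem_image.2 (h_dist p hp)⟩
  refine ⟨sInf ((fun x => inner ℝ ν x) '' A), fun x hx => ⟨csInf_le h_bdd ⟨x, hx, rfl⟩, ?_⟩⟩
  rw [← sub_le_iff_le_add]
  exact le_csInf ⟨_, p, hp, rfl⟩ (Set.forall_mem_image.2 (h_dist x hx))

lemma tube_subset_slab (hν : ‖ν‖ = 1) {A : Set V} {τ c η : ℝ}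
    (hA : ∀ x ∈ A, inner ℝ ν x ∈ Set.Icc c (c + η)) :
    tube ν τ A ⊆ {y | inner ℝ ν y ∈ Set.Icc (c - τ) (c + η) ∧
      (ℝ ∙ ν)ᗮ.orthogonalProjectionOnto y ∈ (ℝ ∙ ν)ᗮ.orthogonalProjectionOnto '' A} := by
  rintro y ⟨s, ⟨hs0, hsτ⟩, hy⟩
  have h_inner := hA _ hy
  rw [inner_add_right, inner_smul_right, real_inner_self_eq_norm_sq, hν, one_pow, mul_one]
    at h_inner
  refine ⟨⟨by linarith [h_inner.1], by linarith [h_inner.2]⟩, _, hy, ?_⟩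
  rw [map_add, map_smul, Submodule.orthogonalProjectionOnto_orthogonalComplement_singleton_eq_zero,
    smul_zero, add_zero]

lemma indicator_tube_le_indicator_tube_inter (hν : ‖ν‖ = 1) {τ ρ : ℝ} {F : V → ℝ≥0∞}
    (hF : Function.support F ⊆ Metric.closedBall 0 ρ) (K : Set V) :
    (tube ν τ K).indicator F ≤ (tube ν τ (K ∩ Metric.closedBall 0 (ρ + τ))).indicator F := by
  refine Set.indicator_le' (fun y ⟨s, hs, hy⟩ => ?_) fun _ _ => zero_le
  by_cases hFy : F y = 0
  · simp [hFy]
  have hyρ : ‖y‖ ≤ ρ := by simpa using hF hFy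
  have hsν : ‖s • ν‖ ≤ τ := by
    rw [norm_smul, hν, mul_one, Real.norm_eq_abs, abs_of_nonneg hs.1]; exact hs.2
  have h_mem : y + s • ν ∈ Metric.closedBall (0 : V) (ρ + τ) := by
    rw [mem_closedBall_zero_iff]
    exact norm_add_le_of_le hyρ hsν
  have h_tube : y ∈ tube ν τ (K ∩ Metric.closedBall 0 (ρ + τ)) := ⟨s, hs, hy, h_mem⟩
  rw [Set.indicator_of_mem h_tube]

variable [MeasurableSpace V] [BorelSpace V] [FiniteDimensional ℝ V]

open Module

lemma volume_slab (hν : ‖ν‖ = 1) (a b : ℝ) (P : Set (ℝ ∙ ν)ᗮ) :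
    volume {y : V | inner ℝ ν y ∈ Set.Icc a b ∧ (ℝ ∙ ν)ᗮ.orthogonalProjectionOnto y ∈ P} =
      ENNReal.ofReal (b - a) * volume P := by
  let e := LinearIsometryEquiv.toSpanUnitSingleton (𝕜 := ℝ) ν hν
  have h_Icc : volume (e.symm ⁻¹' (Set.Icc a b)) = ENNReal.ofReal (b - a) := by
    rw [e.symm.measurePreserving.measure_preimage measurableSet_Icc.nullMeasurableSet,
      Real.volume_Icc]
  have h_prod := (ℝ ∙ ν).measurePreserving_measurableEquivProd (0 : V)
  rw [InnerProductSpace.euclideanHausdorffMeasure_eq_volume] at h_prod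
  have h_preimage := h_prod.measure_preimage_equiv ((e.symm ⁻¹' (Set.Icc a b)) ×ˢ P)
  rw [Measure.volume_eq_prod, Measure.prod_prod, h_Icc] at h_preimage
  rw [← h_preimage]
  congr 1
  ext y
  have h_symm : e.symm ((ℝ ∙ ν).orthogonalProjectionOnto y) = inner ℝ ν y := by
    rw [e.symm_apply_eq]
    exact Subtype.ext (Submodule.starProjection_unit_singleton ℝ hν y)
  simp only [Set.mem_ofPred_eq, Set.mem_preimage, Set.mem_prod,
    Submodule.measurableEquivProd_apply, vsub_eq_sub, sub_zero]
  rw [h_symm]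

lemma volume_tube_le {d : ℕ} (hd : finrank ℝ V = d + 1) (hν : ‖ν‖ = 1) {A : Set V} {τ η : ℝ}
    (hA : ∀ x ∈ A, ∀ y ∈ A, dist x y ≤ η) :
    volume (tube ν τ A) ≤ ENNReal.ofReal (τ + η) * μHE[d] A := by
  have : Fact (finrank ℝ V = d + 1) := ⟨hd⟩
  have h_finrank : finrank ℝ (ℝ ∙ ν)ᗮ = d :=
    Submodule.finrank_orthogonal_span_singleton (n := d) (norm_ne_zero_iff.1 (by simp [hν]))
  obtain ⟨c, hc⟩ := exists_forall_inner_mem_Icc hν hA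
  refine (measure_mono (tube_subset_slab hν hc)).trans ?_
  rw [volume_slab hν, add_sub_sub_cancel, add_comm η]
  gcongr
  rw [← InnerProductSpace.euclideanHausdorffMeasure_eq_volume, h_finrank]
  simpa using euclideanHausdorffMeasure_image_le_of_lipschitzOnWith
    ((ℝ ∙ ν)ᗮ.lipschitzWith_orthogonalProjectionOnto.lipschitzOnWith (s := A)) d

lemma lintegral_indicator_tube_le {d : ℕ} (hd : finrank ℝ V = d + 1) (hν : ‖ν‖ = 1) {K : Set V}
    (hK : MeasurableSet K) {F : V → ℝ≥0∞} {δ τ : ℝ} (hδ : 0 < δ) (hτ : 0 < τ)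
    (hF : ∀ x y, dist y x ≤ (1 + δ) * τ → F y ≤ F x + ENNReal.ofReal δ) :
    ∫⁻ y, (tube ν τ K).indicator F y ≤
      ENNReal.ofReal ((1 + δ) * τ) * (∫⁻ x in K, F x ∂μHE[d] + ENNReal.ofReal δ * μHE[d] K) := by
  obtain ⟨D, hD_meas, hD_bdd, hD_diam, hD_union, hD_disj⟩ :=
    SeparableSpace.exists_measurable_partition_diam_le V (mul_pos hδ hτ)
  set A : ℕ → Set V := fun j => K ∩ D j
  have hA_meas (j : ℕ) : MeasurableSet (A j) := hK.inter (hD_meas j)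
  have hA_dist (j : ℕ) : ∀ x ∈ A j, ∀ y ∈ A j, dist x y ≤ δ * τ := fun x hx y hy =>
    (Metric.dist_le_diam_of_mem (hD_bdd j) hx.2 hy.2).trans (hD_diam j)
  have hA_union : ⋃ j, A j = K := by rw [← Set.inter_iUnion, hD_union, Set.inter_univ]
  have hA_disj : Pairwise (Function.onFun Disjoint A) := fun i j hij =>
    (hD_disj hij).mono Set.inter_subset_right Set.inter_subset_right
  set m : ℕ → ℝ≥0∞ := fun j => ⨅ x ∈ A j, (F x + ENNReal.ofReal δ)
  have h_pointwise : (tube ν τ K).indicator F ≤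
      fun y => ∑' j, (toMeasurable volume (tube ν τ (A j))).indicator (fun _ => m j) y := by
    refine Set.indicator_le' (fun y hy => ?_) fun _ _ => zero_le
    obtain ⟨s, hs, hsK⟩ := hy
    obtain ⟨j, hj⟩ := Set.mem_iUnion.1 (hA_union ▸ hsK)
    refine le_trans ?_ (ENNReal.le_tsum j)
    rw [Set.indicator_of_mem (subset_toMeasurable _ _ (show y ∈ tube ν τ (A j) from ⟨s, hs, hj⟩))]
    refine le_iInf₂ fun x hx => hF x y ?_
    have h_step : dist y (y + s • ν) ≤ τ := by
      rw [dist_self_add_right, norm_smul, hν, mul_one, Real.norm_eq_abs, abs_of_nonneg hs.1]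
      exact hs.2
    linarith [dist_triangle y (y + s • ν) x, hA_dist j _ hj _ hx]
  calc ∫⁻ y, (tube ν τ K).indicator F y ≤ ∑' j, m j * volume (tube ν τ (A j)) := by
        refine (lintegral_mono h_pointwise).trans_eq ?_
        rw [lintegral_tsum fun j => (measurable_const.indicator
          (measurableSet_toMeasurable _ _)).aemeasurable]
        congr 1 with j
        rw [lintegral_indicator_const (measurableSet_toMeasurable _ _), measure_toMeasurable]
    _ ≤ ∑' j, ENNReal.ofReal ((1 + δ) * τ) * ∫⁻ x in A j, (F x + ENNReal.ofReal δ) ∂μHE[d] := by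
        refine ENNReal.tsum_le_tsum fun j => ?_
        rw [one_add_mul]
        refine (mul_le_mul_right (volume_tube_le hd hν (hA_dist j)) _).trans ?_
        rw [mul_left_comm, ← setLIntegral_const]
        gcongr _ * ?_
        exact setLIntegral_mono' (hA_meas j) fun x hx => iInf₂_le x hx
    _ = _ := by
        rw [ENNReal.tsum_mul_left, ← lintegral_iUnion hA_meas hA_disj, hA_union,
          lintegral_add_right _ measurable_const, setLIntegral_const]

open Filter Topology in
lemma exists_pos_ofReal_one_add_mul_le {I H ε : ℝ≥0∞} (hI : I ≠ ∞) (hH : H ≠ ∞) (hε : ε ≠ 0) :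
    ∃ δ : ℝ, 0 < δ ∧ ENNReal.ofReal (1 + δ) * (I + ENNReal.ofReal δ * H) ≤ I + ε := by
  have h_ofReal (c : ℝ) :
      Tendsto (fun δ : ℝ => ENNReal.ofReal (c + δ)) (𝓝[>] 0) (𝓝 (ENNReal.ofReal c)) := by
    have h_tendsto : Tendsto (fun δ : ℝ => c + δ) (𝓝[>] 0) (𝓝 (c + 0)) :=
      tendsto_const_nhds.add nhdsWithin_le_nhds
    rw [add_zero] at h_tendsto
    exact ENNReal.tendsto_ofReal h_tendsto
  have h_tendsto := ENNReal.Tendsto.mul (h_ofReal 1) (Or.inl (by simp)) (tendsto_const_nhds.add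
    (ENNReal.Tendsto.mul_const (h_ofReal 0) (Or.inr hH)) (a := I)) (Or.inr (by simp))
  simp only [ENNReal.ofReal_one, ENNReal.ofReal_zero, one_mul, zero_mul, add_zero, zero_add]
    at h_tendsto
  obtain ⟨δ, h_le, hδ⟩ := ((h_tendsto.eventually_le_const (ENNReal.lt_add_right hI hε)).and
    self_mem_nhdsWithin).exists
  exact ⟨δ, hδ, h_le⟩

lemma exists_forall_lintegral_indicator_tube_le {d : ℕ} (hd : finrank ℝ V = d + 1) {K : Set V}
    (hK : MeasurableSet K) (hfin : ∀ ρ, μHE[d] (K ∩ Metric.closedBall 0 ρ) ≠ ∞)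
    {φ : V → ℝ} (hφ : Continuous φ) (hc : HasCompactSupport φ) {ε : ℝ≥0∞} (hε : ε ≠ 0) :
    ∃ τ₀ > 0, ∀ ν : V, ‖ν‖ = 1 → ∀ τ, 0 < τ → τ ≤ τ₀ →
      ∫⁻ y, (tube ν τ K).indicator (fun y => ENNReal.ofReal (φ y)) y ≤
        ENNReal.ofReal τ * (∫⁻ x in K, ENNReal.ofReal (φ x) ∂μHE[d] + ε) := by
  obtain ⟨ρ, hρ⟩ := hc.isCompact.isBounded.subset_closedBall (0 : V)
  obtain ⟨M, hM⟩ := hc.exists_bound_of_continuous hφ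
  set K' := K ∩ Metric.closedBall 0 (ρ + 1)
  have h_integral : ∫⁻ x in K', ENNReal.ofReal (φ x) ∂μHE[d] ≠ ∞ := by
    refine ne_top_of_le_ne_top (b := ENNReal.ofReal M * μHE[d] K')
      (ENNReal.mul_ne_top ENNReal.ofReal_ne_top (hfin _)) ?_
    rw [← setLIntegral_const]
    exact lintegral_mono fun x => ENNReal.ofReal_le_ofReal ((le_abs_self _).trans (hM x))
  obtain ⟨δ, hδ, h_le⟩ := exists_pos_ofReal_one_add_mul_le h_integral (hfin (ρ + 1)) hε
  obtain ⟨η, hη, h_unif⟩ := Metric.uniformContinuous_iff.1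
    (hc.uniformContinuous_of_continuous hφ) δ hδ
  refine ⟨min 1 (η / (2 * (1 + δ))), by positivity, fun ν hν τ hτ hτ_le => ?_⟩
  have hτ1 : τ ≤ 1 := hτ_le.trans (min_le_left _ _)
  have hτη : (1 + δ) * τ < η := by
    have := hτ_le.trans (min_le_right _ _)
    rw [le_div_iff₀ (by positivity)] at this
    linarith
  have h_osc (x y : V) (hyx : dist y x ≤ (1 + δ) * τ) :
      ENNReal.ofReal (φ y) ≤ ENNReal.ofReal (φ x) + ENNReal.ofReal δ := by
    refine (ENNReal.ofReal_le_ofReal ?_).trans ENNReal.ofReal_add_le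
    linarith [le_of_abs_le (h_unif (hyx.trans_lt hτη)).le]
  have h_support : Function.support (fun y => ENNReal.ofReal (φ y)) ⊆ Metric.closedBall 0 ρ :=
    fun y hy => hρ (subset_tsupport _ fun h_zero => hy (by simp [h_zero]))
  have h_subset : K ∩ Metric.closedBall 0 (ρ + τ) ⊆ K' :=
    Set.inter_subset_inter_right K (Metric.closedBall_subset_closedBall (by linarith))
  calc ∫⁻ y, (tube ν τ K).indicator (fun y => ENNReal.ofReal (φ y)) y
      ≤ ∫⁻ y, (tube ν τ K').indicator (fun y => ENNReal.ofReal (φ y)) y :=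
        lintegral_mono ((indicator_tube_le_indicator_tube_inter hν h_support K).trans
          (Set.indicator_le_indicator_of_subset (fun y ⟨s, hs, hy⟩ => ⟨s, hs, h_subset hy⟩)
            fun _ => zero_le))
    _ ≤ ENNReal.ofReal ((1 + δ) * τ) *
          (∫⁻ x in K', ENNReal.ofReal (φ x) ∂μHE[d] + ENNReal.ofReal δ * μHE[d] K') :=
        lintegral_indicator_tube_le hd hν (hK.inter Metric.isClosed_closedBall.measurableSet) hδ hτ
          h_osc
    _ ≤ ENNReal.ofReal τ * (∫⁻ x in K', ENNReal.ofReal (φ x) ∂μHE[d] + ε) := by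
        rw [mul_comm (1 + δ), ENNReal.ofReal_mul hτ.le, mul_assoc]
        gcongr
    _ ≤ _ := by
        gcongr
        exact Set.inter_subset_left

end Tube

/-! ### Mollification -/

section Mollify
variable {V : Type*} [NormedAddCommGroup V] [InnerProductSpace ℝ V]
    [MeasurableSpace V] [BorelSpace V] [FiniteDimensional ℝ V]

/-- Convolution of the indicator of a set with a normalized bump function. -/
def mollify (b : ContDiffBump (0 : V)) (S : Set V) (x : V) : ℝ :=
  ∫ y in S, b.normed volume (x - y)

variable (b : ContDiffBump (0 : V)) {S : Set V}

lemma contDiff_mollify (hS : MeasurableSet S) : ContDiff ℝ 1 (mollify b S) := by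
  have h_conv := b.hasCompactSupport_normed (μ := volume).contDiff_convolution_right (n := 1)
    (ContinuousLinearMap.lsmul ℝ ℝ) (μ := volume) (f := S.indicator fun _ => (1 : ℝ))
    ((locallyIntegrable_const 1).indicator hS) b.contDiff_normed
  refine (congrArg (ContDiff ℝ 1) (funext fun x => ?_)).mpr h_conv
  rw [mollify, convolution_lsmul, ← integral_indicator hS]
  congr 1 with y
  by_cases hy : y ∈ S <;> simp [hy]

lemma integrable_bump_sub (x : V) : Integrable fun y => b.normed volume (x - y) :=
  b.integrable_normed.comp_sub_left x

lemma continuous_bump_sub (x : V) : Continuous fun y => b.normed volume (x - y) :=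
  b.continuous_normed.comp (by fun_prop)

lemma ofReal_mollify (x : V) :
    ENNReal.ofReal (mollify b S x) = ∫⁻ y in S, ENNReal.ofReal (b.normed volume (x - y)) :=
  ofReal_integral_eq_lintegral_ofReal (integrable_bump_sub b x).restrict
    (ae_of_all _ fun _ => b.nonneg_normed _)

lemma lintegral_bump_sub (x : V) : ∫⁻ y, ENNReal.ofReal (b.normed volume (x - y)) = 1 := by
  rw [← ofReal_integral_eq_lintegral_ofReal (integrable_bump_sub b x)
    (ae_of_all _ fun _ => b.nonneg_normed _),
    integral_sub_left_eq_self (fun y => b.normed volume y) volume x, b.integral_normed,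
    ENNReal.ofReal_one]

lemma mollify_nonneg (x : V) : 0 ≤ mollify b S x :=
  integral_nonneg fun _ => b.nonneg_normed _

lemma mollify_le_one (x : V) : mollify b S x ≤ 1 := by
  rw [← ENNReal.ofReal_le_one, ofReal_mollify, ← lintegral_bump_sub b x]
  exact setLIntegral_le_lintegral _ _

lemma bump_sub_eq_zero {x y : V} (h : y ∉ Metric.ball x b.rOut) : b.normed volume (x - y) = 0 := by
  by_contra h_ne
  have h_support : x - y ∈ Function.support (b.normed volume) := h_ne
  rw [b.support_normed_eq, mem_ball_zero_iff, ← dist_eq_norm, dist_comm] at h_support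
  exact h h_support

lemma mollify_eq_one {x : V} (h : Metric.ball x b.rOut ⊆ S) : mollify b S x = 1 := by
  rw [mollify, setIntegral_eq_integral_of_forall_compl_eq_zero fun y hy =>
      bump_sub_eq_zero b fun hy' => hy (h hy'),
    integral_sub_left_eq_self (fun y => b.normed volume y) volume x, b.integral_normed]

lemma mollify_add {w : V} (hw : ∀ y, y + w ∈ S ↔ y ∈ S) (hS : MeasurableSet S) (x : V) :
    mollify b S (x + w) = mollify b S x := by
  rw [mollify, mollify, ← integral_indicator hS, ← integral_indicator hS,
    ← integral_add_right_eq_self _ w]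
  congr 1 with y
  by_cases hy : y ∈ S
  · rw [Set.indicator_of_mem hy, Set.indicator_of_mem ((hw y).2 hy), add_sub_add_right_eq_sub]
  · rw [Set.indicator_of_notMem hy, Set.indicator_of_notMem (mt (hw y).1 hy)]

/-- Translating by `τ • ν` only moves points out of `S` through the tube over its frontier. -/
lemma ofReal_mollify_add_smul_le (hS : MeasurableSet S) {K : Set V} (hSK : frontier S ⊆ K) (x ν : V)
    {τ : ℝ} (hτ : 0 ≤ τ) :
    ENNReal.ofReal (mollify b S (x + τ • ν)) ≤ ENNReal.ofReal (mollify b S x) +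
      ∫⁻ y, (tube ν τ K).indicator (fun y => ENNReal.ofReal (b.normed volume (x - y))) y := by
  set φ : V → ℝ≥0∞ := fun y => ENNReal.ofReal (b.normed volume (x - y))
  have hφ : Measurable φ := ENNReal.measurable_ofReal.comp (continuous_bump_sub b x).measurable
  have h_translate : ENNReal.ofReal (mollify b S (x + τ • ν)) =
      ∫⁻ y, ((· + τ • ν) ⁻¹' S).indicator φ y := by
    rw [ofReal_mollify, ← lintegral_indicator hS, ← lintegral_add_right_eq_self _ (τ • ν)]
    congr 1 with y
    by_cases hy : y ∈ (· + τ • ν) ⁻¹' S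
    · rw [Set.indicator_of_mem hy, Set.indicator_of_mem (Set.mem_preimage.1 hy),
        add_sub_add_right_eq_sub]
    · rw [Set.indicator_of_notMem hy, Set.indicator_of_notMem (mt Set.mem_preimage.2 hy)]
  have h_subset : (· + τ • ν) ⁻¹' S ⊆ S ∪ tube ν τ K := by
    intro y hy
    by_cases hyS : y ∈ S
    · exact Or.inl hyS
    · obtain ⟨s, hs, hsf⟩ := mem_tube_frontier hτ hyS hy
      exact Or.inr ⟨s, hs, hSK hsf⟩
  rw [h_translate, ofReal_mollify, ← lintegral_indicator hS, ← lintegral_add_left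
    (hφ.indicator hS)]
  refine lintegral_mono fun y => (Set.indicator_le_indicator_of_subset h_subset
    (fun _ => zero_le) y).trans ?_
  exact le_self_add.trans_eq (congrFun (Set.indicator_union_add_inter φ S (tube ν τ K)) y)

lemma hasDerivAt_mollify_add_smul (hS : MeasurableSet S) (x ν : V) :
    HasDerivAt (fun τ : ℝ => mollify b S (x + τ • ν)) (fderiv ℝ (mollify b S) x ν) 0 := by
  have h_line : HasDerivAt (fun τ : ℝ => x + τ • ν) ν 0 := by
    simpa using ((hasDerivAt_id (0 : ℝ)).smul_const ν).const_add x
  have h_mollify : HasFDerivAt (mollify b S) (fderiv ℝ (mollify b S) x) (x + (0 : ℝ) • ν) := by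
    simpa using ((contDiff_mollify b hS).differentiable one_ne_zero x).hasFDerivAt
  exact h_mollify.comp_hasDerivAt (0 : ℝ) h_line

open Module in
lemma ofReal_fderiv_mollify_le {d : ℕ} (hd : finrank ℝ V = d + 1) (hS : MeasurableSet S)
    {K : Set V} (hK : IsClosed K) (hSK : frontier S ⊆ K)
    (hfin : ∀ ρ, μHE[d] (K ∩ Metric.closedBall 0 ρ) ≠ ∞) (x : V) {ν : V} (hν : ‖ν‖ = 1) :
    ENNReal.ofReal (fderiv ℝ (mollify b S) x ν) ≤
      ∫⁻ y in K, ENNReal.ofReal (b.normed volume (x - y)) ∂μHE[d] := by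
  refine _root_.le_of_forall_pos_le_add fun ε hε => ?_
  set J := ∫⁻ y in K, ENNReal.ofReal (b.normed volume (x - y)) ∂μHE[d] + ε
  by_cases hJ : J = ∞
  · exact hJ ▸ le_top
  obtain ⟨τ₀, hτ₀, h_tube⟩ := exists_forall_lintegral_indicator_tube_le hd hK.measurableSet hfin
    (continuous_bump_sub b x)
    (b.hasCompactSupport_normed.comp_homeomorph (Homeomorph.subLeft x)) hε.ne'
  have h_growth (τ : ℝ) (hτ : 0 < τ) (hτ_le : τ ≤ τ₀) :
      mollify b S (x + τ • ν) ≤ mollify b S x + τ * J.toReal := by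
    have h_nonneg := mollify_nonneg b (S := S) x
    rw [← ENNReal.ofReal_le_ofReal_iff (by positivity), ENNReal.ofReal_add h_nonneg
      (by positivity), ENNReal.ofReal_mul hτ.le, ENNReal.ofReal_toReal hJ]
    refine (ofReal_mollify_add_smul_le b hS hSK x ν hτ.le).trans ?_
    gcongr
    exact h_tube ν hν τ hτ hτ_le
  have h_slope : fderiv ℝ (mollify b S) x ν ≤ J.toReal := by
    refine le_of_tendsto (hasDerivAt_mollify_add_smul b hS x ν).tendsto_slope_zero_right ?_
    filter_upwards [Ioc_mem_nhdsGT hτ₀] with τ hτ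
    simp only [zero_add, zero_smul, add_zero, smul_eq_mul]
    rw [inv_mul_le_iff₀ hτ.1]
    linarith [h_growth τ hτ.1 hτ.2]
  exact ENNReal.ofReal_le_of_le_toReal h_slope

end Mollify

/-! ### Flat covers -/

/-- `q` is the quotient map from Euclidean space onto the product of circles and lines whose
`i`-th factor has length `L i` (a line if `L i = 0`). -/
structure FlatCover {d : ℕ} (L : Fin d → ℝ) {M : Type*} [MetricSpace M] (q : EucSp d → M) :
    Prop where
  nonneg : ∀ i, 0 ≤ L i
  surjective : Function.Surjective q
  dist_eq : ∀ x y, dist (q x) (q y) = √(∑ i, ‖((x i - y i : ℝ) : AddCircle (L i))‖ ^ 2)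

/-- The half-open fundamental cell with corner `z`; its line coordinates are unrestricted. -/
def fundamentalCell {d : ℕ} (L : Fin d → ℝ) (z : EucSp d) : Set (EucSp d) :=
  {x | ∀ i, L i ≠ 0 → x i ∈ Set.Ioc (z i) (z i + L i)}

lemma measurableSet_fundamentalCell {d : ℕ} (L : Fin d → ℝ) (z : EucSp d) :
    MeasurableSet (fundamentalCell L z) := by
  simp only [fundamentalCell, Set.ofPred_forall]
  exact .iInter fun i => .iInter fun _ => measurableSet_Ioc.preimage (by fun_prop)

lemma add_mem_fundamentalCell_zero {d : ℕ} {L : Fin d → ℝ} {u y : EucSp d} :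
    u + y ∈ fundamentalCell L 0 ↔ y ∈ fundamentalCell L (-u) := by
  refine forall_congr' fun i => forall_congr' fun _ => ?_
  simp only [Set.mem_Ioc, PiLp.add_apply, PiLp.zero_apply, PiLp.neg_apply]
  constructor <;> rintro ⟨h_lower, h_upper⟩ <;> constructor <;> linarith

lemma eventually_mem_fundamentalCell {d : ℕ} {L : Fin d → ℝ} (hL : ∀ i, 0 ≤ L i) (x : EucSp d) :
    ∀ᶠ y in nhds x, y ∈ fundamentalCell L (WithLp.toLp 2 fun i => x i - L i / 2) := by
  have h_near : ∀ᶠ y in nhds x, ∀ i, L i ≠ 0 → |y i - x i| < L i / 2 := by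
    refine Filter.eventually_all.2 fun i => ?_
    by_cases hi : L i = 0
    · simp [hi]
    have h_cont : Continuous fun y : EucSp d => |y i - x i| := by fun_prop
    have h_pos : |x i - x i| < L i / 2 := by simpa using (hL i).lt_of_ne' hi
    filter_upwards [(h_cont.tendsto x).eventually_lt_const h_pos] with y hy _ using hy
  filter_upwards [h_near] with y hy i hi
  have := abs_lt.1 (hy i hi)
  constructor <;> dsimp only <;> linarith

lemma exists_pos_forall_le_half {d : ℕ} {L : Fin d → ℝ} (hL : ∀ i, 0 ≤ L i) :
    ∃ r > 0, ∀ i, L i ≠ 0 → r ≤ L i / 2 := by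
  have h_lower (i : Fin d) : ∀ᶠ r in nhdsWithin (0 : ℝ) (Set.Ioi 0), L i ≠ 0 → r ≤ L i / 2 := by
    by_cases hi : L i = 0
    · simp [hi]
    have h_pos : 0 < L i / 2 := half_pos ((hL i).lt_of_ne' hi)
    filter_upwards [Ioc_mem_nhdsGT h_pos] with r hr _ using hr.2
  obtain ⟨r, hr, hr_pos⟩ := ((Filter.eventually_all.2 h_lower).and self_mem_nhdsWithin).exists
  exact ⟨r, hr_pos, hr⟩

namespace FlatCover
variable {d : ℕ} {L : Fin d → ℝ} {M : Type*} [MetricSpace M] {q : EucSp d → M}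

lemma dist_le (hq : FlatCover L q) (x y : EucSp d) : dist (q x) (q y) ≤ dist x y := by
  rw [hq.dist_eq, EuclideanSpace.dist_eq]
  gcongr with i
  rw [Real.dist_eq, ← Real.norm_eq_abs]
  exact QuotientAddGroup.norm_mk_le_norm

lemma lipschitz (hq : FlatCover L q) : LipschitzWith 1 q :=
  LipschitzWith.of_dist_le_mul fun x y => by simpa using hq.dist_le x y

lemma continuous (hq : FlatCover L q) : Continuous q := hq.lipschitz.continuous

lemma exists_dist_eq (hq : FlatCover L q) :
    ∃ r > 0, ∀ x y, dist x y ≤ r → dist (q x) (q y) = dist x y := by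
  obtain ⟨r, hr_pos, hr⟩ := exists_pos_forall_le_half hq.nonneg
  refine ⟨r, hr_pos, fun x y hxy => ?_⟩
  rw [hq.dist_eq, EuclideanSpace.dist_eq]
  congr! 3 with i
  rw [Real.dist_eq]
  rcases eq_or_ne (L i) 0 with hi | hi
  · rw [hi, AddCircle.norm_eq_of_zero]
  · refine (AddCircle.norm_coe_eq_abs_iff (L i) hi).2 ?_
    rw [abs_of_nonneg (hq.nonneg i)]
    calc |x i - y i| ≤ dist x y := by
          rw [dist_eq_norm]
          simpa using PiLp.norm_apply_le (x - y) i
      _ ≤ L i / 2 := hxy.trans (hr i hi)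

lemma eq_iff (hq : FlatCover L q) {x y : EucSp d} :
    q x = q y ↔ ∀ i, ∃ k : ℤ, x i = y i + k * L i := by
  rw [← dist_eq_zero, hq.dist_eq, Real.sqrt_eq_zero (Finset.sum_nonneg fun _ _ => sq_nonneg _),
    Finset.sum_eq_zero_iff_of_nonneg fun _ _ => sq_nonneg _]
  refine forall_congr' fun i => ?_
  simp only [Finset.mem_univ, true_implies, sq_eq_zero_iff, norm_eq_zero, AddCircle.coe_eq_zero_iff,
    zsmul_eq_mul]
  exact exists_congr fun k => ⟨fun h => by linarith, fun h => by linarith⟩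

lemma apply_add_single (hq : FlatCover L q) (i : Fin d) (x : EucSp d) :
    q (x + EuclideanSpace.single i (L i)) = q x := by
  refine hq.eq_iff.2 fun j => ?_
  rcases eq_or_ne j i with rfl | hji
  · exact ⟨1, by simp⟩
  · exact ⟨0, by simp [hji]⟩

lemma exists_lift (hq : FlatCover L q) (x : EucSp d) (m : M) :
    ∃ y, q y = m ∧ dist x y = dist (q x) m := by
  obtain ⟨y, rfl⟩ := hq.surjective m
  refine ⟨WithLp.toLp 2 fun i => y i + round ((L i)⁻¹ * (x i - y i)) * L i,
    hq.eq_iff.2 fun i => ⟨_, rfl⟩, ?_⟩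
  rw [hq.dist_eq, EuclideanSpace.dist_eq]
  congr! 3 with i
  rw [AddCircle.norm_eq, Real.dist_eq, sub_sub]

lemma isOpenMap (hq : FlatCover L q) : IsOpenMap q := by
  intro U hU
  rw [Metric.isOpen_iff] at hU ⊢
  rintro _ ⟨x, hx, rfl⟩
  obtain ⟨ε, hε, h_ball⟩ := hU x hx
  refine ⟨ε, hε, fun m hm => ?_⟩
  obtain ⟨y, rfl, hy⟩ := hq.exists_lift x m
  refine ⟨y, h_ball ?_, rfl⟩
  rwa [Metric.mem_ball, dist_comm, hy, dist_comm]

lemma injOn_fundamentalCell (hq : FlatCover L q) (z : EucSp d) :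
    Set.InjOn q (fundamentalCell L z) := by
  intro x hx y hy hxy
  ext i
  rcases eq_or_ne (L i) 0 with hi | hi
  · obtain ⟨k, hk⟩ := hq.eq_iff.1 hxy i
    rw [hk, hi, mul_zero, add_zero]
  have hL := (hq.nonneg i).lt_of_ne' hi
  obtain ⟨k, hk⟩ := hq.eq_iff.1 hxy i
  obtain ⟨_, -, h_unique⟩ := existsUnique_add_zsmul_mem_Ioc hL (y i) (z i)
  have h_zero : (0 : ℤ) = k := (h_unique 0 (by simpa using hy i hi)).trans
    (h_unique k (by simpa [← hk] using hx i hi)).symm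
  simpa [← h_zero] using hk

lemma exists_mem_fundamentalCell (hq : FlatCover L q) (z : EucSp d) (m : M) :
    ∃ x ∈ fundamentalCell L z, q x = m := by
  obtain ⟨y, rfl⟩ := hq.surjective m
  have h_exists (i : Fin d) : ∃ k : ℤ, L i ≠ 0 → y i + k * L i ∈ Set.Ioc (z i) (z i + L i) := by
    rcases eq_or_ne (L i) 0 with hi | hi
    · exact ⟨0, fun h => (h hi).elim⟩
    obtain ⟨k, hk, -⟩ := existsUnique_add_zsmul_mem_Ioc ((hq.nonneg i).lt_of_ne' hi) (y i) (z i)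
    exact ⟨k, fun _ => by simpa using hk⟩
  choose k hk using h_exists
  exact ⟨WithLp.toLp 2 fun i => y i + k i * L i, hk, hq.eq_iff.2 fun i => ⟨k i, rfl⟩⟩

lemma image_preimage_inter_fundamentalCell (hq : FlatCover L q) (K : Set M) (z : EucSp d) :
    q '' (q ⁻¹' K ∩ fundamentalCell L z) = K := by
  refine Set.Subset.antisymm (by rintro _ ⟨x, hx, rfl⟩; exact hx.1) fun m hm => ?_
  obtain ⟨x, hx, rfl⟩ := hq.exists_mem_fundamentalCell z m
  exact ⟨x, ⟨hm, hx⟩, rfl⟩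

lemma secondCountableTopology (hq : FlatCover L q) : SecondCountableTopology M :=
  have : TopologicalSpace.SeparableSpace M := hq.surjective.denseRange.separableSpace hq.continuous
  UniformSpace.secondCountable_of_separable M

variable [MeasurableSpace M] [BorelSpace M]

lemma euclideanHausdorffMeasure_image_of_injOn (hq : FlatCover L q) (k : ℕ) {A : Set (EucSp d)}
    (hA : MeasurableSet A) (h_inj : Set.InjOn q A) : μHE[k] (q '' A) = μHE[k] A := by
  have := hq.secondCountableTopology
  obtain ⟨r, hr_pos, hr⟩ := hq.exists_dist_eq
  obtain ⟨D, hD_meas, hD_bdd, hD_diam, hD_union, hD_disj⟩ :=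
    SeparableSpace.exists_measurable_partition_diam_le (EucSp d) hr_pos
  have h_meas (j : ℕ) : MeasurableSet (A ∩ D j) := hA.inter (hD_meas j)
  have h_disj : Pairwise (Function.onFun Disjoint fun j => A ∩ D j) := fun i j hij =>
    (hD_disj hij).mono Set.inter_subset_right Set.inter_subset_right
  have h_union : ⋃ j, A ∩ D j = A := by rw [← Set.inter_iUnion, hD_union, Set.inter_univ]
  have h_image_disj : Pairwise (Function.onFun Disjoint fun j => q '' (A ∩ D j)) := fun i j hij =>
    Set.disjoint_image_image fun x hx y hy hxy =>
      Set.disjoint_left.1 (h_disj hij) hx (h_inj hx.1 hy.1 hxy ▸ hy)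
  have h_image_meas (j : ℕ) : MeasurableSet (q '' (A ∩ D j)) :=
    (h_meas j).image_of_continuousOn_injOn hq.continuous.continuousOn
      (h_inj.mono Set.inter_subset_left)
  nth_rw 1 [← h_union]
  rw [Set.image_iUnion, measure_iUnion h_image_disj h_image_meas, ← h_union,
    measure_iUnion h_disj h_meas, h_union]
  congr 1 with j
  refine euclideanHausdorffMeasure_image_of_edist_eq k fun x hx y hy => ?_
  rw [edist_dist, edist_dist,
    hr x y ((Metric.dist_le_diam_of_mem (hD_bdd j) hx.2 hy.2).trans (hD_diam j))]

lemma restrict_preimage_fundamentalCell (hq : FlatCover L q) (k : ℕ) {K : Set M}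
    (hK : MeasurableSet K) (z : EucSp d) :
    (μHE[k] : Measure (EucSp d)).restrict (q ⁻¹' K) (fundamentalCell L z) = μHE[k] K := by
  have h_cell := measurableSet_fundamentalCell L z
  rw [Measure.restrict_apply h_cell, Set.inter_comm, ← hq.euclideanHausdorffMeasure_image_of_injOn k
    ((hK.preimage hq.continuous.measurable).inter h_cell)
    ((hq.injOn_fundamentalCell z).mono Set.inter_subset_right),
    hq.image_preimage_inter_fundamentalCell]

lemma isLocallyFiniteMeasure_restrict_preimage (hq : FlatCover L q) (k : ℕ) {K : Set M}
    (hK : MeasurableSet K) (hfin : μHE[k] K ≠ ∞) :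
    IsLocallyFiniteMeasure ((μHE[k] : Measure (EucSp d)).restrict (q ⁻¹' K)) where
  finiteAtNhds x := ⟨_, eventually_mem_fundamentalCell hq.nonneg x,
    (hq.restrict_preimage_fundamentalCell k hK _).trans_lt hfin.lt_top⟩

lemma euclideanHausdorffMeasure_preimage_inter_closedBall_ne_top (hq : FlatCover L q) (k : ℕ)
    {K : Set M} (hK : MeasurableSet K) (hfin : μHE[k] K ≠ ∞) (ρ : ℝ) :
    μHE[k] (q ⁻¹' K ∩ Metric.closedBall 0 ρ) ≠ ∞ := by
  have := hq.isLocallyFiniteMeasure_restrict_preimage k hK hfin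
  have h_lt := (isCompact_closedBall (0 : EucSp d) ρ).measure_lt_top
    (μ := (μHE[k] : Measure (EucSp d)).restrict (q ⁻¹' K))
  rw [Measure.restrict_apply measurableSet_closedBall, Set.inter_comm] at h_lt
  exact h_lt.ne

end FlatCover

lemma setLIntegral_fundamentalCell_lintegral {d : ℕ} {L : Fin d → ℝ} {m : Measure (EucSp d)}
    [SigmaFinite m] {a : ℝ≥0∞} (hm : ∀ z, m (fundamentalCell L z) = a) {g : EucSp d → ℝ≥0∞}
    (hg : Measurable g) :
    ∫⁻ x in fundamentalCell L 0, ∫⁻ y, g (x - y) ∂m = a * ∫⁻ u, g u := by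
  classical
  have h_cell := measurableSet_fundamentalCell L 0
  have h_one : Measurable ((fundamentalCell L 0).indicator (1 : EucSp d → ℝ≥0∞)) :=
    measurable_one.indicator h_cell
  calc ∫⁻ x in fundamentalCell L 0, ∫⁻ y, g (x - y) ∂m
      = ∫⁻ x, ∫⁻ y, (fundamentalCell L 0).indicator 1 x * g (x - y) ∂m := by
        rw [← lintegral_indicator h_cell]
        refine lintegral_congr fun x => ?_
        rw [lintegral_const_mul _ (by fun_prop)]
        by_cases hx : x ∈ fundamentalCell L 0 <;> simp [hx]
    _ = ∫⁻ y, (∫⁻ x, (fundamentalCell L 0).indicator 1 x * g (x - y)) ∂m :=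
        lintegral_lintegral_swap (f := fun x y => (fundamentalCell L 0).indicator 1 x * g (x - y))
          ((h_one.comp measurable_fst).mul
            (hg.comp (measurable_fst.sub measurable_snd))).aemeasurable
    _ = ∫⁻ y, (∫⁻ u, (fundamentalCell L 0).indicator 1 (u + y) * g u) ∂m := by
        refine lintegral_congr fun y => ?_
        rw [← lintegral_add_right_eq_self (μ := (volume : Measure (EucSp d))) _ y]
        simp only [add_sub_cancel_right]
    _ = ∫⁻ u, ∫⁻ y, (fundamentalCell L 0).indicator 1 (u + y) * g u ∂m :=
        lintegral_lintegral_swap (f := fun y u => (fundamentalCell L 0).indicator 1 (u + y) * g u)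
          ((h_one.comp (measurable_snd.add measurable_fst)).mul
            (hg.comp measurable_snd)).aemeasurable
    _ = ∫⁻ u, a * g u := by
        refine lintegral_congr fun u => ?_
        rw [lintegral_mul_const _ (by fun_prop), ← hm (-u),
          ← lintegral_indicator_one (measurableSet_fundamentalCell L (-u))]
        refine congrArg (· * g u) (lintegral_congr fun y => ?_)
        simp only [Set.indicator_apply, add_mem_fundamentalCell_zero, Pi.one_apply]
    _ = a * ∫⁻ u, g u := lintegral_const_mul _ hg

lemma measurePreserving_toLp_cellMeasure {d : ℕ} (L : Fin d → ℝ) :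
    MeasurePreserving (WithLp.toLp 2 : (Fin d → ℝ) → EucSp d) (cellMeasure L)
      (volume.restrict (fundamentalCell L 0)) := by
  classical
  have h_coord : coordMeasure = fun ℓ => volume.restrict
      (if ℓ = 0 then Set.univ else Set.Ioc 0 ℓ) := by
    ext1 ℓ
    rw [coordMeasure]
    split_ifs <;> simp
  have h_pi : (Set.univ.pi fun i => if L i = 0 then Set.univ else Set.Ioc 0 (L i)) =
      WithLp.toLp 2 ⁻¹' fundamentalCell L 0 := by
    ext x
    refine Set.mem_univ_pi.trans (forall_congr' fun i => ?_)
    by_cases hi : L i = 0 <;> simp [hi]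
  rw [cellMeasure, h_coord, ← Measure.restrict_pi_pi, ← volume_pi, h_pi]
  exact (PiLp.volume_preserving_toLp (Fin d)).restrict_preimage (measurableSet_fundamentalCell L 0)

lemma fderiv_comp_toLp_single {d : ℕ} (F : EucSp d → ℝ) (x : Fin d → ℝ) (i : Fin d) :
    fderiv ℝ (fun y : Fin d → ℝ => F (WithLp.toLp 2 y)) x (Pi.single i 1) =
      fderiv ℝ F (WithLp.toLp 2 x) (EuclideanSpace.single i 1) := by
  change fderiv ℝ (F ∘ (PiLp.continuousLinearEquiv 2 ℝ (fun _ : Fin d => ℝ)).symm) x _ = _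
  rw [ContinuousLinearEquiv.comp_right_fderiv]
  rfl

lemma gradNorm_comp_toLp {d : ℕ} (F : EucSp d → ℝ) (x : Fin d → ℝ) :
    gradNorm (fun y => F (WithLp.toLp 2 y)) x = ‖fderiv ℝ F (WithLp.toLp 2 x)‖ := by
  set D := fderiv ℝ F (WithLp.toLp 2 x)
  obtain ⟨g, hg⟩ := (InnerProductSpace.toDual ℝ (EucSp d)).surjective D
  have h_coord (i : Fin d) : D (EuclideanSpace.single i 1) = g i := by
    rw [← hg, InnerProductSpace.toDual_apply_apply, EuclideanSpace.inner_single_right]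
    simp
  simp only [gradNorm, fderiv_comp_toLp_single]
  rw [← hg, LinearIsometryEquiv.norm_map, EuclideanSpace.norm_eq]
  simp only [Real.norm_eq_abs, sq_abs, ← h_coord]
  rfl

lemma ofReal_gradNorm_comp_toLp_le {d : ℕ} {F : EucSp d → ℝ} {x : Fin d → ℝ} {J : ℝ≥0∞}
    (h : ∀ ν : EucSp d, ‖ν‖ = 1 → ENNReal.ofReal (fderiv ℝ F (WithLp.toLp 2 x) ν) ≤ J) :
    ENNReal.ofReal (gradNorm (fun y => F (WithLp.toLp 2 y)) x) ≤ J := by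
  rw [gradNorm_comp_toLp]
  by_cases hJ : J = ∞
  · exact hJ ▸ le_top
  refine ENNReal.ofReal_le_of_le_toReal ?_
  have h_le (ν : EucSp d) (hν : ‖ν‖ = 1) : fderiv ℝ F (WithLp.toLp 2 x) ν ≤ J.toReal :=
    (ENNReal.ofReal_le_iff_le_toReal hJ).1 (h ν hν)
  refine ContinuousLinearMap.opNorm_le_of_unit_norm ENNReal.toReal_nonneg fun ν hν => ?_
  refine abs_le.2 ⟨?_, h_le ν hν⟩
  have h_neg := h_le (-ν) (by rwa [norm_neg])
  rw [map_neg] at h_neg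
  linarith

/-! ### Smooth periodic approximation of closed sets -/

/-- Projection onto the line coordinates. -/
def lineProj {d : ℕ} (L : Fin d → ℝ) : EucSp d →L[ℝ] EucSp d :=
  LinearMap.toContinuousLinearMap
    { toFun := fun x => WithLp.toLp 2 fun i => open Classical in if L i = 0 then x i else 0
      map_add' := fun x y => by ext i; simp only [PiLp.add_apply]; split_ifs <;> simp
      map_smul' := fun c x => by ext i; simp }

lemma lineProj_apply {d : ℕ} (L : Fin d → ℝ) (x : EucSp d) (i : Fin d) :
    lineProj L x i = open Classical in if L i = 0 then x i else 0 := rfl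

lemma norm_lineProj_le {d : ℕ} (L : Fin d → ℝ) (x : EucSp d) : ‖lineProj L x‖ ≤ ‖x‖ := by
  rw [EuclideanSpace.norm_eq, EuclideanSpace.norm_eq]
  refine Real.sqrt_le_sqrt (Finset.sum_le_sum fun i _ => ?_)
  rw [lineProj_apply]
  split_ifs <;> simp [sq_nonneg]

lemma lineProj_single {d : ℕ} (L : Fin d → ℝ) (i : Fin d) :
    lineProj L (EuclideanSpace.single i (L i)) = 0 := by
  ext j
  rw [lineProj_apply]
  split_ifs with hj
  · rcases eq_or_ne j i with rfl | hji
    · simp [hj]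
    · simp [hji]
  · rfl

/-- A smooth bump on Euclidean space equal to `1` on the unit ball and supported in the ball of
radius `2`; it is the profile of `cutoff`. -/
def unitBump (d : ℕ) : ContDiffBump (0 : EucSp d) := ⟨1, 2, one_pos, one_lt_two⟩

/-- Smooth cutoffs in the line coordinates, exhausting the space as `k` grows. -/
def cutoff {d : ℕ} (L : Fin d → ℝ) (k : ℕ) (x : EucSp d) : ℝ :=
  unitBump d ((k + 1 : ℝ)⁻¹ • lineProj L x)

section Cutoff
variable {d : ℕ} (L : Fin d → ℝ) (k : ℕ)

lemma cutoff_nonneg (x : EucSp d) : 0 ≤ cutoff L k x := (unitBump d).nonneg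

lemma cutoff_le_one (x : EucSp d) : cutoff L k x ≤ 1 := (unitBump d).le_one

lemma contDiff_cutoff : ContDiff ℝ 1 (cutoff L k) :=
  (unitBump d).contDiff.comp ((lineProj L).contDiff.const_smul _)

lemma cutoff_add_single (i : Fin d) (x : EucSp d) :
    cutoff L k (x + EuclideanSpace.single i (L i)) = cutoff L k x := by
  rw [cutoff, map_add, lineProj_single, add_zero, cutoff]

lemma norm_inv_smul_lineProj (x : EucSp d) :
    ‖(k + 1 : ℝ)⁻¹ • lineProj L x‖ = (k + 1 : ℝ)⁻¹ * ‖lineProj L x‖ :=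
  norm_smul_of_nonneg (by positivity) _

lemma abs_le_of_cutoff_ne_zero {x : EucSp d} (hx : cutoff L k x ≠ 0) {i : Fin d} (hi : L i = 0) :
    |x i| ≤ 2 * (k + 1) := by
  have h_ball : (k + 1 : ℝ)⁻¹ • lineProj L x ∈ Metric.ball (0 : EucSp d) 2 :=
    (unitBump d).support_eq.subset hx
  rw [mem_ball_zero_iff, norm_inv_smul_lineProj, inv_mul_lt_iff₀ (by positivity)] at h_ball
  have h_coord := PiLp.norm_apply_le (lineProj L x) i
  rw [lineProj_apply, if_pos hi, Real.norm_eq_abs] at h_coord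
  linarith

lemma eventually_cutoff_eq_one (x : EucSp d) : ∀ᶠ k in Filter.atTop, cutoff L k x = 1 := by
  filter_upwards [Filter.eventually_ge_atTop ⌈‖x‖⌉₊] with k hk
  have h_ball : (k + 1 : ℝ)⁻¹ • lineProj L x ∈ Metric.closedBall (0 : EucSp d) 1 := by
    rw [mem_closedBall_zero_iff, norm_inv_smul_lineProj, inv_mul_le_iff₀ (by positivity)]
    linarith [norm_lineProj_le L x, Nat.ceil_le.1 hk]
  exact (unitBump d).one_of_mem_closedBall h_ball

lemma exists_fderiv_cutoff_le : ∃ C : ℝ, ∀ (k : ℕ) (x ν : EucSp d), ‖ν‖ = 1 →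
    fderiv ℝ (cutoff L k) x ν ≤ C / (k + 1) := by
  have h_bump : ContDiff ℝ 1 (unitBump d) := (unitBump d).contDiff
  obtain ⟨C, hC⟩ := ((unitBump d).hasCompactSupport.fderiv (𝕜 := ℝ)).exists_bound_of_continuous
    (h_bump.continuous_fderiv one_ne_zero)
  refine ⟨C, fun k x ν hν => ?_⟩
  have h_fderiv : HasFDerivAt (cutoff L k) _ x :=
    (h_bump.differentiable one_ne_zero _).hasFDerivAt.comp x
      ((k + 1 : ℝ)⁻¹ • lineProj L).hasFDerivAt
  rw [h_fderiv.fderiv, ContinuousLinearMap.comp_apply]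
  calc _ ≤ C * ‖(k + 1 : ℝ)⁻¹ • lineProj L ν‖ :=
        (le_abs_self _).trans (ContinuousLinearMap.le_of_opNorm_le _ (hC _) _)
    _ ≤ C * ((k + 1 : ℝ)⁻¹ * 1) := by
        rw [norm_inv_smul_lineProj]
        have hC_nonneg : 0 ≤ C := (norm_nonneg _).trans (hC 0)
        gcongr
        exact (norm_lineProj_le L ν).trans hν.le
    _ = C / (k + 1) := by rw [mul_one, div_eq_mul_inv]

end Cutoff

lemma ofReal_fderiv_mul_le {V : Type*} [NormedAddCommGroup V] [NormedSpace ℝ V] {f g : V → ℝ}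
    {x ν : V} (hf : DifferentiableAt ℝ f x) (hg : DifferentiableAt ℝ g x) (hf_nonneg : 0 ≤ f x)
    (hf_le : f x ≤ 1) (hg_nonneg : 0 ≤ g x) {c : ℝ} (hc : fderiv ℝ f x ν ≤ c) :
    ENNReal.ofReal (fderiv ℝ (fun x => f x * g x) x ν) ≤
      ENNReal.ofReal (fderiv ℝ g x ν) + ENNReal.ofReal c * ENNReal.ofReal (g x) := by
  rw [fderiv_fun_mul hf hg]
  simp only [_root_.add_apply, _root_.smul_apply, smul_eq_mul]
  refine ENNReal.ofReal_add_le.trans (add_le_add ?_ ?_)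
  · rw [ENNReal.ofReal_mul hf_nonneg]
    exact mul_le_of_le_one_left' (ENNReal.ofReal_le_one.2 hf_le)
  · rw [mul_comm, ENNReal.ofReal_mul' hg_nonneg]
    gcongr

lemma enorm_sub_add_ofReal {a b : ℝ} (ha : 0 ≤ a) (hb : 0 ≤ b) :
    ‖a - b‖ₑ + ENNReal.ofReal b =
      ENNReal.ofReal a + 2 * (ENNReal.ofReal b - ENNReal.ofReal a) := by
  rw [← ENNReal.ofReal_sub _ ha, ← ofReal_norm, Real.norm_eq_abs,
    ← ENNReal.ofReal_add (abs_nonneg _) hb]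
  rcases le_total a b with h | h
  · rw [← ENNReal.ofReal_ofNat 2, ← ENNReal.ofReal_mul zero_le_two,
      ← ENNReal.ofReal_add ha (by linarith), abs_of_nonpos (by linarith)]
    congr 1
    ring
  · rw [abs_of_nonneg (by linarith), ENNReal.ofReal_of_nonpos (by linarith : b - a ≤ 0)]
    simp

open Filter Topology in
/-- Scheffé's lemma: since the integrals do not exceed the limiting one, `|f k - g|` is controlled
by the dominated function `(g - f k)⁺`. -/
lemma tendsto_lintegral_enorm_sub_of_lintegral_le {X : Type*} [MeasurableSpace X] {μ : Measure X}
    {f : ℕ → X → ℝ} {g : X → ℝ} (hf : ∀ k, Measurable (f k)) (hg : Measurable g)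
    (hf_nonneg : ∀ k x, 0 ≤ f k x) (hg_nonneg : ∀ x, 0 ≤ g x)
    (hg_fin : ∫⁻ x, ENNReal.ofReal (g x) ∂μ ≠ ∞)
    (h_le : ∀ k, ∫⁻ x, ENNReal.ofReal (f k x) ∂μ ≤ ∫⁻ x, ENNReal.ofReal (g x) ∂μ)
    (h_eventually : ∀ᵐ x ∂μ, ∀ᶠ k in atTop, g x ≤ f k x) :
    Tendsto (fun k => ∫⁻ x, ‖f k x - g x‖ₑ ∂μ) atTop (𝓝 0) := by
  have hf_meas (k : ℕ) : Measurable fun x => ENNReal.ofReal (f k x) := (hf k).ennreal_ofReal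
  have h_sub_meas (k : ℕ) : Measurable fun x => ENNReal.ofReal (g x) - ENNReal.ofReal (f k x) :=
    hg.ennreal_ofReal.sub (hf_meas k)
  have h_sub : Tendsto (fun k => ∫⁻ x, (ENNReal.ofReal (g x) - ENNReal.ofReal (f k x)) ∂μ) atTop
      (𝓝 0) := by
    rw [← lintegral_zero (μ := μ)]
    refine tendsto_lintegral_of_dominated_convergence _ h_sub_meas
      (fun k => ae_of_all _ fun x => tsub_le_self) hg_fin ?_
    filter_upwards [h_eventually] with x hx
    refine tendsto_const_nhds.congr' ?_
    filter_upwards [hx] with k hk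
    rw [tsub_eq_zero_of_le (ENNReal.ofReal_le_ofReal hk)]
  have h_two_mul := ENNReal.Tendsto.const_mul h_sub (a := 2) (Or.inr (by norm_num))
  rw [mul_zero] at h_two_mul
  refine tendsto_of_tendsto_of_tendsto_of_le_of_le tendsto_const_nhds h_two_mul
    (fun _ => _root_.zero_le) fun k => (ENNReal.add_le_add_iff_right hg_fin).1 ?_
  calc (∫⁻ x, ‖f k x - g x‖ₑ ∂μ) + ∫⁻ x, ENNReal.ofReal (g x) ∂μ
      = ∫⁻ x, (ENNReal.ofReal (f k x) +
          2 * (ENNReal.ofReal (g x) - ENNReal.ofReal (f k x))) ∂μ := by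
        rw [← lintegral_add_right _ hg.ennreal_ofReal]
        exact lintegral_congr fun x => enorm_sub_add_ofReal (hf_nonneg k x) (hg_nonneg x)
    _ ≤ _ := by
        rw [lintegral_add_left (hf_meas k), lintegral_const_mul _ (h_sub_meas k), add_comm]
        exact add_le_add_right (h_le k) _

/-- Bump functions whose supports shrink to the origin as `k` grows. -/
def shrinkingBump (d k : ℕ) : ContDiffBump (0 : EucSp d) where
  rIn := 1 / (k + 2)
  rOut := 1 / (k + 1)
  rIn_pos := by positivity
  rIn_lt_rOut := one_div_lt_one_div_of_lt (by positivity) (by linarith)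

/-- The `k`-th smooth approximation of the indicator of `S`, mollified at scale `1 / (k + 1)` and
cut off in the line coordinates. -/
def smoothing {d : ℕ} (L : Fin d → ℝ) (S : Set (EucSp d)) (k : ℕ) (x : EucSp d) : ℝ :=
  cutoff L k x * mollify (shrinkingBump d k) S x

section Smoothing
variable {d : ℕ} (L : Fin d → ℝ) (S : Set (EucSp d)) (k : ℕ)

lemma smoothing_nonneg (x : EucSp d) : 0 ≤ smoothing L S k x :=
  mul_nonneg (cutoff_nonneg L k x) (mollify_nonneg _ x)

lemma smoothing_le_mollify (x : EucSp d) :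
    smoothing L S k x ≤ mollify (shrinkingBump d k) S x :=
  mul_le_of_le_one_left (mollify_nonneg _ x) (cutoff_le_one L k x)

variable {S}

lemma contDiff_smoothing (hS : MeasurableSet S) : ContDiff ℝ 1 (smoothing L S k) :=
  (contDiff_cutoff L k).mul (contDiff_mollify _ hS)

lemma eventually_smoothing_eq_one {x : EucSp d} (hx : x ∈ interior S) :
    ∀ᶠ k in Filter.atTop, smoothing L S k x = 1 := by
  obtain ⟨ε, hε, h_ball⟩ := Metric.isOpen_iff.1 isOpen_interior x hx
  have h_radius : ∀ᶠ k : ℕ in Filter.atTop, (1 : ℝ) / (k + 1) < ε :=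
    tendsto_one_div_add_atTop_nhds_zero_nat.eventually_lt_const hε
  filter_upwards [h_radius, eventually_cutoff_eq_one L x] with k hk h_cutoff
  rw [smoothing, h_cutoff, one_mul]
  exact mollify_eq_one _ ((Metric.ball_subset_ball hk.le).trans (h_ball.trans interior_subset))

lemma isTestFunction_smoothing (hS : MeasurableSet S)
    (h_periodic : ∀ i y, y + EuclideanSpace.single i (L i) ∈ S ↔ y ∈ S) :
    IsTestFunction L fun x => smoothing L S k (WithLp.toLp 2 x) where
  contDiff := (contDiff_smoothing L k hS).comp PiLp.contDiff_toLp
  periodic i x := by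
    change smoothing L S k (WithLp.toLp 2 x + EuclideanSpace.single i (L i)) = _
    rw [smoothing, cutoff_add_single, mollify_add _ (h_periodic i) hS, smoothing]
  exists_support_subset :=
    ⟨2 * (k + 1), fun _ hx _ hi => abs_le_of_cutoff_ne_zero L k (left_ne_zero_of_mul hx) hi⟩
  nonneg _ := smoothing_nonneg L S k _
  le_one _ := (smoothing_le_mollify L S k _).trans (mollify_le_one _ _)

end Smoothing

namespace FlatCover
variable {d : ℕ} {L : Fin d → ℝ} {M : Type*} [MetricSpace M] {q : EucSp d → M}
  [MeasurableSpace M] [BorelSpace M]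

lemma lintegral_bump_sub_preimage (hq : FlatCover L q) (b : ContDiffBump (0 : EucSp d)) (k : ℕ)
    {K : Set M} (hK : MeasurableSet K) (hfin : μHE[k] K ≠ ∞) :
    ∫⁻ x in fundamentalCell L 0, ∫⁻ y in q ⁻¹' K, ENNReal.ofReal (b.normed volume (x - y)) ∂μHE[k] =
      μHE[k] K := by
  have := hq.isLocallyFiniteMeasure_restrict_preimage k hK hfin
  have h_meas : Measurable fun u => ENNReal.ofReal (b.normed volume u) :=
    (b.continuous_normed (μ := volume)).measurable.ennreal_ofReal
  rw [setLIntegral_fundamentalCell_lintegral (hq.restrict_preimage_fundamentalCell k hK) h_meas,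
    ← ofReal_integral_eq_lintegral_ofReal b.integrable_normed
      (ae_of_all _ fun _ => b.nonneg_normed _), b.integral_normed, ENNReal.ofReal_one, mul_one]

lemma lintegral_mollify_preimage (hq : FlatCover L q) (b : ContDiffBump (0 : EucSp d))
    {U : Set M} (hU : MeasurableSet U) (hfin : μHE[d] U ≠ ∞) :
    ∫⁻ x in fundamentalCell L 0, ENNReal.ofReal (mollify b (q ⁻¹' U) x) = μHE[d] U := by
  rw [← hq.lintegral_bump_sub_preimage b d hU hfin,
    EuclideanSpace.euclideanHausdorffMeasure_eq_volume]
  simp only [ofReal_mollify]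

lemma isTestFunction_smoothing (hq : FlatCover L q) {U : Set M} (hU : MeasurableSet U) (k : ℕ) :
    IsTestFunction L fun x => smoothing L (q ⁻¹' U) k (WithLp.toLp 2 x) :=
  _root_.isTestFunction_smoothing L k (hU.preimage hq.continuous.measurable) fun i y => by
    rw [Set.mem_preimage, hq.apply_add_single, Set.mem_preimage]

lemma tendsto_lintegral_smoothing_sub (hq : FlatCover L q) {U : Set M} (hU : IsClosed U)
    (hfin : μHE[d] U ≠ ∞) (h_null : μHE[d] (frontier U) = 0) :
    Filter.Tendsto (fun k => ∫⁻ x, ‖smoothing L (q ⁻¹' U) k (WithLp.toLp 2 x) -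
      (WithLp.toLp 2 ⁻¹' (q ⁻¹' U)).indicator 1 x‖ₑ ∂cellMeasure L) Filter.atTop (nhds 0) := by
  set S := q ⁻¹' U
  have hS : MeasurableSet S := hU.measurableSet.preimage hq.continuous.measurable
  have h_smooth (k : ℕ) : Measurable (smoothing L S k) :=
    (contDiff_smoothing L k hS).continuous.measurable
  have h_indicator : Measurable (S.indicator (1 : EucSp d → ℝ)) := measurable_one.indicator hS
  have h_integral : ∫⁻ x in fundamentalCell L 0, ENNReal.ofReal (S.indicator (1 : EucSp d → ℝ) x) =
      μHE[d] U := by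
    have h_ofReal (x : EucSp d) :
        ENNReal.ofReal (S.indicator (1 : EucSp d → ℝ) x) = S.indicator 1 x := by
      by_cases hx : x ∈ S <;> simp [hx]
    simp only [h_ofReal]
    rw [lintegral_indicator_one hS, ← hq.restrict_preimage_fundamentalCell d hU.measurableSet 0,
      EuclideanSpace.euclideanHausdorffMeasure_eq_volume, Measure.restrict_apply hS,
      Measure.restrict_apply (measurableSet_fundamentalCell L 0), Set.inter_comm]
  have h_boundary : ∀ᵐ x ∂volume.restrict (fundamentalCell L 0), x ∉ q ⁻¹' frontier U := by
    rw [← measure_eq_zero_iff_ae_notMem, ← h_null,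
      ← hq.restrict_preimage_fundamentalCell d isClosed_frontier.measurableSet 0,
      EuclideanSpace.euclideanHausdorffMeasure_eq_volume,
      Measure.restrict_apply (measurableSet_fundamentalCell L 0), Set.inter_comm,
      Measure.restrict_apply (isClosed_frontier.measurableSet.preimage hq.continuous.measurable)]
  have h_scheffe := tendsto_lintegral_enorm_sub_of_lintegral_le
    (μ := volume.restrict (fundamentalCell L 0)) h_smooth h_indicator (smoothing_nonneg L S)
    (Set.indicator_nonneg fun _ _ => zero_le_one) (h_integral.trans_ne hfin) (fun k => ?_) ?_
  · refine h_scheffe.congr fun k => ?_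
    exact ((measurePreserving_toLp_cellMeasure L).lintegral_comp
      ((h_smooth k).sub h_indicator).enorm).symm
  · rw [h_integral, ← hq.lintegral_mollify_preimage (shrinkingBump d k) hU.measurableSet hfin]
    exact lintegral_mono fun x => ENNReal.ofReal_le_ofReal (smoothing_le_mollify L S k x)
  · filter_upwards [h_boundary] with x hx
    by_cases hxS : x ∈ S
    · have h_interior : x ∈ interior S := by_contra fun h =>
        hx (hq.continuous.frontier_preimage_subset U ⟨subset_closure hxS, h⟩)
      filter_upwards [eventually_smoothing_eq_one L h_interior] with k hk
      simp [hxS, hk]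
    · exact .of_forall fun k => by simpa [hxS] using smoothing_nonneg L S k x

end FlatCover

namespace FlatCover
variable {d : ℕ} {L : Fin (d + 1) → ℝ} {M : Type*} [MetricSpace M] {q : EucSp (d + 1) → M}
  [MeasurableSpace M] [BorelSpace M]

lemma exists_totalVariation_smoothing_le (hq : FlatCover L q) {U : Set M} (hU : IsClosed U)
    (hfin : μHE[d + 1] U ≠ ∞) (hfin_frontier : μHE[d] (frontier U) ≠ ∞) :
    ∃ C : ℝ, ∀ k : ℕ, totalVariation L (fun x => smoothing L (q ⁻¹' U) k (WithLp.toLp 2 x)) ≤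
      μHE[d] (frontier U) + ENNReal.ofReal (C / (k + 1)) * μHE[d + 1] U := by
  obtain ⟨C, hC⟩ := exists_fderiv_cutoff_le L
  refine ⟨C, fun k => ?_⟩
  set S := q ⁻¹' U
  set K := q ⁻¹' frontier U
  set b := shrinkingBump (d + 1) k
  have hS : MeasurableSet S := hU.measurableSet.preimage hq.continuous.measurable
  have h_frontier : MeasurableSet (frontier U) := isClosed_frontier.measurableSet
  have h_mollify := contDiff_mollify b hS
  have := hq.isLocallyFiniteMeasure_restrict_preimage d h_frontier hfin_frontier
  have h_meas : Measurable fun x => ∫⁻ y in K, ENNReal.ofReal (b.normed volume (x - y)) ∂μHE[d] :=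
    Measurable.lintegral_prod_right' (f := fun p : EucSp (d + 1) × EucSp (d + 1) =>
      ENNReal.ofReal (b.normed volume (p.1 - p.2)))
      (b.continuous_normed.measurable.ennreal_ofReal.comp (measurable_fst.sub measurable_snd))
  have h_meas_mollify : Measurable fun x => ENNReal.ofReal (mollify b S x) :=
    h_mollify.continuous.measurable.ennreal_ofReal
  have h_fderiv (x ν : EucSp (d + 1)) (hν : ‖ν‖ = 1) :
      ENNReal.ofReal (fderiv ℝ (smoothing L S k) x ν) ≤
        ∫⁻ y in K, ENNReal.ofReal (b.normed volume (x - y)) ∂μHE[d] +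
          ENNReal.ofReal (C / (k + 1)) * ENNReal.ofReal (mollify b S x) := by
    refine (ofReal_fderiv_mul_le ((contDiff_cutoff L k).differentiable one_ne_zero x)
      (h_mollify.differentiable one_ne_zero x) (cutoff_nonneg L k x) (cutoff_le_one L k x)
      (mollify_nonneg _ x) (hC k x ν hν)).trans (add_le_add_left ?_ _)
    exact ofReal_fderiv_mollify_le b (by simp) hS (isClosed_frontier.preimage hq.continuous)
      (hq.continuous.frontier_preimage_subset U)
      (hq.euclideanHausdorffMeasure_preimage_inter_closedBall_ne_top d h_frontier hfin_frontier)
      x hν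
  refine (lintegral_mono fun x => ofReal_gradNorm_comp_toLp_le (h_fderiv _)).trans_eq ?_
  have h_comp := (measurePreserving_toLp_cellMeasure L).lintegral_comp
    (h_meas.add (h_meas_mollify.const_mul (ENNReal.ofReal (C / (k + 1)))))
  simp only [Pi.add_apply] at h_comp
  rw [h_comp, lintegral_add_left h_meas,
    lintegral_const_mul _ h_meas_mollify,
    hq.lintegral_bump_sub_preimage b d h_frontier hfin_frontier,
    hq.lintegral_mollify_preimage b hU.measurableSet hfin]

open Filter Topology in
lemma relaxedPerimeter_le (hq : FlatCover L q) {U : Set M} (hU : IsClosed U)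
    (hfin : μHE[d + 1] U ≠ ∞) :
    relaxedPerimeter L (WithLp.toLp 2 ⁻¹' (q ⁻¹' U)) ≤ μHE[d] (frontier U) := by
  rcases eq_or_ne (μHE[d] (frontier U)) ∞ with h_top | hfin_frontier
  · exact h_top ▸ le_top
  have h_null : μHE[d + 1] (frontier U) = 0 :=
    (Measure.euclideanHausdorffMeasure_zero_or_top d.lt_succ_self _).resolve_right hfin_frontier
  obtain ⟨C, hC⟩ := hq.exists_totalVariation_smoothing_le hU hfin hfin_frontier
  obtain ⟨ε, hε_pos, hε_sum⟩ := ENNReal.exists_pos_sum_of_countable one_ne_zero ℕ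
  have h_tendsto := hq.tendsto_lintegral_smoothing_sub hU hfin h_null
  have h_error : Tendsto (fun k : ℕ => μHE[d] (frontier U) +
      ENNReal.ofReal (C / (k + 1)) * μHE[d + 1] U) atTop (𝓝 (μHE[d] (frontier U))) := by
    have h_div : Tendsto (fun k : ℕ => C / ((k : ℝ) + 1)) atTop (𝓝 0) := by
      simpa [div_eq_mul_inv] using (tendsto_one_div_add_atTop_nhds_zero_nat (𝕜 := ℝ)).const_mul C
    simpa using tendsto_const_nhds.add
      (ENNReal.Tendsto.mul_const (ENNReal.tendsto_ofReal h_div) (Or.inr hfin))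
  have h_exists (j : ℕ) : ∃ k ≥ j, ∫⁻ x, ‖smoothing L (q ⁻¹' U) k (WithLp.toLp 2 x) -
      (WithLp.toLp 2 ⁻¹' (q ⁻¹' U)).indicator 1 x‖ₑ ∂cellMeasure L < ε j :=
    ((eventually_ge_atTop j).and
      (h_tendsto.eventually_lt_const (by exact_mod_cast hε_pos j))).exists
  choose φ hφ_ge hφ_lt using h_exists
  have h_approx : IsSmoothApprox L (WithLp.toLp 2 ⁻¹' (q ⁻¹' U))
      fun j x => smoothing L (q ⁻¹' U) (φ j) (WithLp.toLp 2 x) :=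
    ⟨fun j => hq.isTestFunction_smoothing hU.measurableSet (φ j),
      ((ENNReal.tsum_le_tsum fun j => (hφ_lt j).le).trans_lt (hε_sum.trans one_lt_top)).ne⟩
  refine (iInf₂_le _ h_approx).trans ((liminf_le_liminf (.of_forall fun j => hC (φ j))).trans_eq ?_)
  exact (h_error.comp (tendsto_atTop_mono hφ_ge tendsto_id)).liminf_eq

lemma cellMeasure_preimage (hq : FlatCover L q) {U : Set M} (hU : MeasurableSet U) :
    cellMeasure L (WithLp.toLp 2 ⁻¹' (q ⁻¹' U)) = μHE[d + 1] U := by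
  have hS : MeasurableSet (q ⁻¹' U) := hU.preimage hq.continuous.measurable
  rw [(measurePreserving_toLp_cellMeasure L).measure_preimage hS.nullMeasurableSet,
    ← hq.restrict_preimage_fundamentalCell (d + 1) hU 0,
    EuclideanSpace.euclideanHausdorffMeasure_eq_volume, Measure.restrict_apply hS,
    Measure.restrict_apply (measurableSet_fundamentalCell L 0), Set.inter_comm]

lemma le_of_perimeterAtLeast (hq : FlatCover L q) {v p : ℝ} (h : PerimeterAtLeast L v p) {U : Set M}
    (hU : IsClosed U) (hv : μHE[d + 1] U = ENNReal.ofReal v) :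
    ENNReal.ofReal p ≤ μHE[d] (frontier U) :=
  (h _ ((hU.measurableSet.preimage hq.continuous.measurable).preimage (by fun_prop))
    ((hq.cellMeasure_preimage hU.measurableSet).trans hv)).trans
    (hq.relaxedPerimeter_le hU (hv ▸ ENNReal.ofReal_ne_top))

end FlatCover

/-! ### Areas of spheres and tubes -/

lemma euclideanHausdorffMeasure_le_of_dist_le_mul {X Y : Type*} [MetricSpace X] [MetricSpace Y]
    [MeasurableSpace X] [BorelSpace X] [MeasurableSpace Y] [BorelSpace Y] {f : X → Y} {S : Set X}
    {c : ℝ≥0} (h : ∀ x ∈ S, ∀ y ∈ S, dist x y ≤ c * dist (f x) (f y)) (d : ℕ) :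
    μHE[d] S ≤ (c : ℝ≥0∞) ^ d * μHE[d] (f '' S) := by
  rcases S.eq_empty_or_nonempty with rfl | ⟨x₀, -⟩
  · simp
  have : Nonempty X := ⟨x₀⟩
  have h_inj : Set.InjOn f S := fun x hx y hy hxy => by
    simpa [hxy] using h x hx y hy
  have h_inv := h_inj.leftInvOn_invFunOn
  have h_lipschitz : LipschitzOnWith c (Function.invFunOn f S) (f '' S) := by
    refine LipschitzOnWith.of_dist_le_mul ?_
    rintro _ ⟨x, hx, rfl⟩ _ ⟨y, hy, rfl⟩
    rw [h_inv hx, h_inv hy]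
    exact h x hx y hy
  simpa only [h_inv.image_image] using
    euclideanHausdorffMeasure_image_le_of_lipschitzOnWith h_lipschitz d

section OrthogonalComplement
variable {V : Type*} [NormedAddCommGroup V] [InnerProductSpace ℝ V] {ν : V}

lemma norm_sq_add_smul_orthogonal (hν : ‖ν‖ = 1) (w : (ℝ ∙ ν)ᗮ) (s : ℝ) :
    ‖(w : V) + s • ν‖ ^ 2 = ‖w‖ ^ 2 + s ^ 2 := by
  have h_inner : inner ℝ (w : V) ν = 0 := by
    rw [real_inner_comm]
    exact Submodule.mem_orthogonal_singleton_iff_inner_right.1 w.2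
  rw [norm_add_sq_real, inner_smul_right, h_inner, norm_smul, hν, mul_one, Real.norm_eq_abs,
    sq_abs, mul_zero, mul_zero, add_zero, Submodule.coe_norm]

lemma orthogonalProjectionOnto_add_inner_smul (hν : ‖ν‖ = 1) (x : V) :
    ((ℝ ∙ ν)ᗮ.orthogonalProjectionOnto x : V) + inner ℝ ν x • ν = x := by
  have h_decomp := (ℝ ∙ ν).starProjection_add_starProjection_orthogonal x
  rwa [Submodule.starProjection_unit_singleton ℝ hν, add_comm] at h_decomp

lemma dist_le_mul_dist_orthogonalProjectionOnto (hν : ‖ν‖ = 1) {c : ℝ} (hc : 1 ≤ c) {x y : V}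
    (h : |inner ℝ ν (x - y)| ≤ √(1 - (c ^ 2)⁻¹) * ‖x - y‖) :
    dist x y ≤ c * dist ((ℝ ∙ ν)ᗮ.orthogonalProjectionOnto x)
      ((ℝ ∙ ν)ᗮ.orthogonalProjectionOnto y) := by
  have h_nonneg : 0 ≤ 1 - (c ^ 2)⁻¹ := sub_nonneg.2 (inv_le_one_of_one_le₀ (one_le_pow₀ hc))
  have h_inner : inner ℝ ν (x - y) ^ 2 ≤ (1 - (c ^ 2)⁻¹) * ‖x - y‖ ^ 2 := by
    rw [← sq_abs, ← Real.sq_sqrt h_nonneg, ← mul_pow]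
    exact pow_le_pow_left₀ (abs_nonneg _) h 2
  have h_pythagoras := norm_sq_add_smul_orthogonal hν
    ((ℝ ∙ ν)ᗮ.orthogonalProjectionOnto (x - y)) (inner ℝ ν (x - y))
  rw [orthogonalProjectionOnto_add_inner_smul hν] at h_pythagoras
  have h_sq : (c ^ 2)⁻¹ * ‖x - y‖ ^ 2 ≤ ‖(ℝ ∙ ν)ᗮ.orthogonalProjectionOnto (x - y)‖ ^ 2 := by
    linarith
  rw [inv_mul_le_iff₀ (by positivity), ← mul_pow] at h_sq
  rw [dist_eq_norm, dist_eq_norm, ← map_sub]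
  exact (sq_le_sq₀ (norm_nonneg _) (by positivity)).1 h_sq

end OrthogonalComplement

/-- The point obtained from `y` by moving it along `P y` so that `‖P y‖` grows by `t`. -/
def radialShift {V : Type*} [NormedAddCommGroup V] [NormedSpace ℝ V] (P : V →L[ℝ] V) (t : ℝ)
    (y : V) : V :=
  y + (t / ‖P y‖) • P y

/-- The radial retraction onto the tube `{x | ‖P x‖ = R}`. -/
def radialRetract {V : Type*} [NormedAddCommGroup V] [NormedSpace ℝ V] (P : V →L[ℝ] V) (R : ℝ)
    (y : V) : V :=
  radialShift P (R - ‖P y‖) y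

/-- The shell of thickness `η` over the part `S` of the tube `{x | ‖P x‖ = R}`. -/
def radialShell {V : Type*} [NormedAddCommGroup V] [NormedSpace ℝ V] (P : V →L[ℝ] V) (R η : ℝ)
    (S : Set V) : Set V :=
  {y | ‖P y‖ ∈ Set.Icc R (R + η) ∧ radialRetract P R y ∈ S}

section Radial
variable {V : Type*} [NormedAddCommGroup V] [InnerProductSpace ℝ V] {P : V →L[ℝ] V} {R η : ℝ}

lemma continuousOn_radialRetract (P : V →L[ℝ] V) (R : ℝ) :
    ContinuousOn (radialRetract P R) {y | 0 < ‖P y‖} := by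
  unfold radialRetract radialShift
  exact continuousOn_id.add (ContinuousOn.smul (ContinuousOn.div (by fun_prop) (by fun_prop)
    fun y hy => hy.ne') (by fun_prop))

lemma measurableSet_radialShell [MeasurableSpace V] [BorelSpace V] (P : V →L[ℝ] V) (hR : 0 < R)
    (η : ℝ) {S : Set V} (hS : MeasurableSet S) : MeasurableSet (radialShell P R η S) := by
  set W : Set V := {y | ‖P y‖ ∈ Set.Icc R (R + η)}
  have hW : MeasurableSet W := measurableSet_Icc.preimage (by fun_prop)
  have h_retract : ContinuousOn (radialRetract P R) W :=
    (continuousOn_radialRetract P R).mono fun y hy => hR.trans_le hy.1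
  have h_image := (MeasurableEmbedding.subtype_coe hW).measurableSet_image.2
    (h_retract.domRestrict.measurable hS)
  have h_preimage : W.domRestrict (radialRetract P R) ⁻¹' S =
      Subtype.val ⁻¹' (radialRetract P R ⁻¹' S) := rfl
  rwa [h_preimage, Subtype.image_preimage_coe] at h_image

lemma radialShift_zero (P : V →L[ℝ] V) (y : V) : radialShift P 0 y = y := by
  simp [radialShift]

lemma norm_smul_sub_smul_sq {u v : V} (hu : ‖u‖ = R) (hv : ‖v‖ = R) (α β : ℝ) :
    ‖α • u - β • v‖ ^ 2 = (α - β) ^ 2 * R ^ 2 + 2 * (α * β) * (R ^ 2 - inner ℝ u v) := by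
  rw [norm_sub_sq_real, real_inner_smul_left, real_inner_smul_right, norm_smul, norm_smul, hu, hv,
    mul_pow, mul_pow, Real.norm_eq_abs, Real.norm_eq_abs, sq_abs, sq_abs]
  ring

variable (hP : (P : V →ₗ[ℝ] V).IsSymmetricProjection)
include hP

lemma proj_proj (x : V) : P (P x) = P x := LinearMap.congr_fun hP.isIdempotentElem x

lemma inner_proj_left (x y : V) : inner ℝ (P x) y = inner ℝ (P x) (P y) := by
  have h_symm := hP.isSymmetric (P x) y
  rwa [ContinuousLinearMap.coe_coe, proj_proj hP] at h_symm

lemma norm_proj_le (x : V) : ‖P x‖ ≤ ‖x‖ := by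
  rcases (norm_nonneg (P x)).eq_or_lt with h_zero | h_pos
  · exact h_zero ▸ norm_nonneg x
  have h_inner := real_inner_le_norm (P x) x
  rw [inner_proj_left hP, real_inner_self_eq_norm_mul_norm] at h_inner
  exact le_of_mul_le_mul_left h_inner h_pos

lemma proj_radialShift (t : ℝ) (y : V) : P (radialShift P t y) = (1 + t / ‖P y‖) • P y := by
  rw [radialShift, map_add, map_smul, proj_proj hP, add_smul, one_smul]

lemma norm_proj_radialShift {t : ℝ} {y : V} (hy : 0 < ‖P y‖) (ht : 0 ≤ ‖P y‖ + t) :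
    ‖P (radialShift P t y)‖ = ‖P y‖ + t := by
  have h_factor : 1 + t / ‖P y‖ = (‖P y‖ + t) / ‖P y‖ := by field_simp
  rw [proj_radialShift hP, h_factor, norm_smul_of_nonneg (by positivity),
    div_mul_cancel₀ _ hy.ne']

lemma radialShift_radialShift {s t : ℝ} {y : V} (hy : 0 < ‖P y‖) (hs : 0 < ‖P y‖ + s) :
    radialShift P t (radialShift P s y) = radialShift P (s + t) y := by
  have h_factor : (s + t) / ‖P y‖ = s / ‖P y‖ + t / (‖P y‖ + s) * (1 + s / ‖P y‖) := by
    field_simp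
  rw [radialShift, norm_proj_radialShift hP hy hs.le, proj_radialShift hP, smul_smul, radialShift,
    radialShift, h_factor, add_smul, add_assoc]

lemma radialShift_radialRetract (hR : 0 < R) {y : V} (hy : 0 < ‖P y‖) :
    radialShift P (‖P y‖ - R) (radialRetract P R y) = y := by
  rw [radialRetract, radialShift_radialShift hP hy (by linarith), sub_add_sub_cancel', sub_self,
    radialShift_zero]

lemma radialRetract_radialShift (hR : 0 < R) {x : V} (hx : ‖P x‖ = R) {s : ℝ} (hs : 0 ≤ s) :
    radialRetract P R (radialShift P s x) = x := by
  rw [radialRetract, radialShift_radialShift hP (hx ▸ hR) (by linarith),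
    norm_proj_radialShift hP (hx ▸ hR) (by linarith), hx, sub_add_cancel_left, add_neg_cancel,
    radialShift_zero]

lemma inner_sub_smul_proj_sub_smul_proj {x y : V} (hx : ‖P x‖ = R) (hy : ‖P y‖ = R) (α β : ℝ) :
    inner ℝ (x - y) (α • P x - β • P y) = (α + β) * (R ^ 2 - inner ℝ (P x) (P y)) := by
  rw [real_inner_comm]
  simp only [inner_sub_left, inner_sub_right, real_inner_smul_left, inner_proj_left hP _ x,
    inner_proj_left hP _ y, real_inner_self_eq_norm_sq, hx, hy, real_inner_comm (P x) (P y)]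
  ring

lemma norm_sub_sq_add_sq_le_norm_radialShift_sub_sq (hR : 0 < R) {x y : V} (hx : ‖P x‖ = R)
    (hy : ‖P y‖ = R) {s t : ℝ} (hs : 0 ≤ s) (ht : 0 ≤ t) :
    ‖x - y‖ ^ 2 + (s - t) ^ 2 ≤ ‖radialShift P s x - radialShift P t y‖ ^ 2 := by
  have h_inner : 0 ≤ R ^ 2 - inner ℝ (P x) (P y) := by
    have h_cauchy := real_inner_le_norm (P x) (P y)
    rw [hx, hy] at h_cauchy
    linarith
  have h_split : radialShift P s x - radialShift P t y =
      (x - y) + ((s / R) • P x - (t / R) • P y) := by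
    rw [radialShift, radialShift, hx, hy, add_sub_add_comm]
  have h_square : (s / R - t / R) ^ 2 * R ^ 2 = (s - t) ^ 2 := by field_simp
  rw [h_split, norm_add_sq_real, inner_sub_smul_proj_sub_smul_proj hP hx hy,
    norm_smul_sub_smul_sq hx hy, h_square]
  have h_cross : 0 ≤ (s / R + t / R) * (R ^ 2 - inner ℝ (P x) (P y)) := by positivity
  have h_radial : 0 ≤ s / R * (t / R) * (R ^ 2 - inner ℝ (P x) (P y)) := by positivity
  linarith

-- A chord of a sphere is orthogonal to the radius through its midpoint.
lemma abs_inner_proj_sub_le {x y p : V} (h_norm : ‖P x‖ = ‖P y‖) {δ : ℝ} (hx : dist x p ≤ δ)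
    (hy : dist y p ≤ δ) : |inner ℝ (P p) (x - y)| ≤ δ * ‖x - y‖ := by
  have h_chord : inner ℝ (P x + P y) (P x - P y) = 0 :=
    (real_inner_add_sub_eq_zero_iff _ _).2 h_norm
  have h_inner : 2 * inner ℝ (P p) (x - y) = inner ℝ (P (p - x) + P (p - y)) (P (x - y)) := by
    have h_sum : P (p - x) + P (p - y) = (2 : ℝ) • P p - (P x + P y) := by
      rw [map_sub, map_sub]; module
    rw [h_sum, inner_sub_left, map_sub P x y, h_chord, sub_zero, real_inner_smul_left,
      inner_proj_left hP, map_sub]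
  have h_sum_le : ‖P (p - x) + P (p - y)‖ ≤ 2 * δ := by
    rw [dist_comm, dist_eq_norm] at hx hy
    linarith [norm_add_le (P (p - x)) (P (p - y)), norm_proj_le hP (p - x),
      norm_proj_le hP (p - y)]
  have h_double : 2 * |inner ℝ (P p) (x - y)| ≤ 2 * δ * ‖x - y‖ := by
    rw [← abs_two, ← abs_mul, h_inner, abs_two]
    exact (abs_real_inner_le_norm _ _).trans (mul_le_mul h_sum_le (norm_proj_le hP _)
      (norm_nonneg _) ((norm_nonneg _).trans h_sum_le))
  linarith

-- Straightening the shell over a hyperplane `νᗮ`, with the radial distance as height, is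
-- `1`-Lipschitz because radial shifts expand distances.
lemma lipschitzOnWith_radialShell {ν : V} (hν : ‖ν‖ = 1) (hR : 0 < R) {S : Set V}
    (hS : ∀ x ∈ S, ‖P x‖ = R) :
    LipschitzOnWith 1 (fun y => ((ℝ ∙ ν)ᗮ.orthogonalProjectionOnto (radialRetract P R y) : V) +
      (‖P y‖ - R) • ν) (radialShell P R η S) := by
  refine LipschitzOnWith.of_dist_le_mul fun y ⟨hyR, hyS⟩ z ⟨hzR, hzS⟩ => ?_
  rw [NNReal.coe_one, one_mul, dist_eq_norm, dist_eq_norm, add_sub_add_comm, ← Submodule.coe_sub,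
    ← map_sub, ← sub_smul]
  refine (sq_le_sq₀ (norm_nonneg _) (norm_nonneg _)).1 ?_
  have h_expand := norm_sub_sq_add_sq_le_norm_radialShift_sub_sq hP hR (hS _ hyS) (hS _ hzS)
    (sub_nonneg.2 hyR.1) (sub_nonneg.2 hzR.1)
  rw [radialShift_radialRetract hP hR (hR.trans_le hyR.1),
    radialShift_radialRetract hP hR (hR.trans_le hzR.1)] at h_expand
  rw [norm_sq_add_smul_orthogonal hν]
  refine le_trans ?_ h_expand
  gcongr
  exact (ℝ ∙ ν)ᗮ.norm_orthogonalProjectionOnto_apply_le _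

variable [MeasurableSpace V] [BorelSpace V] [FiniteDimensional ℝ V]

open Module

lemma mul_volume_image_le_volume_radialShell {ν : V} (hν : ‖ν‖ = 1) (hR : 0 < R) {S : Set V}
    (hS : ∀ x ∈ S, ‖P x‖ = R) :
    ENNReal.ofReal η * volume ((ℝ ∙ ν)ᗮ.orthogonalProjectionOnto '' S) ≤
      volume (radialShell P R η S) := by
  have h_slab := volume_slab hν 0 η ((ℝ ∙ ν)ᗮ.orthogonalProjectionOnto '' S)
  have h_image := euclideanHausdorffMeasure_image_le_of_lipschitzOnWith
    (lipschitzOnWith_radialShell hP (η := η) hν hR hS) (finrank ℝ V)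
  rw [InnerProductSpace.euclideanHausdorffMeasure_eq_volume, ENNReal.coe_one, one_pow, one_mul]
    at h_image
  rw [← sub_zero η, ← h_slab, sub_zero]
  refine (measure_mono ?_).trans h_image
  rintro z ⟨⟨hz_nonneg, hz_le⟩, x, hx, hxz⟩
  have h_norm := norm_proj_radialShift hP (y := x) (t := inner ℝ ν z) (hS x hx ▸ hR)
    (by linarith [hS x hx])
  have h_retract := radialRetract_radialShift hP hR (hS x hx) hz_nonneg
  rw [hS x hx] at h_norm
  refine ⟨radialShift P (inner ℝ ν z) x, ⟨?_, by rwa [h_retract]⟩, ?_⟩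
  · rw [h_norm]
    exact ⟨by linarith, by linarith⟩
  · simp only [h_retract, h_norm, hxz, add_sub_cancel_left]
    exact orthogonalProjectionOnto_add_inner_smul hν z

lemma mul_euclideanHausdorffMeasure_le_of_dist_le {d : ℕ} (hd : finrank ℝ V = d + 1) (hR : 0 < R)
    {S : Set V} (hS : ∀ x ∈ S, ‖P x‖ = R) {c : ℝ≥0} (hc : 1 ≤ c)
    (h_dist : ∀ x ∈ S, ∀ y ∈ S, dist x y ≤ √(1 - ((c : ℝ) ^ 2)⁻¹) * R) (η : ℝ) :
    ENNReal.ofReal η * μHE[d] S ≤ (c : ℝ≥0∞) ^ d * volume (radialShell P R η S) := by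
  rcases S.eq_empty_or_nonempty with rfl | ⟨p, hp⟩
  · simp
  set ν := R⁻¹ • P p with hν_def
  have hν : ‖ν‖ = 1 := by
    rw [norm_smul_of_nonneg (by positivity), hS p hp, inv_mul_cancel₀ hR.ne']
  have : Fact (finrank ℝ V = d + 1) := ⟨hd⟩
  have h_finrank : finrank ℝ (ℝ ∙ ν)ᗮ = d :=
    Submodule.finrank_orthogonal_span_singleton (n := d) (norm_ne_zero_iff.1 (by simp [hν]))
  have h_flat : ∀ x ∈ S, ∀ y ∈ S, |inner ℝ ν (x - y)| ≤ √(1 - ((c : ℝ) ^ 2)⁻¹) * ‖x - y‖ := by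
    intro x hx y hy
    rw [hν_def, real_inner_smul_left, abs_mul, abs_of_pos (inv_pos.2 hR), inv_mul_le_iff₀ hR,
      ← mul_assoc, mul_comm R]
    exact abs_inner_proj_sub_le hP ((hS x hx).trans (hS y hy).symm) (h_dist x hx p hp)
      (h_dist y hy p hp)
  have h_proj := euclideanHausdorffMeasure_le_of_dist_le_mul (c := c)
    (fun x hx y hy => dist_le_mul_dist_orthogonalProjectionOnto hν hc (h_flat x hx y hy)) d
  calc ENNReal.ofReal η * μHE[d] S
    _ ≤ ENNReal.ofReal η *
          ((c : ℝ≥0∞) ^ d * volume ((ℝ ∙ ν)ᗮ.orthogonalProjectionOnto '' S)) := by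
        rw [← InnerProductSpace.euclideanHausdorffMeasure_eq_volume, h_finrank]
        gcongr
    _ = (c : ℝ≥0∞) ^ d *
          (ENNReal.ofReal η * volume ((ℝ ∙ ν)ᗮ.orthogonalProjectionOnto '' S)) :=
        mul_left_comm _ _ _
    _ ≤ _ := by
        gcongr
        exact mul_volume_image_le_volume_radialShell hP hν hR hS

lemma mul_euclideanHausdorffMeasure_le_pow_mul {d : ℕ} (hd : finrank ℝ V = d + 1) (hR : 0 < R)
    {S : Set V} (hS_meas : MeasurableSet S) (hS : ∀ x ∈ S, ‖P x‖ = R) {c : ℝ≥0} (hc : 1 < c)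
    (η : ℝ) :
    ENNReal.ofReal η * μHE[d] S ≤ (c : ℝ≥0∞) ^ d * volume (radialShell P R η S) := by
  have h_diam : 0 < √(1 - ((c : ℝ) ^ 2)⁻¹) * R :=
    mul_pos (Real.sqrt_pos.2 (sub_pos.2 (inv_lt_one_of_one_lt₀
      (one_lt_pow₀ (NNReal.coe_lt_coe.2 hc) two_ne_zero)))) hR
  obtain ⟨D, hD_meas, hD_bdd, hD_diam, hD_union, hD_disj⟩ :=
    SeparableSpace.exists_measurable_partition_diam_le V h_diam
  have h_meas (j : ℕ) : MeasurableSet (S ∩ D j) := hS_meas.inter (hD_meas j)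
  have h_union : ⋃ j, S ∩ D j = S := by rw [← Set.inter_iUnion, hD_union, Set.inter_univ]
  have h_disj : Pairwise (Function.onFun Disjoint fun j => S ∩ D j) := fun i j hij =>
    (hD_disj hij).mono Set.inter_subset_right Set.inter_subset_right
  have h_shell_disj : Pairwise (Function.onFun Disjoint fun j => radialShell P R η (S ∩ D j)) :=
    fun i j hij => Set.disjoint_left.2 fun _ hi hj => Set.disjoint_left.1 (h_disj hij) hi.2 hj.2
  have h_shell_union : ⋃ j, radialShell P R η (S ∩ D j) ⊆ radialShell P R η S :=
    Set.iUnion_subset fun j y hy => ⟨hy.1, hy.2.1⟩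
  calc ENNReal.ofReal η * μHE[d] S
    _ = ∑' j, ENNReal.ofReal η * μHE[d] (S ∩ D j) := by
        rw [ENNReal.tsum_mul_left, ← measure_iUnion h_disj h_meas, h_union]
    _ ≤ ∑' j, (c : ℝ≥0∞) ^ d * volume (radialShell P R η (S ∩ D j)) :=
        ENNReal.tsum_le_tsum fun j => mul_euclideanHausdorffMeasure_le_of_dist_le hP hd hR
          (fun x hx => hS x hx.1) hc.le (fun x hx y hy =>
            (Metric.dist_le_diam_of_mem (hD_bdd j) hx.2 hy.2).trans (hD_diam j)) η
    _ = (c : ℝ≥0∞) ^ d * volume (⋃ j, radialShell P R η (S ∩ D j)) := by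
        rw [ENNReal.tsum_mul_left, measure_iUnion h_shell_disj fun j =>
          measurableSet_radialShell P hR η (h_meas j)]
    _ ≤ _ := by gcongr

lemma mul_euclideanHausdorffMeasure_le_volume_radialShell {d : ℕ} (hd : finrank ℝ V = d + 1)
    (hR : 0 < R) {S : Set V} (hS_meas : MeasurableSet S) (hS : ∀ x ∈ S, ‖P x‖ = R) (η : ℝ) :
    ENNReal.ofReal η * μHE[d] S ≤ volume (radialShell P R η S) := by
  have h_pow : Filter.Tendsto (fun c : ℝ≥0 => (c : ℝ≥0∞) ^ d) (nhdsWithin 1 (Set.Ioi 1))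
      (nhds 1) := by
    have h_cont : Continuous fun c : ℝ≥0 => (c : ℝ≥0∞) ^ d := by fun_prop
    simpa using (h_cont.tendsto 1).mono_left nhdsWithin_le_nhds
  have h_limit := ENNReal.Tendsto.mul_const (b := volume (radialShell P R η S)) h_pow
    (Or.inl one_ne_zero)
  rw [one_mul] at h_limit
  have : (nhdsWithin (1 : ℝ≥0) (Set.Ioi 1)).NeBot := nhdsGT_neBot _
  exact ge_of_tendsto h_limit (eventually_nhdsWithin_of_forall fun c hc =>
    mul_euclideanHausdorffMeasure_le_pow_mul hP hd hR hS_meas hS hc η)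

end Radial

section EuclideanBalls
variable {n : ℕ} {R : ℝ}

lemma volume_ball_zero_one (n : ℕ) :
    volume (Metric.ball (0 : EucSp n) 1) = ENNReal.ofReal (ballVolume n) :=
  (ENNReal.ofReal_toReal measure_ball_lt_top.ne).symm

lemma volume_ball_zero (hn : n ≠ 0) (hR : 0 ≤ R) :
    volume (Metric.ball (0 : EucSp n) R) = ENNReal.ofReal (ballVolume n * R ^ n) := by
  have : Nonempty (Fin n) := ⟨⟨0, Nat.pos_of_ne_zero hn⟩⟩
  rw [Measure.addHaar_ball _ _ hR, volume_ball_zero_one, finrank_euclideanSpace_fin,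
    ← ENNReal.ofReal_mul (by positivity), mul_comm]

lemma volume_closedBall_zero (n : ℕ) (hR : 0 ≤ R) :
    volume (Metric.closedBall (0 : EucSp n) R) = ENNReal.ofReal (ballVolume n * R ^ n) := by
  rw [Measure.addHaar_closedBall _ _ hR, volume_ball_zero_one, finrank_euclideanSpace_fin,
    ← ENNReal.ofReal_mul (by positivity), mul_comm]

lemma volume_norm_mem_Icc (hn : n ≠ 0) {η : ℝ} (hR : 0 ≤ R) (hη : 0 ≤ η) :
    volume {y : EucSp n | ‖y‖ ∈ Set.Icc R (R + η)} =
      ENNReal.ofReal (ballVolume n * ((R + η) ^ n - R ^ n)) := by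
  have h_sdiff : {y : EucSp n | ‖y‖ ∈ Set.Icc R (R + η)} =
      Metric.closedBall 0 (R + η) \ Metric.ball 0 R := by
    ext y; simp [and_comm]
  rw [h_sdiff, measure_sdiff (Metric.ball_subset_closedBall.trans
    (Metric.closedBall_subset_closedBall (by linarith))) measurableSet_ball.nullMeasurableSet
    measure_ball_lt_top.ne, volume_closedBall_zero n (by positivity), volume_ball_zero hn hR,
    ← ENNReal.ofReal_sub _ (mul_nonneg (ballVolume_pos n).le (by positivity)), mul_sub]

lemma le_of_forall_mul_le_volume_norm_mem_Icc (hn : n ≠ 0) {a : ℝ} (ha : 0 ≤ a) (hR : 0 ≤ R)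
    {A : ℝ≥0∞} (h : ∀ η > 0, ENNReal.ofReal η * A ≤
      ENNReal.ofReal a * volume {y : EucSp n | ‖y‖ ∈ Set.Icc R (R + η)}) :
    A ≤ ENNReal.ofReal (a * (n * ballVolume n * R ^ (n - 1))) := by
  have h_deriv : HasDerivAt (fun η : ℝ => a * (ballVolume n * (R + η) ^ n))
      (a * (n * ballVolume n * R ^ (n - 1))) 0 := by
    have h_pow := (((hasDerivAt_id (0 : ℝ)).const_add R).pow n).const_mul (ballVolume n)
    simp only [id, add_zero, mul_one] at h_pow
    exact (h_pow.const_mul a).congr_deriv (by ring)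
  refine ge_of_tendsto (ENNReal.tendsto_ofReal h_deriv.tendsto_slope_zero_right)
    (eventually_nhdsWithin_of_forall fun η (hη : 0 < η) => ?_)
  have h_shell := h η hη
  rw [volume_norm_mem_Icc hn hR hη.le, ← ENNReal.ofReal_mul ha] at h_shell
  simp only [zero_add, add_zero, smul_eq_mul]
  rw [ENNReal.ofReal_mul (inv_pos.2 hη).le, ENNReal.ofReal_inv_of_pos hη,
    ← ENNReal.div_eq_inv_mul, ENNReal.le_div_iff_mul_le (by simp [hη]) (by simp), mul_comm,
    ← mul_sub, ← mul_sub]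
  exact h_shell

end EuclideanBalls

/-! ### Balls and tubes in flat quotients -/

section LineProj
variable {d : ℕ}

lemma lineProj_zero (x : EucSp d) : lineProj (0 : Fin d → ℝ) x = x := by
  ext i; simp [lineProj_apply]

lemma norm_lineProj_vecCons (L : Fin d → ℝ) {ℓ : ℝ} (hℓ : ℓ ≠ 0) (t : ℝ) (x : Fin d → ℝ) :
    ‖lineProj (vecCons ℓ L) (WithLp.toLp 2 (vecCons t x))‖ = ‖lineProj L (WithLp.toLp 2 x)‖ := by
  rw [EuclideanSpace.norm_eq, EuclideanSpace.norm_eq, Fin.sum_univ_succ]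
  simp [lineProj_apply, hℓ]

lemma isSymmetricProjection_lineProj (L : Fin d → ℝ) :
    (lineProj L : EucSp d →ₗ[ℝ] EucSp d).IsSymmetricProjection where
  isIdempotentElem := by
    ext x i
    simp only [Module.End.mul_apply, ContinuousLinearMap.coe_coe, lineProj_apply]
    split_ifs <;> rfl
  isSymmetric x y := by
    simp only [ContinuousLinearMap.coe_coe, PiLp.inner_apply, lineProj_apply]
    refine Finset.sum_congr rfl fun i _ => ?_
    split_ifs <;> simp

lemma radialRetract_lineProj_mem_fundamentalCell {L : Fin d → ℝ} {R : ℝ} {y z : EucSp d} :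
    radialRetract (lineProj L) R y ∈ fundamentalCell L z ↔ y ∈ fundamentalCell L z := by
  refine forall_congr' fun i => forall_congr' fun hi => ?_
  have h_coord : radialRetract (lineProj L) R y i = y i := by
    simp [radialRetract, radialShift, lineProj_apply, hi]
  rw [h_coord]

lemma volume_fundamentalCell_inter (L : Fin d → ℝ) {A : Set (EucSp d)} (hA : MeasurableSet A) :
    volume (fundamentalCell L 0 ∩ A) = cellMeasure L (WithLp.toLp 2 ⁻¹' A) := by
  rw [Set.inter_comm, ← Measure.restrict_apply hA,
    (measurePreserving_toLp_cellMeasure L).measure_preimage hA.nullMeasurableSet]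

end LineProj

/-- Within a fundamental cell, the norm of the line coordinates is distributed like the norm on
`EucSp n` scaled by `a`: there are `n` line coordinates, and `a` is the product of the lengths of
the circles. -/
def HasTubeVolume {d : ℕ} (L : Fin d → ℝ) (a : ℝ) (n : ℕ) : Prop :=
  ∀ B : Set ℝ, MeasurableSet B → volume (fundamentalCell L 0 ∩ {x | ‖lineProj L x‖ ∈ B}) =
    ENNReal.ofReal a * volume {y : EucSp n | ‖y‖ ∈ B}

lemma hasTubeVolume_zero (n : ℕ) : HasTubeVolume (0 : Fin n → ℝ) 1 n := by
  intro B _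
  simp [fundamentalCell, lineProj_zero]

namespace HasTubeVolume

lemma vecCons {d n : ℕ} {L : Fin d → ℝ} {a : ℝ} (h : HasTubeVolume L a n) {ℓ : ℝ} (hℓ : 0 < ℓ) :
    HasTubeVolume (vecCons ℓ L) (ℓ * a) n := by
  intro B hB
  have h_meas {k : ℕ} (L' : Fin k → ℝ) : MeasurableSet {x | ‖lineProj L' x‖ ∈ B} :=
    hB.preimage (by fun_prop)
  have h_prod : (fun p : ℝ × (Fin d → ℝ) => Matrix.vecCons p.1 p.2) ⁻¹'
      (WithLp.toLp 2 ⁻¹' {x | ‖lineProj (Matrix.vecCons ℓ L) x‖ ∈ B}) =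
      Set.univ ×ˢ (WithLp.toLp 2 ⁻¹' {x | ‖lineProj L x‖ ∈ B}) := by
    ext p
    simp only [Set.mem_preimage, Set.mem_ofPred_eq, Set.mem_prod, Set.mem_univ, true_and]
    rw [norm_lineProj_vecCons L hℓ.ne']
  have h_circle : coordMeasure ℓ Set.univ = ENNReal.ofReal ℓ := by
    simp [coordMeasure, hℓ.ne']
  rw [volume_fundamentalCell_inter _ (h_meas _),
    ← (measurePreserving_vecCons ℓ L).measure_preimage
      ((h_meas _).preimage (by fun_prop)).nullMeasurableSet, h_prod, Measure.prod_prod, h_circle,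
    ← volume_fundamentalCell_inter _ (h_meas _), h B hB, ENNReal.ofReal_mul hℓ.le, mul_assoc]

lemma euclideanHausdorffMeasure_le {d n : ℕ} {L : Fin (d + 1) → ℝ} {a : ℝ}
    (h : HasTubeVolume L a n) (ha : 0 ≤ a) (hn : n ≠ 0) {R : ℝ} (hR : 0 < R) :
    μHE[d] (fundamentalCell L 0 ∩ {x | ‖lineProj L x‖ = R}) ≤
      ENNReal.ofReal (a * (n * ballVolume n * R ^ (n - 1))) := by
  refine le_of_forall_mul_le_volume_norm_mem_Icc hn ha hR.le fun η _ => ?_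
  have h_meas : MeasurableSet {x : EucSp (d + 1) | ‖lineProj L x‖ = R} :=
    measurableSet_eq_fun (by fun_prop) measurable_const
  rw [← h _ measurableSet_Icc]
  refine (mul_euclideanHausdorffMeasure_le_volume_radialShell (isSymmetricProjection_lineProj L)
    (by simp) hR ((measurableSet_fundamentalCell L 0).inter h_meas) (fun x hx => hx.2) η).trans
    (measure_mono fun y hy => ?_)
  exact ⟨radialRetract_lineProj_mem_fundamentalCell.1 hy.2.1, hy.1⟩

end HasTubeVolume

lemma euclideanHausdorffMeasure_sphere_le (d : ℕ) {R : ℝ} (hR : 0 < R) :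
    μHE[d] (Metric.sphere (0 : EucSp (d + 1)) R) ≤
      ENNReal.ofReal ((d + 1 : ℕ) * ballVolume (d + 1) * R ^ d) := by
  have h_sphere : fundamentalCell 0 0 ∩ {x | ‖lineProj (0 : Fin (d + 1) → ℝ) x‖ = R} =
      Metric.sphere 0 R := by
    ext x; simp [fundamentalCell, lineProj_zero]
  simpa [h_sphere] using
    (hasTubeVolume_zero (d + 1)).euclideanHausdorffMeasure_le zero_le_one d.succ_ne_zero hR

namespace FlatCover
variable {d : ℕ} {L : Fin (d + 1) → ℝ} {M : Type*} [MetricSpace M] {q : EucSp (d + 1) → M}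
  {R : ℝ}

lemma isClosed_image_closedBall (hq : FlatCover L q) (R : ℝ) :
    IsClosed (q '' Metric.closedBall 0 R) :=
  ((isCompact_closedBall _ _).image hq.continuous).isClosed

lemma isClosedRegion_image_closedBall (hq : FlatCover L q) (hR : R ≠ 0) :
    IsClosedRegion (q '' Metric.closedBall 0 R) := by
  refine ⟨q '' Metric.ball 0 R, hq.isOpenMap _ Metric.isOpen_ball, Set.Subset.antisymm ?_
    (closure_minimal (Set.image_mono Metric.ball_subset_closedBall)
      (hq.isClosed_image_closedBall R))⟩
  rw [← closure_ball _ hR]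
  exact image_closure_subset_closure_image hq.continuous

lemma frontier_image_closedBall_subset (hq : FlatCover L q) (R : ℝ) :
    frontier (q '' Metric.closedBall 0 R) ⊆ q '' Metric.sphere 0 R := by
  rw [(hq.isClosed_image_closedBall R).frontier_eq]
  rintro _ ⟨⟨x, hx, rfl⟩, hx_interior⟩
  refine ⟨x, hx.antisymm (not_lt.1 fun h_lt => hx_interior ?_), rfl⟩
  exact interior_maximal (Set.image_mono Metric.ball_subset_closedBall)
    (hq.isOpenMap _ Metric.isOpen_ball) ⟨x, h_lt, rfl⟩

lemma isClosedRegion_sublevel_norm_lineProj (hq : FlatCover L q) {ρ : M → ℝ} (hρ : Continuous ρ)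
    (hρq : ∀ x, ρ (q x) = ‖lineProj L x‖) (hR : 0 < R) : IsClosedRegion {m | ρ m ≤ R} := by
  refine ⟨{m | ρ m < R}, isOpen_lt hρ continuous_const, Set.Subset.antisymm (fun m hm => ?_)
    (closure_minimal (fun m (hm : ρ m < R) => hm.le) (isClosed_le hρ continuous_const))⟩
  obtain ⟨x, rfl⟩ := hq.surjective m
  rw [Set.mem_ofPred_eq, hρq] at hm
  have h_cont : Continuous fun t : ℝ => q (x - t • lineProj L x) :=
    hq.continuous.comp (by fun_prop)
  have h_zero : (0 : ℝ) ∈ closure (Set.Ioo 0 1) := by simp [closure_Ioo]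
  have h_lt : Set.MapsTo (fun t : ℝ => q (x - t • lineProj L x)) (Set.Ioo 0 1) {m | ρ m < R} := by
    intro t ht
    have h_proj : lineProj L (x - t • lineProj L x) = (1 - t) • lineProj L x := by
      rw [map_sub, map_smul, proj_proj (isSymmetricProjection_lineProj L), sub_smul, one_smul]
    rw [Set.mem_ofPred_eq, hρq, h_proj, norm_smul_of_nonneg (by linarith [ht.2])]
    nlinarith [norm_nonneg (lineProj L x), ht.1, ht.2]
  simpa using map_mem_closure h_cont h_zero h_lt

variable [MeasurableSpace M] [BorelSpace M]

lemma exists_euclideanHausdorffMeasure_image_closedBall_eq (hq : FlatCover L q) :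
    ∃ R₀ > 0, ∀ R, 0 ≤ R → R ≤ R₀ → μHE[d + 1] (q '' Metric.closedBall 0 R) =
      ENNReal.ofReal (ballVolume (d + 1) * R ^ (d + 1)) := by
  obtain ⟨r, hr_pos, hr⟩ := hq.exists_dist_eq
  refine ⟨r / 2, by positivity, fun R hR hRr => ?_⟩
  rw [euclideanHausdorffMeasure_image_of_edist_eq,
    EuclideanSpace.euclideanHausdorffMeasure_eq_volume, volume_closedBall_zero _ hR]
  intro x hx y hy
  rw [Metric.mem_closedBall] at hx hy
  rw [edist_dist, edist_dist, hr]
  linarith [dist_triangle_right x y 0]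

lemma euclideanHausdorffMeasure_frontier_image_closedBall_le (hq : FlatCover L q) (hR : 0 < R) :
    μHE[d] (frontier (q '' Metric.closedBall 0 R)) ≤
      ENNReal.ofReal ((d + 1 : ℕ) * ballVolume (d + 1) * R ^ d) := by
  refine (measure_mono (hq.frontier_image_closedBall_subset R)).trans ?_
  have h_image := euclideanHausdorffMeasure_image_le_of_lipschitzOnWith
    (hq.lipschitz.lipschitzOnWith (s := Metric.sphere 0 R)) d
  rw [ENNReal.coe_one, one_pow, one_mul] at h_image
  exact h_image.trans (euclideanHausdorffMeasure_sphere_le d hR)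

lemma euclideanHausdorffMeasure_eq_inter_fundamentalCell (hq : FlatCover L q) (k : ℕ) {K : Set M}
    (hK : MeasurableSet K) : μHE[k] K = μHE[k] (fundamentalCell L 0 ∩ q ⁻¹' K) := by
  rw [← hq.restrict_preimage_fundamentalCell k hK 0,
    Measure.restrict_apply (measurableSet_fundamentalCell L 0)]

variable {a : ℝ} {n : ℕ} {ρ : M → ℝ}

lemma euclideanHausdorffMeasure_sublevel_norm_lineProj (hq : FlatCover L q)
    (h : HasTubeVolume L a n) (ha : 0 ≤ a) (hρ : Continuous ρ)
    (hρq : ∀ x, ρ (q x) = ‖lineProj L x‖) (hR : 0 ≤ R) :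
    μHE[d + 1] {m | ρ m ≤ R} = ENNReal.ofReal (a * (ballVolume n * R ^ n)) := by
  have h_closed : IsClosed {m | ρ m ≤ R} := isClosed_le hρ continuous_const
  have h_preimage : q ⁻¹' {m | ρ m ≤ R} = {x | ‖lineProj L x‖ ∈ Set.Iic R} := by
    ext x; simp [hρq]
  have h_ball : {y : EucSp n | ‖y‖ ∈ Set.Iic R} = Metric.closedBall 0 R := by
    ext y; simp
  rw [hq.euclideanHausdorffMeasure_eq_inter_fundamentalCell _ h_closed.measurableSet, h_preimage,
    EuclideanSpace.euclideanHausdorffMeasure_eq_volume, h _ measurableSet_Iic, h_ball,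
    volume_closedBall_zero n hR, ENNReal.ofReal_mul ha]

lemma euclideanHausdorffMeasure_frontier_sublevel_norm_lineProj_le (hq : FlatCover L q)
    (h : HasTubeVolume L a n) (ha : 0 ≤ a) (hn : n ≠ 0) (hρ : Continuous ρ)
    (hρq : ∀ x, ρ (q x) = ‖lineProj L x‖) (hR : 0 < R) :
    μHE[d] (frontier {m | ρ m ≤ R}) ≤ ENNReal.ofReal (a * (n * ballVolume n * R ^ (n - 1))) := by
  rw [hq.euclideanHausdorffMeasure_eq_inter_fundamentalCell _ isClosed_frontier.measurableSet]
  refine (measure_mono (Set.inter_subset_inter_right _ fun x hx => ?_)).trans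
    (h.euclideanHausdorffMeasure_le ha hn hR)
  simpa [hρq] using frontier_le_subset_eq hρ continuous_const hx

end FlatCover

/-! ### Isoperimetric profiles of products of circles and lines -/

lemma flatCover_id (n : ℕ) : FlatCover (0 : Fin n → ℝ) (id : EucSp n → EucSp n) where
  nonneg _ := le_rfl
  surjective := Function.surjective_id
  dist_eq x y := by
    rw [id, id, EuclideanSpace.dist_eq]
    simp only [Pi.zero_apply, AddCircle.norm_eq_of_zero, Real.dist_eq]

lemma FlatCover.prod_circle {d : ℕ} {L : Fin d → ℝ} {M : Type*} [MetricSpace M] {q : EucSp d → M}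
    (hq : FlatCover L q) {ℓ : ℝ} (hℓ : 0 ≤ ℓ) :
    FlatCover (M := WithLp 2 (AddCircle ℓ × M)) (vecCons ℓ L)
      (fun x => WithLp.toLp 2 ((x 0 : AddCircle ℓ), q (WithLp.toLp 2 fun i => x i.succ))) where
  nonneg i := Fin.cases hℓ hq.nonneg i
  surjective m := by
    obtain ⟨t, ht⟩ := QuotientAddGroup.mk_surjective m.fst
    obtain ⟨x, hx⟩ := hq.surjective m.snd
    exact ⟨WithLp.toLp 2 (vecCons t x), WithLp.ofLp_injective 2 (Prod.ext ht hx)⟩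
  dist_eq x y := by
    have h_sum : ∑ i, ‖((x i - y i : ℝ) : AddCircle (vecCons ℓ L i))‖ ^ 2 =
        ‖((x 0 - y 0 : ℝ) : AddCircle ℓ)‖ ^ 2 +
          ∑ i : Fin d, ‖((x i.succ - y i.succ : ℝ) : AddCircle (L i))‖ ^ 2 := Fin.sum_univ_succ _
    have h_tail := hq.dist_eq (WithLp.toLp 2 fun i => x i.succ) (WithLp.toLp 2 fun i => y i.succ)
    rw [h_sum, WithLp.prod_dist_eq_add (by simp)]
    simp only [ENNReal.toReal_ofNat, Real.rpow_two, ← Real.sqrt_eq_rpow, WithLp.toLp_fst,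
      WithLp.toLp_snd]
    rw [h_tail, Real.sq_sqrt (Finset.sum_nonneg fun _ _ => sq_nonneg _), dist_eq_norm,
      AddCircle.coe_sub]

/-- The ratio between the volume-normalized `k`-dimensional Hausdorff measure `μHE[k]` and the
unnormalized one used by `haus`. -/
def hausFactor (k : ℕ) : ℝ≥0 :=
  Measure.addHaarScalarFactor (volume : Measure (EuclideanSpace ℝ (Fin k))) μH[k]

lemma hausFactor_pos (k : ℕ) : 0 < hausFactor k :=
  pos_iff_ne_zero.2 (Measure.addHaarScalarFactor_volume_hausdorffMeasure_ne_zero k)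

section Haus
variable {M : Type*} [MetricSpace M] [MeasurableSpace M] [BorelSpace M] {k : ℕ} {s : Set M}

lemma euclideanHausdorffMeasure_eq_mul_haus (k : ℕ) (s : Set M) :
    μHE[k] s = hausFactor k * haus M k s := by
  borelize M
  rw [Measure.euclideanHausdorffMeasure_def]
  rfl

lemma euclideanHausdorffMeasure_eq_ofReal_iff {v : ℝ} :
    μHE[k] s = ENNReal.ofReal (hausFactor k * v) ↔ haus M k s = ENNReal.ofReal v := by
  rw [euclideanHausdorffMeasure_eq_mul_haus, ENNReal.ofReal_mul (by positivity),
    ENNReal.ofReal_coe_nnreal,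
    ENNReal.mul_right_inj (by simpa using (hausFactor_pos k).ne') ENNReal.coe_ne_top]

lemma haus_le_div_hausFactor_iff {a : ℝ≥0∞} : haus M k s ≤ a / hausFactor k ↔ μHE[k] s ≤ a := by
  rw [euclideanHausdorffMeasure_eq_mul_haus,
    ENNReal.le_div_iff_mul_le (.inl (by simpa using (hausFactor_pos k).ne'))
      (.inl ENNReal.coe_ne_top), mul_comm]

end Haus

lemma isoProfile_zero (X : Type*) [EMetricSpace X] (m : ℕ) : isoProfile X m 0 = 0 := by
  refine le_antisymm (iInf₂_le_of_le ∅ ⟨⟨∅, isOpen_empty, closure_empty.symm⟩, ?_⟩ ?_) zero_le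
  · simp [haus]
  · simp [haus]

namespace FlatCover
variable {d : ℕ} {L : Fin (d + 1) → ℝ} {M : Type*} [MetricSpace M] {q : EucSp (d + 1) → M}

lemma div_hausFactor_le_isoProfile (hq : FlatCover L q) {v p : ℝ}
    (h : PerimeterAtLeast L (hausFactor (d + 1) * v) p) :
    ENNReal.ofReal p / hausFactor d ≤ isoProfile M (d + 1) (ENNReal.ofReal v) := by
  borelize M
  refine le_iInf₂ fun U hU => ?_
  obtain ⟨⟨V, -, rfl⟩, hv⟩ := hU
  refine ENNReal.div_le_of_le_mul' ?_
  rw [add_tsub_cancel_right, ← euclideanHausdorffMeasure_eq_mul_haus]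
  exact hq.le_of_perimeterAtLeast h isClosed_closure
    (euclideanHausdorffMeasure_eq_ofReal_iff.2 hv)

lemma exists_isoProfile_le_div_hausFactor (hq : FlatCover L q) : ∃ a > 0, ∀ v, 0 < v → v ≤ a →
    isoProfile M (d + 1) (ENNReal.ofReal v) ≤
      ENNReal.ofReal (ballPerimeter (d + 1) (hausFactor (d + 1) * v)) / hausFactor d := by
  borelize M
  obtain ⟨R₀, hR₀, h_volume⟩ := hq.exists_euclideanHausdorffMeasure_image_closedBall_eq
  have h_factor : (0 : ℝ) < hausFactor (d + 1) := hausFactor_pos _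
  have h_ball := ballVolume_pos (d + 1)
  refine ⟨ballVolume (d + 1) * R₀ ^ (d + 1) / hausFactor (d + 1), by positivity,
    fun v hv hva => ?_⟩
  rw [le_div_iff₀' h_factor] at hva
  have hx : 0 < hausFactor (d + 1) * v := mul_pos h_factor hv
  set R := ballRadius (d + 1) (hausFactor (d + 1) * v)
  have hR : 0 < R := ballRadius_pos hx
  have h_radius : ballVolume (d + 1) * R ^ (d + 1) = hausFactor (d + 1) * v :=
    ballVolume_mul_ballRadius_pow (by lia) hx.le
  have hR_le : R ≤ R₀ := le_of_pow_le_pow_left₀ d.succ_ne_zero hR₀.le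
    (le_of_mul_le_mul_left (h_radius.trans_le hva) h_ball)
  have hU := h_volume R hR.le hR_le
  rw [h_radius] at hU
  refine iInf₂_le_of_le (q '' Metric.closedBall 0 R) ⟨hq.isClosedRegion_image_closedBall hR.ne',
    euclideanHausdorffMeasure_eq_ofReal_iff.1 hU⟩ (haus_le_div_hausFactor_iff.2 ?_)
  rw [ballPerimeter_eq_mul_ballRadius_pow hx]
  exact_mod_cast hq.euclideanHausdorffMeasure_frontier_image_closedBall_le hR

theorem exists_isoProfile_eq_div_hausFactor (hq : FlatCover L q)
    (h : ∃ a > 0, ∀ v, 0 ≤ v → v ≤ a → PerimeterAtLeast L v (ballPerimeter (d + 1) v)) :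
    ∃ a > 0, ∀ v, 0 < v → v ≤ a → isoProfile M (d + 1) (ENNReal.ofReal v) =
      ENNReal.ofReal (ballPerimeter (d + 1) (hausFactor (d + 1) * v)) / hausFactor d := by
  obtain ⟨a, ha, h_lower⟩ := h
  obtain ⟨b, hb, h_upper⟩ := hq.exists_isoProfile_le_div_hausFactor
  have h_factor : (0 : ℝ) < hausFactor (d + 1) := hausFactor_pos _
  refine ⟨min (a / hausFactor (d + 1)) b, by positivity, fun v hv hva => ?_⟩
  rw [le_min_iff, le_div_iff₀' h_factor] at hva
  exact (h_upper v hv hva.2).antisymm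
    (hq.div_hausFactor_le_isoProfile (h_lower _ (by positivity) hva.1))

end FlatCover

/-- The quotient map onto `T³ × ℝ^n`, which rolls up the first three coordinates. -/
def t3Cover (r1 r2 r3 : ℝ) (n : ℕ) (x : EucSp (n + 3)) : T3R r1 r2 r3 n :=
  WithLp.toLp 2 ((x 0 : Circ r1), WithLp.toLp 2 ((x 1 : Circ r2), WithLp.toLp 2 ((x 2 : Circ r3),
    WithLp.toLp 2 fun i : Fin n => x i.succ.succ.succ)))

section T3
variable {r1 r2 r3 : ℝ}

lemma flatCover_t3Cover (h1 : 0 ≤ r1) (h2 : 0 ≤ r2) (h3 : 0 ≤ r3) (n : ℕ) :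
    FlatCover (vecCons (2 * π * r1) (vecCons (2 * π * r2) (vecCons (2 * π * r3) (0 : Fin n → ℝ))))
      (t3Cover r1 r2 r3 n) :=
  (((flatCover_id n).prod_circle (by positivity)).prod_circle (by positivity)).prod_circle
    (by positivity)

lemma hasTubeVolume_vecCons_vecCons_vecCons {ℓ₁ ℓ₂ ℓ₃ : ℝ} (h₁ : 0 < ℓ₁) (h₂ : 0 < ℓ₂)
    (h₃ : 0 < ℓ₃) (n : ℕ) :
    HasTubeVolume (vecCons ℓ₁ (vecCons ℓ₂ (vecCons ℓ₃ (0 : Fin n → ℝ)))) (ℓ₁ * ℓ₂ * ℓ₃) n := by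
  simpa [mul_assoc] using (((hasTubeVolume_zero n).vecCons h₃).vecCons h₂).vecCons h₁

lemma norm_t3euc_t3Cover (h1 : r1 ≠ 0) (h2 : r2 ≠ 0) (h3 : r3 ≠ 0) (n : ℕ) (x : EucSp (n + 3)) :
    ‖t3euc (t3Cover r1 r2 r3 n x)‖ = ‖lineProj (vecCons (2 * π * r1) (vecCons (2 * π * r2)
      (vecCons (2 * π * r3) (0 : Fin n → ℝ)))) x‖ := by
  have h_split : x = WithLp.toLp 2 (vecCons (x 0) (vecCons (x 1) (vecCons (x 2)
      fun i : Fin n => x i.succ.succ.succ))) := by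
    ext i
    exact Fin.cases rfl (Fin.cases rfl (Fin.cases rfl fun _ => rfl)) i
  conv_rhs => rw [h_split]
  rw [norm_lineProj_vecCons _ (by positivity), norm_lineProj_vecCons _ (by positivity),
    norm_lineProj_vecCons _ (by positivity), lineProj_zero]
  rfl

lemma continuous_norm_t3euc {n : ℕ} : Continuous fun p : T3R r1 r2 r3 n => ‖t3euc p‖ := by
  simp only [t3euc, WithLp.equiv_apply]
  fun_prop

lemma isoProfile_t3_le_gA {n : ℕ} (h1 : 0 < r1) (h2 : 0 < r2) (h3 : 0 < r3) (v : ℝ≥0∞) :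
    isoProfile (T3R r1 r2 r3 n) (n + 3) v ≤ gA r1 r2 r3 n v := by
  refine le_iInf₂ fun R hR => iInf₂_le_of_le _ ⟨?_, hR.2⟩ le_rfl
  exact (flatCover_t3Cover h1.le h2.le h3.le n).isClosedRegion_sublevel_norm_lineProj
    continuous_norm_t3euc (norm_t3euc_t3Cover h1.ne' h2.ne' h3.ne' n) hR.1

lemma gA_le_div_hausFactor {n : ℕ} (hn : 1 ≤ n) (h1 : 0 < r1) (h2 : 0 < r2) (h3 : 0 < r3)
    {x v : ℝ} (hx : 0 < x)
    (hxv : 2 * π * r1 * (2 * π * r2) * (2 * π * r3) * x = hausFactor (n + 3) * v) :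
    gA r1 r2 r3 n (ENNReal.ofReal v) ≤
      ENNReal.ofReal (2 * π * r1 * (2 * π * r2) * (2 * π * r3) * ballPerimeter n x) /
        hausFactor (n + 2) := by
  borelize (T3R r1 r2 r3 n)
  obtain ⟨m, rfl⟩ := Nat.exists_eq_add_of_le' hn
  have hq := flatCover_t3Cover h1.le h2.le h3.le (m + 1)
  have h_proj := norm_t3euc_t3Cover h1.ne' h2.ne' h3.ne' (m + 1)
  have h_tube := hasTubeVolume_vecCons_vecCons_vecCons (show 0 < 2 * π * r1 by positivity)
    (show 0 < 2 * π * r2 by positivity) (show 0 < 2 * π * r3 by positivity) (m + 1)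
  set R := ballRadius (m + 1) x
  have hR : 0 < R := ballRadius_pos hx
  have h_volume := hq.euclideanHausdorffMeasure_sublevel_norm_lineProj h_tube (by positivity)
    continuous_norm_t3euc h_proj hR.le
  rw [ballVolume_mul_ballRadius_pow (by lia) hx.le, hxv] at h_volume
  refine iInf₂_le_of_le R ⟨hR, euclideanHausdorffMeasure_eq_ofReal_iff.1 h_volume⟩
    (haus_le_div_hausFactor_iff.2 ?_)
  rw [ballPerimeter_eq_mul_ballRadius_pow hx]
  exact_mod_cast hq.euclideanHausdorffMeasure_frontier_sublevel_norm_lineProj_le h_tube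
    (by positivity) m.succ_ne_zero continuous_norm_t3euc h_proj hR

theorem exists_isoProfile_t3_eq_gA {n : ℕ} (hn : 1 ≤ n) (h1 : 0 < r1) (h2 : 0 < r2)
    (h3 : 0 < r3) : ∃ v₀, ∀ v, v₀ ≤ v →
      isoProfile (T3R r1 r2 r3 n) (n + 3) (ENNReal.ofReal v) =
        gA r1 r2 r3 n (ENNReal.ofReal v) := by
  obtain ⟨x₀, h_lower⟩ := perimeterAtLeast_large_three hn (show 0 < 2 * π * r1 by positivity)
    (show 0 < 2 * π * r2 by positivity) (show 0 < 2 * π * r3 by positivity)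
  have h_factor : (0 : ℝ) < hausFactor (n + 3) := hausFactor_pos _
  have h_area : 0 < 2 * π * r1 * (2 * π * r2) * (2 * π * r3) := by positivity
  set a := 2 * π * r1 * (2 * π * r2) * (2 * π * r3)
  refine ⟨a * max x₀ 1 / hausFactor (n + 3), fun v hv => ?_⟩
  obtain ⟨x, hxv⟩ : ∃ x, a * x = hausFactor (n + 3) * v := ⟨_, mul_div_cancel₀ _ h_area.ne'⟩
  rw [div_le_iff₀' h_factor, ← hxv, mul_le_mul_iff_right₀ h_area, max_le_iff] at hv
  have h_profile := h_lower x hv.1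
  rw [hxv] at h_profile
  exact (isoProfile_t3_le_gA h1 h2 h3 _).antisymm
    ((gA_le_div_hausFactor hn h1 h2 h3 (one_pos.trans_le hv.2) hxv).trans
      ((flatCover_t3Cover h1.le h2.le h3.le n).div_hausFactor_le_isoProfile h_profile))

theorem exists_isoProfile_t3_eq_isoProfile_s1 {n : ℕ} (hn : 1 ≤ n) (h1 : 0 < r1) (h2 : 0 < r2)
    (h3 : 0 < r3) : ∃ v₀ > 0, ∀ v, v ≤ v₀ →
      isoProfile (T3R r1 r2 r3 n) (n + 3) (ENNReal.ofReal v) =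
        isoProfile (S1R r1 (n + 2)) (n + 3) (ENNReal.ofReal v) := by
  obtain ⟨a, ha, h_torus⟩ :=
    (flatCover_t3Cover h1.le h2.le h3.le n).exists_isoProfile_eq_div_hausFactor
      (perimeterAtLeast_small_three hn (by positivity) (by positivity) (by positivity))
  obtain ⟨b, hb, h_circle⟩ := ((flatCover_id (n + 2)).prod_circle
    (show 0 ≤ 2 * π * r1 by positivity)).exists_isoProfile_eq_div_hausFactor
      (perimeterAtLeast_small_one (by lia) (by positivity))
  refine ⟨min a b, lt_min ha hb, fun v hv => ?_⟩
  rcases le_or_gt v 0 with hv_nonpos | hv_pos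
  · rw [ENNReal.ofReal_of_nonpos hv_nonpos, isoProfile_zero, isoProfile_zero]
  · exact (h_torus v hv_pos (hv.trans (min_le_left _ _))).trans
      (h_circle v hv_pos (hv.trans (min_le_right _ _))).symm

end T3

theorem isoperimetric_profile_T3xRn_general {r1 r2 r3 : ℝ} (hr1 : 0 < r1) (hr2 : 0 < r2)
    (hr3 : 0 < r3) {n : ℕ} (hn : 1 ≤ n) :
    ∃ us uss : ℝ, 0 < us ∧ us ≤ uss ∧
      (∀ v : ℝ, v ≤ us →
        isoProfile (T3R r1 r2 r3 n) (n+3) (ENNReal.ofReal v)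
          = isoProfile (S1R r1 (n+2)) (n+3) (ENNReal.ofReal v)) ∧
      (∀ v : ℝ, uss ≤ v →
        isoProfile (T3R r1 r2 r3 n) (n+3) (ENNReal.ofReal v)
          = gA r1 r2 r3 n (ENNReal.ofReal v)) := by
  obtain ⟨a, ha, h_small⟩ := exists_isoProfile_t3_eq_isoProfile_s1 hn hr1 hr2 hr3
  obtain ⟨b, h_large⟩ := exists_isoProfile_t3_eq_gA hn hr1 hr2 hr3
  exact ⟨a, max a b, ha, le_max_left _ _, h_small, fun v hv =>
    h_large v ((le_max_right _ _).trans hv)⟩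

/-- Theorem 3 of the paper.
Let `0 < r1 ≤ r2 ≤ r3` and `2 ≤ n ≤ 4`.  Suppose there are `0 < v* ≤ v**` such that
for every `v ≤ v*`, `I_{S¹_{r1}×S¹_{r2}×ℝⁿ}(v) = I_{S¹_{r1}×ℝ^{n+1}}(v)`, and for every
`v ≥ v**`, `I_{S¹_{r1}×S¹_{r2}×ℝⁿ}(v) = f_n(v)`.  Then there are `0 < ũ* ≤ ũ**` such that
for every `v ≤ ũ*`, `I_{T³×ℝⁿ}(v) = I_{S¹_{r1}×ℝ^{n+2}}(v)`, and for every `v ≥ ũ**`,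
`I_{T³×ℝⁿ}(v) = g_n(v)`. -/
theorem isoperimetric_profile_T3xRn (r1 r2 r3 : ℝ) (hr1 : 0 < r1) (hr12 : r1 ≤ r2)
    (hr23 : r2 ≤ r3) (n : ℕ) (hn2 : 2 ≤ n) (hn4 : n ≤ 4)
    (vs vss : ℝ) (hvs : 0 < vs) (hvsss : vs ≤ vss)
    (hsmall : ∀ v : ℝ, v ≤ vs →
      isoProfile (T2R r1 r2 n) (n+2) (ENNReal.ofReal v)
        = isoProfile (S1R r1 (n+1)) (n+2) (ENNReal.ofReal v))
    (hbig : ∀ v : ℝ, vss ≤ v →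
      isoProfile (T2R r1 r2 n) (n+2) (ENNReal.ofReal v)
        = fA r1 r2 n (ENNReal.ofReal v)) :
    ∃ us uss : ℝ, 0 < us ∧ us ≤ uss ∧
      (∀ v : ℝ, v ≤ us →
        isoProfile (T3R r1 r2 r3 n) (n+3) (ENNReal.ofReal v)
          = isoProfile (S1R r1 (n+2)) (n+3) (ENNReal.ofReal v)) ∧
      (∀ v : ℝ, uss ≤ v →
        isoProfile (T3R r1 r2 r3 n) (n+3) (ENNReal.ofReal v)
          = gA r1 r2 r3 n (ENNReal.ofReal v)) :=
  isoperimetric_profile_T3xRn_general hr1 (hr1.trans_le hr12)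
    (hr1.trans_le (hr12.trans hr23)) (by lia)

end
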